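/- A pair (X, Y) of topological spaces with Y ⊂ X is homeomorphic to the pair (𝕀^ω × ℓ₂(κ), 𝕀^ω × ℓ₂ᶠ(κ)) for an infinite cardinal κ if and only if: (1) the space X is homeomorphic to ℓ₂(κ); (2) the space Y can be written as a countable union of locally compact spaces; and (3) the space Y absorbs compact subsets of X, in the sense that for each compact subset K ⊂ X, each compact subset B ⊂ K ∩ Y, and each open cover 𝒰 of X there is a topological embedding h : K → Y such that h|B = id|B and h is 𝒰-near to the identity embedding id : K → X. -/

import Mathlib

noncomputable section
open Set Topology

/-- The Hilbert cube `𝕀^ω`. -/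
abbrev HilbertCube : Type := ℕ → Set.Icc (0:ℝ) 1

/-- The Hilbert space `ℓ₂(ι)` of square-summable real families indexed by `ι`. -/
abbrev l2Space (ι : Type u) : Type u := ↥(lp (fun _ : ι => ℝ) 2)

/-- `ℓ₂ᶠ(ι)`: the set of finitely supported elements of `ℓ₂(ι)`,
i.e. the linear hull of the standard orthonormal basis. -/
def l2fin (ι : Type u) : Set (l2Space ι) := {x | {i | (x : ∀ _ : ι, ℝ) i ≠ 0}.Finite}

/-- The density `dens X` of a topological space: the smallest cardinality of a dense subset. -/
def dens (X : Type u) [TopologicalSpace X] : Cardinal.{u} :=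
  sInf {c | ∃ s : Set X, Dense s ∧ Cardinal.mk s = c}

/-- A family of sets is an open cover of the space. -/
def IsOpenCover {X : Type*} [TopologicalSpace X] (𝒰 : Set (Set X)) : Prop :=
  (∀ U ∈ 𝒰, IsOpen U) ∧ ⋃₀ 𝒰 = Set.univ

/-- The covering dimension of `X` is at most `n`: every open cover admits an open
refinement in which every point lies in at most `n + 1` members. -/
def CovDimLE (X : Type*) [TopologicalSpace X] (n : ℕ) : Prop :=
  ∀ 𝒰 : Set (Set X), IsOpenCover 𝒰 →
    ∃ 𝒱 : Set (Set X), IsOpenCover 𝒱 ∧ (∀ V ∈ 𝒱, ∃ U ∈ 𝒰, V ⊆ U) ∧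
      ∀ x : X, {V ∈ 𝒱 | x ∈ V}.Finite ∧ {V ∈ 𝒱 | x ∈ V}.ncard ≤ n + 1

/-- A topological space is finite-dimensional if it has finite covering dimension. -/
def TopFinDim (X : Type*) [TopologicalSpace X] : Prop := ∃ n, CovDimLE X n

/-- A closed set `A ⊆ X` is a `Z`-set if the maps of the Hilbert cube into `X`
missing `A` are dense in `C(𝕀^ω, X)` with the compact-open topology. -/
def IsZSet {X : Type*} [TopologicalSpace X] (A : Set X) : Prop :=
  IsClosed A ∧ Dense {f : C(HilbertCube, X) | Set.range f ∩ A = ∅}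

/-- `A` has infinite codimension in `B`: the linear hull of `A` has infinite
codimension in the linear hull of `B`. -/
def InfiniteCodimIn {E : Type*} [AddCommGroup E] [Module ℝ E] (A B : Set E) : Prop :=
  ¬ Module.Finite ℝ
    (↥(Submodule.span ℝ B) ⧸ (Submodule.span ℝ A).comap (Submodule.span ℝ B).subtype)

/-!
A set in a Hilbert space that is a countable union of locally compact sets and absorbs compacta is
unique up to a homeomorphism of the whole space, and the model `𝕀^ω × ℓ₂ᶠ(κ)` is such a set in
`𝕀^ω × ℓ₂(κ)`, which is itself homeomorphic to `ℓ₂(κ)`.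

**The cube is absorbed** (`nonempty_hilbertCube_prod_l2_homeomorph`). A point can be deleted from
`ℓ₂` by a map of the form `x ↦ x + p (ω x)`, up to a radial rescaling, where `p` is a path without a
limit at its end. Polar coordinates then give `ℓ₂ ≃ₜ ℓ₂^ω`, rotations in the countable power give
`ℓ₂ × [0,∞) ≃ₜ ℓ₂`, hence `ℓ₂ × [0,1] ≃ₜ ℓ₂`, and passing to countable powers `ℓ₂ × 𝕀^ω ≃ₜ ℓ₂`.

**Unknotting** (`exists_homeomorph_eqOn_displacement`). An embedding of a compactum `K` that is
close to the identity and fixed on `B ⊆ K` is realised by a homeomorphism of `ℓ₂(ι)` that moves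
points little and only near `K`. This is Klee's trick: along a closed subspace transversal enough to
the compacta one projects injectively, and shears built from extensions of maps defined on compacta
carry one graph to another.

**Uniqueness** (`exists_homeomorph_image_eq_of_absorbsCompacta`). Stone's argument cuts a countable
union of locally compact sets into countably many unions of discrete families of compacta.
Unknotting all members of a discrete family at once pushes such a union into an absorbing set
without moving what has already been placed. An alternating infinite composition of such pushes,
kept convergent by choosing each one small, takes one absorbing set onto the other.

**The model** (`coverAbsorbsCompacta_univ_prod_l2fin`). To absorb a compactum, cut off the small
coordinates to reach finite support, mark the result so that it leaves the projection of the
compactum, and store separating functions in late coordinates of the cube; the size of this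
deformation vanishes exactly on `B`, and the resulting map is injective.
-/

namespace West

open Filter

open scoped lp

section SquareSummable

variable {ι G : Type*} [NormedAddCommGroup G]

lemma memℓp_two_iff {f : ι → G} : Memℓp f 2 ↔ Summable fun i => ‖f i‖ ^ 2 := by
  simpa using memℓp_gen_iff (E := fun _ : ι => G) (f := f) (p := 2) (by norm_num)

/-- The element of `ℓ²(ι, G)` given by a square-summable family. -/
def l2mk (f : ι → G) (h : Summable fun i => ‖f i‖ ^ 2) : ℓ²(ι, G) := ⟨f, memℓp_two_iff.2 h⟩

@[simp] lemma l2mk_apply (f : ι → G) (h : Summable fun i => ‖f i‖ ^ 2) (i : ι) :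
    l2mk f h i = f i := rfl

lemma l2_summable_norm_sq (x : ℓ²(ι, G)) : Summable fun i => ‖x i‖ ^ 2 := memℓp_two_iff.1 x.2

lemma l2_norm_sq_eq_tsum (x : ℓ²(ι, G)) : ‖x‖ ^ 2 = ∑' i, ‖x i‖ ^ 2 := by
  simpa using lp.norm_rpow_eq_tsum (p := 2) (by norm_num) x

lemma l2_norm_eq_sqrt_tsum (x : ℓ²(ι, G)) : ‖x‖ = √(∑' i, ‖x i‖ ^ 2) := by
  rw [← l2_norm_sq_eq_tsum, Real.sqrt_sq (norm_nonneg x)]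

lemma l2_norm_apply_le (x : ℓ²(ι, G)) (i : ι) : ‖x i‖ ≤ ‖x‖ :=
  lp.norm_apply_le_norm two_ne_zero x i

lemma l2_ext {x y : ℓ²(ι, G)} (h : ∀ i, x i = y i) : x = y := lp.ext (funext h)

lemma l2_continuous_apply (i : ι) : Continuous fun x : ℓ²(ι, G) => x i :=
  (lp.lipschitzWith_one_eval 2 i).continuous

end SquareSummable

section RadonRiesz

variable {α : Type*} {l : Filter α}

lemma tendsto_of_tendsto_inner_of_tendsto_norm {E : Type*} [NormedAddCommGroup E]
    [InnerProductSpace ℝ E] {f : α → E} {g : E}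
    (hinner : Tendsto (fun a => inner ℝ (f a) g) l (𝓝 (inner ℝ g g)))
    (hnorm : Tendsto (fun a => ‖f a‖) l (𝓝 ‖g‖)) : Tendsto f l (𝓝 g) := by
  rw [tendsto_iff_norm_sub_tendsto_zero]
  have hsq : Tendsto (fun a => ‖f a - g‖ ^ 2) l (𝓝 0) := by
    simp only [norm_sub_sq_real]
    convert ((hnorm.pow 2).sub (hinner.const_mul 2)).add_const (‖g‖ ^ 2) using 2
    rw [real_inner_self_eq_norm_sq]
    ring
  simpa [Real.sqrt_sq (norm_nonneg _)] using hsq.sqrt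

variable {ι G : Type*} [NormedAddCommGroup G] [InnerProductSpace ℝ G]

lemma l2_tendsto_inner_of_forall_apply {f : α → ℓ²(ι, G)} {g h : ℓ²(ι, G)}
    (hc : ∀ i, Tendsto (fun a => f a i) l (𝓝 (g i))) {C : ℝ} (hC : ∀ᶠ a in l, ‖f a‖ ≤ C) :
    Tendsto (fun a => inner ℝ (f a) h) l (𝓝 (inner ℝ g h)) := by
  classical
  rw [Metric.tendsto_nhds]
  intro ε hε
  set D := |C| + ‖g‖ + 1
  have hD : 0 < D := by positivity
  obtain ⟨s, hs⟩ := ((Metric.tendsto_nhds.1 (lp.hasSum_single (by norm_num) h))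
    (ε / (2 * D)) (by positivity)).exists
  set v : ℓ²(ι, G) := ∑ i ∈ s, lp.single 2 i (h i) with hv
  have hinner : ∀ w : ℓ²(ι, G), inner ℝ w v = ∑ i ∈ s, inner ℝ (w i) (h i) := fun w => by
    simp only [hv, inner_sum, lp.inner_single_right]
  have hfinite : Tendsto (fun a => inner ℝ (f a) v) l (𝓝 (inner ℝ g v)) := by
    simp only [hinner]
    exact tendsto_finsetSum _ fun i _ => (hc i).inner tendsto_const_nhds
  filter_upwards [Metric.tendsto_nhds.1 hfinite (ε / 2) (by positivity), hC] with a ha hCa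
  have htail : |inner ℝ (f a - g) (h - v)| < ε / 2 := calc
    _ ≤ ‖f a - g‖ * ‖h - v‖ := abs_real_inner_le_norm _ _
    _ ≤ D * ‖h - v‖ := by
      gcongr
      exact (norm_sub_le _ _).trans (by linarith [le_abs_self C])
    _ < D * (ε / (2 * D)) := by gcongr; rwa [← dist_eq_norm, dist_comm]
    _ = ε / 2 := by field_simp
  rw [Real.dist_eq] at ha ⊢
  calc |inner ℝ (f a) h - inner ℝ g h|
      = |(inner ℝ (f a) v - inner ℝ g v) + inner ℝ (f a - g) (h - v)| := by
        simp only [inner_sub_left, inner_sub_right]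
        ring_nf
    _ ≤ |inner ℝ (f a) v - inner ℝ g v| + |inner ℝ (f a - g) (h - v)| := abs_add_le _ _
    _ < ε := by linarith

lemma l2_tendsto_of_forall_apply_of_norm {f : α → ℓ²(ι, G)} {g : ℓ²(ι, G)}
    (hc : ∀ i, Tendsto (fun a => f a i) l (𝓝 (g i)))
    (hn : Tendsto (fun a => ‖f a‖) l (𝓝 ‖g‖)) : Tendsto f l (𝓝 g) :=
  tendsto_of_tendsto_inner_of_tendsto_norm
    (l2_tendsto_inner_of_forall_apply hc (hn.eventually_le_const (lt_add_one ‖g‖))) hn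

variable [TopologicalSpace α] {f : α → ℓ²(ι, G)}

lemma l2_continuous_of_forall_apply_of_norm (hc : ∀ i, Continuous fun a => f a i)
    (hn : Continuous fun a => ‖f a‖) : Continuous f :=
  continuous_iff_continuousAt.2 fun _ =>
    l2_tendsto_of_forall_apply_of_norm (fun i => (hc i).continuousAt) hn.continuousAt

lemma l2_continuous_of_dominated {c : ι → ℝ} (hs : Summable fun i => c i ^ 2)
    (hb : ∀ a i, ‖f a i‖ ≤ c i) (hc : ∀ i, Continuous fun a => f a i) : Continuous f := by
  refine l2_continuous_of_forall_apply_of_norm hc ?_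
  simp only [l2_norm_eq_sqrt_tsum]
  have hle : ∀ i a, ‖‖f a i‖ ^ 2‖ ≤ c i ^ 2 := fun i a => by
    rw [norm_pow, norm_norm]
    gcongr
    exact hb a i
  exact (continuous_tsum (fun i => (hc i).norm.pow 2) hs hle).sqrt

end RadonRiesz

lemma continuous_fixedPoint_of_contractingWith {P X : Type*} [TopologicalSpace P] [MetricSpace X]
    [CompleteSpace X] [Nonempty X] {K : NNReal} {T : P → X → X} (hT : ∀ p, ContractingWith K (T p))
    (hc : ∀ x, Continuous fun p => T p x) :
    Continuous fun p => ContractingWith.fixedPoint (T p) (hT p) := by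
  refine continuous_iff_continuousAt.2 fun p => ?_
  set x := ContractingWith.fixedPoint (T p) (hT p)
  have hfix : T p x = x := (hT p).fixedPoint_isFixedPt
  have hlim : Tendsto (fun q => dist x (T q x) / (1 - K)) (𝓝 p) (𝓝 0) := by
    have := ((hc x).tendsto p).dist (tendsto_const_nhds (x := x)) |>.div_const (1 - K : ℝ)
    simpa only [hfix, dist_self, zero_div, dist_comm] using this
  rw [ContinuousAt, tendsto_iff_dist_tendsto_zero]
  refine squeeze_zero (fun _ => dist_nonneg) (fun q => ?_) hlim
  rw [dist_comm]
  exact (hT q).dist_fixedPoint_le x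

section Cutoff

/-- The cut-off `θ_k : ℝ → [0, 1]`, equal to `1` for `s ≤ 2⁻ᵏ`, to `0` for `s ≥ 2¹⁻ᵏ`, and affine
in between. -/
def cutoff (k : ℕ) (s : ℝ) : ℝ := projIcc 0 1 zero_le_one (2 - 2 ^ k * s)

lemma cutoff_nonneg (k : ℕ) (s : ℝ) : 0 ≤ cutoff k s := (projIcc 0 1 _ _).2.1

lemma cutoff_le_one (k : ℕ) (s : ℝ) : cutoff k s ≤ 1 := (projIcc 0 1 _ _).2.2

lemma abs_cutoff_le_one (k : ℕ) (s : ℝ) : |cutoff k s| ≤ 1 := by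
  rw [abs_of_nonneg (cutoff_nonneg k s)]
  exact cutoff_le_one k s

lemma continuous_cutoff (k : ℕ) : Continuous (cutoff k) :=
  continuous_subtype_val.comp (continuous_projIcc.comp (by fun_prop))

lemma cutoff_eq_one {k : ℕ} {s : ℝ} (h : 2 ^ k * s ≤ 1) : cutoff k s = 1 := by
  rw [cutoff, projIcc_of_right_le _ (by linarith)]

lemma cutoff_eq_zero {k : ℕ} {s : ℝ} (h : 2 ≤ 2 ^ k * s) : cutoff k s = 0 := by
  rw [cutoff, projIcc_of_le_left _ (by linarith)]

lemma abs_cutoff_sub_le (k : ℕ) (s t : ℝ) : |cutoff k s - cutoff k t| ≤ 2 ^ k * |s - t| :=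
  calc |cutoff k s - cutoff k t| ≤ |(2 - 2 ^ k * s) - (2 - 2 ^ k * t)| :=
        abs_projIcc_sub_projIcc zero_le_one
    _ = |2 ^ k * (t - s)| := by ring_nf
    _ = 2 ^ k * |s - t| := by rw [abs_mul, abs_sub_comm, abs_of_pos (by positivity)]

lemma exists_forall_le_two_pow_mul {s : ℝ} (hs : 0 < s) (c : ℝ) :
    ∃ N : ℕ, ∀ k ≥ N, c ≤ 2 ^ k * s :=
  eventually_atTop.1 (((tendsto_pow_atTop_atTop_of_one_lt one_lt_two).atTop_mul_const
    hs).eventually_ge_atTop c)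

end Cutoff

/-! ### Deleting a point from `ℓ₂` -/

section Deletion

/-- The weighted `ℓ₁`-norm `∑ 4⁻ⁿ⁻¹ |aₙ|` of a bounded sequence. The path `escapePath` converges in
this norm, but not in `ℓ₂`, to the constant sequence `1`. -/
def weakNorm (a : ℕ → ℝ) : ℝ := ∑' n, (1 / 4) ^ (n + 1) * |a n|

lemma hasSum_geometric_succ {r : ℝ} (h0 : 0 ≤ r) (h1 : r < 1) :
    HasSum (fun n => r ^ (n + 1)) (r / (1 - r)) := by
  simpa only [pow_succ', div_eq_mul_inv] using (hasSum_geometric_of_lt_one h0 h1).mul_left r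

lemma hasSum_one_div_four_pow_succ : HasSum (fun n => (1 / 4 : ℝ) ^ (n + 1)) (1 / 3) := by
  convert hasSum_geometric_succ (r := 1 / 4) (by norm_num) (by norm_num) using 1
  norm_num

lemma summable_weakNorm {a : ℕ → ℝ} {C : ℝ} (h : ∀ n, |a n| ≤ C) :
    Summable fun n => (1 / 4) ^ (n + 1) * |a n| :=
  Summable.of_nonneg_of_le (fun n => by positivity) (fun n => by gcongr; exact h n)
    (hasSum_one_div_four_pow_succ.summable.mul_right C)

lemma weakNorm_nonneg (a : ℕ → ℝ) : 0 ≤ weakNorm a :=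
  tsum_nonneg fun n => mul_nonneg (by positivity) (abs_nonneg _)

lemma eq_zero_of_weakNorm_eq_zero {a : ℕ → ℝ} {C : ℝ} (h : ∀ n, |a n| ≤ C) (h0 : weakNorm a = 0)
    (n : ℕ) : a n = 0 := by
  have hsum := (summable_weakNorm h).hasSum
  rw [← weakNorm, h0] at hsum
  have hnonneg : ∀ n, 0 ≤ (1 / 4 : ℝ) ^ (n + 1) * |a n| := fun n => by positivity
  simpa using congrFun ((hasSum_zero_iff_of_nonneg hnonneg).1 hsum) n

lemma abs_weakNorm_sub_le {a b v : ℕ → ℝ} {C C' D : ℝ} (ha : ∀ n, |a n| ≤ C)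
    (hb : ∀ n, |b n| ≤ C') (h : ∀ n, (1 / 4) ^ (n + 1) * |a n - b n| ≤ v n) (hv : HasSum v D) :
    |weakNorm a - weakNorm b| ≤ D := by
  rw [weakNorm, weakNorm, ← (summable_weakNorm ha).tsum_sub (summable_weakNorm hb),
    ← Real.norm_eq_abs]
  refine tsum_of_norm_bounded hv fun n => ?_
  calc ‖(1 / 4 : ℝ) ^ (n + 1) * |a n| - (1 / 4) ^ (n + 1) * |b n|‖
      = (1 / 4) ^ (n + 1) * |(|a n| - |b n|)| := by
        rw [← mul_sub, norm_mul, Real.norm_of_nonneg (by positivity), Real.norm_eq_abs]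
    _ ≤ (1 / 4) ^ (n + 1) * |a n - b n| :=
        mul_le_mul_of_nonneg_left (abs_abs_sub_abs_le_abs_sub _ _) (by positivity)
    _ ≤ v n := h n

lemma l2_abs_apply_le (x : ℓ²(ℕ, ℝ)) (n : ℕ) : |x n| ≤ ‖x‖ := l2_norm_apply_le x n

lemma weakNorm_zero : weakNorm ⇑(0 : ℓ²(ℕ, ℝ)) = 0 := by simp [weakNorm]

lemma weakNorm_smul {c : ℝ} (hc : 0 ≤ c) (x : ℓ²(ℕ, ℝ)) :
    weakNorm ⇑(c • x) = c * weakNorm x := by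
  rw [weakNorm, weakNorm, ← tsum_mul_left]
  refine tsum_congr fun n => ?_
  rw [lp.coeFn_smul, Pi.smul_apply, smul_eq_mul, abs_mul, abs_of_nonneg hc]
  ring

lemma weakNorm_pos {x : ℓ²(ℕ, ℝ)} (hx : x ≠ 0) : 0 < weakNorm x :=
  (weakNorm_nonneg _).lt_of_ne fun h =>
    hx (l2_ext fun n => eq_zero_of_weakNorm_eq_zero (l2_abs_apply_le x) h.symm n)

lemma continuous_weakNorm_sub {a : ℕ → ℝ} {C : ℝ} (ha : ∀ n, |a n| ≤ C) :
    Continuous fun x : ℓ²(ℕ, ℝ) => weakNorm (fun n => x n - a n) := by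
  have hbdd : ∀ (x : ℓ²(ℕ, ℝ)) n, |x n - a n| ≤ ‖x‖ + C := fun x n =>
    (abs_sub _ _).trans (add_le_add (l2_abs_apply_le x n) (ha n))
  refine LipschitzWith.continuous (K := 1 / 3) (LipschitzWith.of_dist_le_mul fun x y => ?_)
  rw [Real.dist_eq, dist_eq_norm]
  refine abs_weakNorm_sub_le (hbdd x) (hbdd y) (fun n => ?_)
    (hasSum_one_div_four_pow_succ.mul_right ‖x - y‖)
  gcongr
  simpa using l2_abs_apply_le (x - y) n

lemma continuous_weakNorm : Continuous fun x : ℓ²(ℕ, ℝ) => weakNorm x := by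
  simpa using continuous_weakNorm_sub (a := 0) (C := 0) (by simp)

lemma summable_cutoff_sq {t : ℝ} (ht : 0 < t) : Summable fun n => ‖cutoff n t‖ ^ 2 := by
  obtain ⟨N, hN⟩ := exists_forall_le_two_pow_mul ht 2
  refine summable_of_hasFiniteSupport ((finite_lt_nat N).subset fun n hn => ?_)
  contrapose! hn
  simp [cutoff_eq_zero (hN n (not_lt.1 hn))]

/-- The path `t ↦ (θ₀(t), θ₁(t), …)` in `ℓ₂`, with the junk value `0` for `t ≤ 0`; it has no limit
as `t → 0`. -/
def escapePath (t : ℝ) : ℓ²(ℕ, ℝ) :=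
  if h : 0 < t then l2mk (fun n => cutoff n t) (summable_cutoff_sq h) else 0

lemma escapePath_apply {t : ℝ} (h : 0 < t) (n : ℕ) : escapePath t n = cutoff n t := by
  rw [escapePath, dif_pos h, l2mk_apply]

lemma escapePath_eq_zero {t : ℝ} (h : 2 ≤ t) : escapePath t = 0 := by
  refine l2_ext fun n => ?_
  have hn : (1 : ℝ) ≤ 2 ^ n := one_le_pow₀ one_le_two
  rw [escapePath_apply (by linarith), cutoff_eq_zero (by nlinarith), lp.coeFn_zero, Pi.zero_apply]

lemma continuousOn_escapePath {δ : ℝ} (hδ : 0 < δ) : ContinuousOn escapePath (Ici δ) := by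
  obtain ⟨N, hN⟩ := exists_forall_le_two_pow_mul hδ 2
  rw [continuousOn_iff_continuous_domRestrict]
  have happly : ∀ (s : Ici δ) n, escapePath s n = cutoff n s := fun s =>
    escapePath_apply (hδ.trans_le s.2)
  refine l2_continuous_of_dominated (c := fun n => if n < N then 1 else 0) ?_ (fun s n => ?_)
    fun n => ?_
  · exact summable_of_hasFiniteSupport ((finite_lt_nat N).subset fun n hn => by simpa using hn)
  · rw [domRestrict_apply, happly]
    split_ifs with hn
    · exact abs_cutoff_le_one n s
    · rw [cutoff_eq_zero ((hN n (not_lt.1 hn)).trans (by gcongr; exact s.2)), norm_zero]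
  · simp only [domRestrict_apply, happly]
    exact (continuous_cutoff n).comp continuous_subtype_val

lemma continuousAt_escapePath {t : ℝ} (ht : 0 < t) : ContinuousAt escapePath t :=
  (continuousOn_escapePath (half_pos ht)).continuousAt (Ici_mem_nhds (half_lt_self ht))

lemma abs_apply_sub_cutoff_le (y : ℓ²(ℕ, ℝ)) (t : ℝ) (n : ℕ) : |y n - cutoff n t| ≤ ‖y‖ + 1 :=
  (abs_sub _ _).trans (add_le_add (l2_abs_apply_le y n) (abs_cutoff_le_one n t))

lemma contractingWith_weakNorm_sub_cutoff (y : ℓ²(ℕ, ℝ)) :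
    ContractingWith (1 / 2) fun t : ℝ => weakNorm fun n => y n - cutoff n t := by
  refine ⟨by rw [← NNReal.coe_lt_coe]; norm_num, LipschitzWith.of_dist_le_mul fun t u => ?_⟩
  have hsum := (hasSum_geometric_succ (r := (1 / 2 : ℝ)) (by norm_num) (by norm_num)).mul_right
    (1 / 2 * |t - u|)
  rw [show (1 / 2 : ℝ) / (1 - 1 / 2) = 1 by norm_num, one_mul] at hsum
  have hK : ((1 / 2 : NNReal) : ℝ) = 1 / 2 := by norm_num
  rw [Real.dist_eq, Real.dist_eq, hK]
  refine abs_weakNorm_sub_le (abs_apply_sub_cutoff_le y t) (abs_apply_sub_cutoff_le y u)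
    (fun n => ?_) hsum
  calc (1 / 4 : ℝ) ^ (n + 1) * |y n - cutoff n t - (y n - cutoff n u)|
      = (1 / 4) ^ (n + 1) * |cutoff n t - cutoff n u| := by
        rw [sub_sub_sub_cancel_left, abs_sub_comm]
    _ ≤ (1 / 4) ^ (n + 1) * (2 ^ n * |t - u|) := by gcongr; exact abs_cutoff_sub_le n t u
    _ = (1 / 4 * 2) ^ (n + 1) * (1 / 2 * |t - u|) := by rw [mul_pow, pow_succ 2]; ring
    _ = (1 / 2) ^ (n + 1) * (1 / 2 * |t - u|) := by norm_num

/-- The unique `t` with `t = weakNorm (y - θ(t))`. -/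
def escapeTime (y : ℓ²(ℕ, ℝ)) : ℝ :=
  ContractingWith.fixedPoint _ (contractingWith_weakNorm_sub_cutoff y)

lemma weakNorm_sub_cutoff_escapeTime (y : ℓ²(ℕ, ℝ)) :
    weakNorm (fun n => y n - cutoff n (escapeTime y)) = escapeTime y :=
  (contractingWith_weakNorm_sub_cutoff y).fixedPoint_isFixedPt

lemma continuous_escapeTime : Continuous escapeTime :=
  continuous_fixedPoint_of_contractingWith contractingWith_weakNorm_sub_cutoff
    fun t => continuous_weakNorm_sub fun n => abs_cutoff_le_one n t

/- The constant sequence `1 = θ(0)` is not in `ℓ₂`. -/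
lemma escapeTime_pos (y : ℓ²(ℕ, ℝ)) : 0 < escapeTime y := by
  have hfix := weakNorm_sub_cutoff_escapeTime y
  refine lt_of_le_of_ne (hfix ▸ weakNorm_nonneg _) fun h0 => ?_
  rw [← h0] at hfix
  have hy : ∀ n, y n = 1 := fun n => by
    rw [← sub_eq_zero, ← cutoff_eq_one (k := n) (s := 0) (by simp)]
    exact eq_zero_of_weakNorm_eq_zero (abs_apply_sub_cutoff_le y 0) hfix n
  have hlim := (l2_summable_norm_sq y).tendsto_atTop_zero
  simp only [hy, norm_one, one_pow] at hlim
  exact one_ne_zero (tendsto_nhds_unique tendsto_const_nhds hlim)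

lemma coe_sub_escapePath (y : ℓ²(ℕ, ℝ)) {t : ℝ} (ht : 0 < t) :
    ⇑(y - escapePath t) = fun n => y n - cutoff n t := by
  funext n
  rw [lp.coeFn_sub, Pi.sub_apply, escapePath_apply ht]

lemma weakNorm_sub_escapePath_escapeTime (y : ℓ²(ℕ, ℝ)) :
    weakNorm ⇑(y - escapePath (escapeTime y)) = escapeTime y := by
  rw [coe_sub_escapePath y (escapeTime_pos y), weakNorm_sub_cutoff_escapeTime]

lemma escapeTime_add_escapePath {x : ℓ²(ℕ, ℝ)} (hx : x ≠ 0) :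
    escapeTime (x + escapePath (weakNorm x)) = weakNorm x := by
  refine ((contractingWith_weakNorm_sub_cutoff _).fixedPoint_unique ?_).symm
  rw [Function.IsFixedPt, ← coe_sub_escapePath _ (weakNorm_pos hx), add_sub_cancel_right]

/-- The homeomorphism `x ↦ x + p (ω x)` of `ℓ₂ \ {0}` onto `ℓ₂`, for `p` the path `escapePath` and
`ω` the norm `weakNorm`. -/
def escapeHomeomorph : {x : ℓ²(ℕ, ℝ) // x ≠ 0} ≃ₜ ℓ²(ℕ, ℝ) where
  toFun x := x + escapePath (weakNorm x.1)
  invFun y := ⟨y - escapePath (escapeTime y), fun h => (escapeTime_pos y).ne <| by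
    rw [← weakNorm_sub_escapePath_escapeTime, h, weakNorm_zero]⟩
  left_inv x := Subtype.ext <| by
    simp only [escapeTime_add_escapePath x.2, add_sub_cancel_right]
  right_inv y := by simp only [weakNorm_sub_escapePath_escapeTime, sub_add_cancel]
  continuous_toFun := continuous_subtype_val.add <| continuous_iff_continuousAt.2 fun x =>
    (continuousAt_escapePath (weakNorm_pos x.2)).comp
      (f := fun x : {x : ℓ²(ℕ, ℝ) // x ≠ 0} => weakNorm x.1)
      (continuous_weakNorm.comp continuous_subtype_val).continuousAt
  continuous_invFun := Continuous.subtype_mk (continuous_id.sub <|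
    continuous_iff_continuousAt.2 fun y =>
      (continuousAt_escapePath (escapeTime_pos y)).comp continuous_escapeTime.continuousAt) _

lemma escapeHomeomorph_of_le {x : {x : ℓ²(ℕ, ℝ) // x ≠ 0}} (h : 2 ≤ weakNorm x.1) :
    escapeHomeomorph x = x := by
  change x.1 + escapePath (weakNorm x.1) = x
  rw [escapePath_eq_zero h, add_zero]

/-- A radial stretching of `ℓ₂`: the identity on the unit ball, it adds `2 (‖y‖ - 1)` to
`weakNorm y` outside of it. -/
def stretch (y : ℓ²(ℕ, ℝ)) : ℓ²(ℕ, ℝ) := (1 + 2 * max 0 (‖y‖ - 1) / weakNorm y) • y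

/-- The inverse of `stretch`. -/
def unstretch (z : ℓ²(ℕ, ℝ)) : ℓ²(ℕ, ℝ) :=
  ((weakNorm z + 2 * min ‖z‖ 1) / (weakNorm z + 2 * ‖z‖)) • z

lemma stretch_of_norm_le {y : ℓ²(ℕ, ℝ)} (h : ‖y‖ ≤ 1) : stretch y = y := by
  rw [stretch, max_eq_left (by linarith), mul_zero, zero_div, add_zero, one_smul]

lemma unstretch_of_norm_le {y : ℓ²(ℕ, ℝ)} (h : ‖y‖ ≤ 1) : unstretch y = y := by
  rcases eq_or_ne y 0 with rfl | hy
  · rw [unstretch, smul_zero]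
  · have hpos := weakNorm_pos hy
    rw [unstretch, min_eq_left h, div_self (by positivity), one_smul]

lemma ne_zero_of_one_le_norm {y : ℓ²(ℕ, ℝ)} (h : 1 ≤ ‖y‖) : y ≠ 0 :=
  norm_pos_iff.1 (zero_lt_one.trans_le h)

lemma continuous_of_eq_self_of_norm_le {f : ℓ²(ℕ, ℝ) → ℓ²(ℕ, ℝ)} (h : ∀ y, ‖y‖ ≤ 1 → f y = y)
    (hf : ∀ y ≠ 0, ContinuousAt f y) : Continuous f := by
  refine continuous_iff_continuousAt.2 fun y => ?_
  rcases eq_or_ne y 0 with rfl | hy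
  · refine continuousAt_id.congr ?_
    filter_upwards [Metric.closedBall_mem_nhds 0 one_pos] with z hz
    exact (h z (mem_closedBall_zero_iff.1 hz)).symm
  · exact hf y hy

lemma continuous_stretch : Continuous stretch := by
  refine continuous_of_eq_self_of_norm_le (fun _ => stretch_of_norm_le) fun y hy => ?_
  have hpos := (weakNorm_pos hy).ne'
  have hcont := continuous_weakNorm
  unfold stretch
  fun_prop (disch := assumption)

lemma continuous_unstretch : Continuous unstretch := by
  refine continuous_of_eq_self_of_norm_le (fun _ => unstretch_of_norm_le) fun y hy => ?_
  have hpos := weakNorm_pos hy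
  have hne : weakNorm y + 2 * ‖y‖ ≠ 0 := by positivity
  have hcont := continuous_weakNorm
  unfold unstretch
  fun_prop (disch := assumption)

lemma stretch_unstretch (z : ℓ²(ℕ, ℝ)) : stretch (unstretch z) = z := by
  rcases le_or_gt ‖z‖ 1 with h | h
  · rw [unstretch_of_norm_le h, stretch_of_norm_le h]
  have hω := weakNorm_pos (ne_zero_of_one_le_norm h.le)
  have : 0 < ‖z‖ - 1 := by linarith
  set c := (weakNorm z + 2) / (weakNorm z + 2 * ‖z‖) with hc
  have hcpos : 0 < c := by positivity
  have hcz : c * ‖z‖ - 1 = weakNorm z * (‖z‖ - 1) / (weakNorm z + 2 * ‖z‖) := by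
    rw [hc]; field_simp; ring
  have hscale : (1 + 2 * (c * ‖z‖ - 1) / (c * weakNorm z)) * c = 1 := by
    rw [hcz, hc]; field_simp; ring
  rw [unstretch, min_eq_right h.le, mul_one, ← hc, stretch, weakNorm_smul hcpos.le, norm_smul,
    Real.norm_of_nonneg hcpos.le, max_eq_right (by rw [hcz]; positivity), smul_smul, hscale,
    one_smul]

lemma weakNorm_stretch {y : ℓ²(ℕ, ℝ)} (h : 1 ≤ ‖y‖) :
    weakNorm ⇑(stretch y) = weakNorm y + 2 * (‖y‖ - 1) := by
  have hω := weakNorm_pos (ne_zero_of_one_le_norm h)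
  rw [stretch, weakNorm_smul (by positivity), max_eq_right (by linarith)]
  field_simp

lemma unstretch_stretch (y : ℓ²(ℕ, ℝ)) : unstretch (stretch y) = y := by
  rcases le_or_gt ‖y‖ 1 with h | h
  · rw [stretch_of_norm_le h, unstretch_of_norm_le h]
  have hω := weakNorm_pos (ne_zero_of_one_le_norm h.le)
  have hy : 0 < ‖y‖ - 1 := by linarith
  set c := 1 + 2 * (‖y‖ - 1) / weakNorm y with hc
  have hc1 : 1 ≤ c := le_add_of_nonneg_right (by positivity)
  have hscale : (weakNorm y + 2 * (‖y‖ - 1) + 2 * 1) /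
      (weakNorm y + 2 * (‖y‖ - 1) + 2 * (c * ‖y‖)) * c = 1 := by
    rw [hc]; field_simp; ring
  have hstretch : stretch y = c • y := by rw [stretch, max_eq_right hy.le]
  have hnorm : ‖stretch y‖ = c * ‖y‖ := by
    rw [hstretch, norm_smul, Real.norm_of_nonneg (by linarith)]
  rw [unstretch, weakNorm_stretch h.le, hnorm, min_eq_right (by nlinarith), hstretch, smul_smul,
    hscale, one_smul]

/-- `stretch` as a homeomorphism. -/
def stretchHomeomorph : ℓ²(ℕ, ℝ) ≃ₜ ℓ²(ℕ, ℝ) where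
  toFun := stretch
  invFun := unstretch
  left_inv := unstretch_stretch
  right_inv := stretch_unstretch
  continuous_toFun := continuous_stretch
  continuous_invFun := continuous_unstretch

lemma stretchHomeomorph_ne_zero_iff (y : ℓ²(ℕ, ℝ)) : y ≠ 0 ↔ stretchHomeomorph y ≠ 0 := by
  have h0 : stretchHomeomorph 0 = 0 := stretch_of_norm_le (by simp)
  rw [← stretchHomeomorph.injective.ne_iff (y := 0), h0]

/- Conjugating by `stretch` makes the deletion the identity on `‖x‖ ≥ 2`, hence a map at bounded
distance from the identity. -/
theorem exists_homeomorph_deletion :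
    ∃ d : {x : ℓ²(ℕ, ℝ) // x ≠ 0} ≃ₜ ℓ²(ℕ, ℝ), ∀ x, ‖d x - x‖ ≤ 4 := by
  set d := ((stretchHomeomorph.subtype stretchHomeomorph_ne_zero_iff).trans
    escapeHomeomorph).trans stretchHomeomorph.symm
  have hid : ∀ x, 2 ≤ ‖x.1‖ → d x = x := fun x hx => by
    have hω : 2 ≤ weakNorm ⇑(stretch x.1) := by
      rw [weakNorm_stretch (by linarith)]
      linarith [weakNorm_nonneg x.1]
    exact (congrArg stretchHomeomorph.symm (escapeHomeomorph_of_le hω)).trans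
      (stretchHomeomorph.symm_apply_apply x.1)
  refine ⟨d, fun x => ?_⟩
  rcases le_or_gt 2 ‖x.1‖ with hx | hx
  · rw [hid x hx, sub_self, norm_zero]
    norm_num
  have hdx : ‖d x‖ < 2 := by
    by_contra! h
    have hfix : d ⟨d x, ne_zero_of_one_le_norm (by linarith)⟩ = d x := hid ⟨d x, _⟩ h
    rw [← congrArg Subtype.val (d.injective hfix)] at hx
    exact hx.not_ge h
  exact (norm_sub_le _ _).trans (by linarith)

end Deletion

/-! ### `ℓ₂` is homeomorphic to its countable power -/

section Reindex

variable {α β ι G H : Type*} [NormedAddCommGroup G] [NormedAddCommGroup H]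

lemma l2_norm_eq_of_forall_norm_apply_eq {x : ℓ²(ι, G)} {y : ℓ²(ι, H)}
    (h : ∀ i, ‖x i‖ = ‖y i‖) : ‖x‖ = ‖y‖ := by
  simp only [l2_norm_eq_sqrt_tsum, h]

/-- The restriction of a family in `ℓ²(ι, G)` along an injective map `α → ι`. -/
def l2Restrict (c : α → ι) (hc : c.Injective) (x : ℓ²(ι, G)) : ℓ²(α, G) :=
  l2mk (fun a => x (c a)) ((l2_summable_norm_sq x).comp_injective hc)

@[simp] lemma l2Restrict_apply (c : α → ι) (hc : c.Injective) (x : ℓ²(ι, G)) (a : α) :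
    l2Restrict c hc x a = x (c a) := rfl

lemma continuous_l2Restrict (c : α → ι) (hc : c.Injective) :
    Continuous (l2Restrict (G := G) c hc) := by
  refine LipschitzWith.continuous (K := 1) (LipschitzWith.of_dist_le_mul fun x y => ?_)
  have hle : ‖l2Restrict c hc (x - y)‖ ≤ ‖x - y‖ := by
    rw [l2_norm_eq_sqrt_tsum, l2_norm_eq_sqrt_tsum]
    exact Real.sqrt_le_sqrt (tsum_comp_le_tsum_of_inj (l2_summable_norm_sq (x - y))
      (fun _ => by positivity) hc)
  rwa [NNReal.coe_one, one_mul, dist_eq_norm, dist_eq_norm]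

lemma l2_summable_norm_sq_uncurry (x : ℓ²(α, ℓ²(β, G))) :
    Summable fun p : α × β => ‖x p.1 p.2‖ ^ 2 := by
  refine (summable_prod_of_nonneg fun _ => by positivity).2
    ⟨fun i => l2_summable_norm_sq (x i), ?_⟩
  simpa only [← l2_norm_sq_eq_tsum] using l2_summable_norm_sq x

lemma l2_summable_norm_sq_curry (y : ℓ²(α × β, G)) :
    (∀ i, Summable fun j => ‖y (i, j)‖ ^ 2) ∧ Summable fun i => ∑' j, ‖y (i, j)‖ ^ 2 :=
  (summable_prod_of_nonneg fun _ => by positivity).1 (l2_summable_norm_sq y)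

lemma hasSum_norm_sq_sumElim (x : ℓ²(α, G)) (y : ℓ²(β, G)) :
    HasSum (fun i => ‖Sum.elim x y i‖ ^ 2) (‖x‖ ^ 2 + ‖y‖ ^ 2) := by
  rw [l2_norm_sq_eq_tsum, l2_norm_sq_eq_tsum]
  exact (l2_summable_norm_sq x).hasSum.sum (f := fun i => ‖Sum.elim x y i‖ ^ 2)
    (l2_summable_norm_sq y).hasSum

/-- The sequence `a, x₀, x₁, …`. -/
def seqCons {A : Type*} (a : A) (x : ℕ → A) : ℕ → A
  | 0 => a
  | n + 1 => x n

@[simp] lemma seqCons_zero {A : Type*} (a : A) (x : ℕ → A) : seqCons a x 0 = a := rfl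

@[simp] lemma seqCons_succ {A : Type*} (a : A) (x : ℕ → A) (n : ℕ) :
    seqCons a x (n + 1) = x n := rfl

@[simp] lemma seqCons_head_tail {A : Type*} (x : ℕ → A) : seqCons (x 0) (fun n => x (n + 1)) = x :=
  funext fun n => by cases n <;> rfl

/-- `A × A^ω ≃ₜ A^ω` by prepending a term. -/
def seqConsHomeomorph (A : Type*) [TopologicalSpace A] : A × (ℕ → A) ≃ₜ (ℕ → A) where
  toFun p := seqCons p.1 p.2
  invFun x := (x 0, fun n => x (n + 1))
  left_inv _ := rfl
  right_inv := seqCons_head_tail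
  continuous_toFun := continuous_pi fun n => by
    cases n
    · exact continuous_fst
    · exact (continuous_apply _).comp continuous_snd
  continuous_invFun := by fun_prop

lemma hasSum_norm_sq_seqCons (g : G) (x : ℓ²(ℕ, G)) :
    HasSum (fun n => ‖seqCons g x n‖ ^ 2) (‖g‖ ^ 2 + ‖x‖ ^ 2) := by
  rw [← hasSum_nat_add_iff' 1, l2_norm_sq_eq_tsum]
  simpa using (l2_summable_norm_sq x).hasSum

variable [InnerProductSpace ℝ G]

/-- Reindexing of an `ℓ₂`-sum along a bijection. -/
def l2Reindex (σ : α ≃ β) : ℓ²(α, G) ≃ₗᵢ[ℝ] ℓ²(β, G) where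
  toFun x := l2Restrict σ.symm σ.symm.injective x
  invFun y := l2Restrict σ σ.injective y
  map_add' _ _ := rfl
  map_smul' _ _ := rfl
  left_inv x := l2_ext fun a => by simp
  right_inv x := l2_ext fun a => by simp
  norm_map' x := by
    rw [l2_norm_eq_sqrt_tsum, l2_norm_eq_sqrt_tsum]
    exact congrArg _ (σ.symm.tsum_eq fun i => ‖x i‖ ^ 2)

/-- The iterated `ℓ₂`-sum as an `ℓ₂`-sum over the product. -/
def l2Uncurry (α β : Type*) : ℓ²(α, ℓ²(β, G)) ≃ₗᵢ[ℝ] ℓ²(α × β, G) where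
  toFun x := l2mk (fun p => x p.1 p.2) (l2_summable_norm_sq_uncurry x)
  invFun y := l2mk (fun i => l2mk (fun j => y (i, j)) ((l2_summable_norm_sq_curry y).1 i)) <| by
    simp only [l2_norm_sq_eq_tsum]
    exact (l2_summable_norm_sq_curry y).2
  map_add' _ _ := rfl
  map_smul' _ _ := rfl
  left_inv _ := rfl
  right_inv _ := rfl
  norm_map' x := by
    rw [l2_norm_eq_sqrt_tsum, l2_norm_eq_sqrt_tsum]
    simp only [l2_norm_sq_eq_tsum]
    exact congrArg _ (l2_summable_norm_sq_uncurry x).tsum_prod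

/-- The `ℓ₂`-sum over a disjoint union as a product. -/
def l2SumHomeomorph (α β : Type*) : ℓ²(α ⊕ β, G) ≃ₜ ℓ²(α, G) × ℓ²(β, G) where
  toFun x := (l2Restrict Sum.inl Sum.inl_injective x, l2Restrict Sum.inr Sum.inr_injective x)
  invFun p := l2mk (Sum.elim p.1 p.2) (hasSum_norm_sq_sumElim p.1 p.2).summable
  left_inv x := l2_ext fun a => by cases a <;> rfl
  right_inv _ := rfl
  continuous_toFun := (continuous_l2Restrict _ _).prodMk (continuous_l2Restrict _ _)
  continuous_invFun := by
    refine l2_continuous_of_forall_apply_of_norm ?_ ?_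
    · rintro (a | b)
      · exact (l2_continuous_apply a).comp continuous_fst
      · exact (l2_continuous_apply b).comp continuous_snd
    · have hnorm : ∀ p : ℓ²(α, G) × ℓ²(β, G), ‖l2mk (Sum.elim p.1 p.2)
          (hasSum_norm_sq_sumElim p.1 p.2).summable‖ = √(‖p.1‖ ^ 2 + ‖p.2‖ ^ 2) := fun p => by
        rw [l2_norm_eq_sqrt_tsum]
        exact congrArg _ (hasSum_norm_sq_sumElim p.1 p.2).tsum_eq
      simp only [hnorm]
      fun_prop

/-- `G × ℓ²(ℕ, G) ≃ₜ ℓ²(ℕ, G)` by prepending a term. -/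
def l2ConsHomeomorph : G × ℓ²(ℕ, G) ≃ₜ ℓ²(ℕ, G) where
  toFun p := l2mk (seqCons p.1 p.2) (hasSum_norm_sq_seqCons p.1 p.2).summable
  invFun x := (x 0, l2Restrict Nat.succ Nat.succ_injective x)
  left_inv _ := rfl
  right_inv x := l2_ext fun n => by cases n <;> rfl
  continuous_toFun := by
    refine l2_continuous_of_forall_apply_of_norm ?_ ?_
    · rintro (_ | n)
      · exact continuous_fst
      · exact (l2_continuous_apply n).comp continuous_snd
    · have hnorm : ∀ p : G × ℓ²(ℕ, G), ‖l2mk (seqCons p.1 p.2)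
          (hasSum_norm_sq_seqCons p.1 p.2).summable‖ = √(‖p.1‖ ^ 2 + ‖p.2‖ ^ 2) := fun p => by
        rw [l2_norm_eq_sqrt_tsum]
        exact congrArg _ (hasSum_norm_sq_seqCons p.1 p.2).tsum_eq
      simp only [hnorm]
      fun_prop
  continuous_invFun := (l2_continuous_apply 0).prodMk (continuous_l2Restrict _ _)

@[simp] lemma l2ConsHomeomorph_zero (p : G × ℓ²(ℕ, G)) : l2ConsHomeomorph p 0 = p.1 := rfl

@[simp] lemma l2ConsHomeomorph_succ (p : G × ℓ²(ℕ, G)) (n : ℕ) :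
    l2ConsHomeomorph p (n + 1) = p.2 n := rfl

@[simp] lemma l2ConsHomeomorph_symm_snd_apply (x : ℓ²(ℕ, G)) (n : ℕ) :
    (l2ConsHomeomorph.symm x).2 n = x (n + 1) := rfl

lemma norm_sq_l2ConsHomeomorph (p : G × ℓ²(ℕ, G)) :
    ‖l2ConsHomeomorph p‖ ^ 2 = ‖p.1‖ ^ 2 + ‖p.2‖ ^ 2 := by
  rw [l2_norm_sq_eq_tsum]
  exact (hasSum_norm_sq_seqCons p.1 p.2).tsum_eq

end Reindex

section Power

variable {ι E : Type*} [NormedAddCommGroup E]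

/-- The families in `ℓ²(ι, E)` with all terms in `Z`. -/
def l2With (ι : Type*) (Z : Set E) : Set ℓ²(ι, E) := {x | ∀ i, x i ∈ Z}

/-- The family of norms of a family in `ℓ²(ι, E)`. -/
def l2NormSeq (x : ℓ²(ι, E)) : ℓ²(ι, ℝ) :=
  l2mk (fun i => ‖x i‖) (by simpa using l2_summable_norm_sq x)

lemma continuous_l2NormSeq : Continuous (l2NormSeq : ℓ²(ι, E) → ℓ²(ι, ℝ)) := by
  refine l2_continuous_of_forall_apply_of_norm (fun i => (l2_continuous_apply i).norm) ?_
  have hnorm : ∀ x : ℓ²(ι, E), ‖l2NormSeq x‖ = ‖x‖ :=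
    fun x => l2_norm_eq_of_forall_norm_apply_eq fun i => norm_norm (x i)
  simpa only [hnorm] using continuous_norm

lemma summable_const_mul_half_pow_sq (c : ℝ) : Summable fun n : ℕ => (c * (1 / 2 : ℝ) ^ n) ^ 2 := by
  simp_rw [mul_pow, ← pow_mul, mul_comm _ 2, pow_mul]
  exact (summable_geometric_of_lt_one (by norm_num) (by norm_num)).mul_left _

lemma summable_norm_sq_of_norm_le_half_pow {f : ℕ → E} {c : ℝ}
    (h : ∀ n, ‖f n‖ ≤ c * (1 / 2 : ℝ) ^ n) : Summable fun n => ‖f n‖ ^ 2 :=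
  (summable_const_mul_half_pow_sq c).of_nonneg_of_le (fun _ => by positivity)
    fun n => by gcongr; exact h n

lemma half_pow_mul_two_pow (n : ℕ) : (1 / 2 : ℝ) ^ n * 2 ^ n = 1 := by
  rw [← mul_pow]
  norm_num

lemma half_pow_smul_two_pow_smul [NormedSpace ℝ E] (n : ℕ) (x : E) :
    (1 / 2 : ℝ) ^ n • (2 : ℝ) ^ n • x = x := by
  rw [smul_smul, half_pow_mul_two_pow, one_smul]

lemma two_pow_smul_half_pow_smul [NormedSpace ℝ E] (n : ℕ) (x : E) :
    (2 : ℝ) ^ n • (1 / 2 : ℝ) ^ n • x = x := by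
  rw [smul_comm, half_pow_smul_two_pow_smul]

variable [InnerProductSpace ℝ E] {Z W : Set E} {C : ℝ}

/- The perturbation of the `n`-th term is scaled by `2⁻ⁿ` to keep it square-summable. -/
lemma exists_continuous_l2_scaled (hZ : ∀ r : ℝ, 0 < r → ∀ z ∈ Z, r • z ∈ Z) {f : Z → E}
    (hf : Continuous f) (hfC : ∀ z, ‖f z - z‖ ≤ C) :
    ∃ F : l2With ℕ Z → ℓ²(ℕ, E), Continuous F ∧
      ∀ x n, F x n = (1 / 2 : ℝ) ^ n • f ⟨(2 : ℝ) ^ n • x.1 n, hZ _ (by positivity) _ (x.2 n)⟩ := by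
  let u : l2With ℕ Z → ℕ → Z := fun x n => ⟨(2 : ℝ) ^ n • x.1 n, hZ _ (by positivity) _ (x.2 n)⟩
  have hu : ∀ n, Continuous fun x => u x n := fun n => Continuous.subtype_mk
    (((l2_continuous_apply n).comp continuous_subtype_val).const_smul ((2 : ℝ) ^ n)) _
  have hle : ∀ x n, ‖(1 / 2 : ℝ) ^ n • (f (u x n) - u x n)‖ ≤ C * (1 / 2) ^ n := fun x n => by
    rw [norm_smul, Real.norm_of_nonneg (by positivity), mul_comm]
    gcongr
    exact hfC _
  refine ⟨fun x => x.1 + l2mk _ (summable_norm_sq_of_norm_le_half_pow (hle x)), ?_, fun x n => ?_⟩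
  · exact continuous_subtype_val.add <| l2_continuous_of_dominated
      (summable_const_mul_half_pow_sq C) hle fun n =>
        ((hf.comp (hu n)).sub (continuous_subtype_val.comp (hu n))).const_smul ((1 / 2 : ℝ) ^ n)
  · rw [lp.coeFn_add, Pi.add_apply, l2mk_apply, smul_sub, half_pow_smul_two_pow_smul,
      add_sub_cancel]

lemma nonempty_l2With_homeomorph (hZ : ∀ r : ℝ, 0 < r → ∀ z ∈ Z, r • z ∈ Z)
    (hW : ∀ r : ℝ, 0 < r → ∀ w ∈ W, r • w ∈ W) (h : Z ≃ₜ W) (hC : ∀ z, ‖(h z - z : E)‖ ≤ C) :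
    Nonempty (l2With ℕ Z ≃ₜ l2With ℕ W) := by
  obtain ⟨F, hF, hFn⟩ := exists_continuous_l2_scaled hZ (f := fun z => (h z : E))
    (continuous_subtype_val.comp h.continuous) hC
  obtain ⟨F', hF', hFn'⟩ := exists_continuous_l2_scaled hW (f := fun w => (h.symm w : E))
    (continuous_subtype_val.comp h.symm.continuous) fun w => by
      simpa [norm_sub_rev] using hC (h.symm w)
  refine ⟨⟨⟨fun x => ⟨F x, fun n => ?_⟩, fun y => ⟨F' y, fun n => ?_⟩, fun x => ?_, fun y => ?_⟩,
    hF.subtype_mk _, hF'.subtype_mk _⟩⟩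
  · rw [hFn]
    exact hW _ (by positivity) _ (h _).2
  · rw [hFn']
    exact hZ _ (by positivity) _ (h.symm _).2
  · refine Subtype.ext (l2_ext fun n => ?_)
    simp only [hFn', hFn, two_pow_smul_half_pow_smul, Subtype.coe_eta, h.symm_apply_apply,
      half_pow_smul_two_pow_smul]
  · refine Subtype.ext (l2_ext fun n => ?_)
    simp only [hFn', hFn, two_pow_smul_half_pow_smul, Subtype.coe_eta, h.apply_symm_apply,
      half_pow_smul_two_pow_smul]

lemma smul_mem_compl_zero {r : ℝ} (hr : 0 < r) {z : E} (hz : z ∈ ({0}ᶜ : Set E)) :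
    r • z ∈ ({0}ᶜ : Set E) := smul_ne_zero hr.ne' hz

lemma nonempty_l2With_compl_zero_homeomorph :
    Nonempty (l2With ℕ ({0}ᶜ : Set ℓ²(ℕ, ℝ)) ≃ₜ ℓ²(ℕ, ℓ²(ℕ, ℝ))) := by
  obtain ⟨d, hd⟩ := exists_homeomorph_deletion
  obtain ⟨h⟩ := nonempty_l2With_homeomorph (Z := ({0}ᶜ : Set ℓ²(ℕ, ℝ))) (W := univ)
    (fun _ hr _ => smul_mem_compl_zero hr) (fun _ _ _ _ => mem_univ _)
    (d.trans (Homeomorph.Set.univ _).symm) hd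
  have huniv : l2With ℕ (univ : Set ℓ²(ℕ, ℝ)) = univ := eq_univ_of_forall fun _ _ => mem_univ _
  exact ⟨h.trans ((Homeomorph.setCongr huniv).trans (Homeomorph.Set.univ _))⟩

/-- The square-summable families of positive reals. -/
abbrev positiveL2 (ι : Type*) : Set ℓ²(ι, ℝ) := l2With ι (Ioi 0)

lemma smul_mem_positiveL2 {r : ℝ} (hr : 0 < r) {z : ℓ²(ι, ℝ)} (hz : z ∈ positiveL2 ι) :
    r • z ∈ positiveL2 ι := fun i => mul_pos hr (hz i)

lemma zero_notMem_positiveL2 [Nonempty ι] : (0 : ℓ²(ι, ℝ)) ∉ positiveL2 ι :=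
  fun h => lt_irrefl (0 : ℝ) (h (Classical.arbitrary ι))

section Polar

lemma norm_smul_mem_sphere {r : ℝ} (hr : 0 < r) (u : ↥(Z ∩ Metric.sphere 0 1)) :
    ‖r • (u : E)‖ = r := by
  rw [norm_smul, mem_sphere_zero_iff_norm.1 u.2.2, mul_one, Real.norm_of_nonneg hr.le]

/-- The family `rᵢ uᵢ` for positive `rᵢ` and unit vectors `uᵢ`. -/
def l2OfPolar (p : positiveL2 ι × (ι → ↥(Z ∩ Metric.sphere 0 1))) : ℓ²(ι, E) :=
  l2mk (fun i => p.1.1 i • (p.2 i : E)) <| by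
    have hnorm : ∀ i, ‖p.1.1 i • (p.2 i : E)‖ = ‖p.1.1 i‖ := fun i => by
      rw [norm_smul_mem_sphere (p.1.2 i), Real.norm_of_nonneg (le_of_lt (p.1.2 i))]
    simpa only [hnorm] using l2_summable_norm_sq p.1.1

lemma norm_l2OfPolar_apply (p : positiveL2 ι × (ι → ↥(Z ∩ Metric.sphere 0 1))) (i : ι) :
    ‖l2OfPolar p i‖ = p.1.1 i := norm_smul_mem_sphere (p.1.2 i) _

lemma continuous_l2OfPolar :
    Continuous (l2OfPolar : positiveL2 ι × (ι → ↥(Z ∩ Metric.sphere 0 1)) → ℓ²(ι, E)) := by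
  have hr : Continuous fun p : positiveL2 ι × (ι → ↥(Z ∩ Metric.sphere 0 1)) => p.1.1 :=
    continuous_subtype_val.comp continuous_fst
  refine l2_continuous_of_forall_apply_of_norm (fun i => ?_) ?_
  · exact ((l2_continuous_apply i).comp hr).smul
      (continuous_subtype_val.comp ((continuous_apply i).comp continuous_snd))
  · have hnorm : ∀ p : positiveL2 ι × (ι → ↥(Z ∩ Metric.sphere 0 1)), ‖l2OfPolar p‖ = ‖p.1.1‖ :=
      fun p => l2_norm_eq_of_forall_norm_apply_eq fun i => by
        rw [norm_l2OfPolar_apply, Real.norm_of_nonneg (le_of_lt (p.1.2 i))]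
    simpa only [hnorm] using hr.norm

/-- Polar coordinates in each summand of an `ℓ₂`-sum. -/
def l2PolarHomeomorph (h0 : (0 : E) ∉ Z) (hZ : ∀ r : ℝ, 0 < r → ∀ z ∈ Z, r • z ∈ Z) :
    l2With ι Z ≃ₜ positiveL2 ι × (ι → ↥(Z ∩ Metric.sphere 0 1)) :=
  have hpos : ∀ (x : l2With ι Z) i, 0 < ‖x.1 i‖ :=
    fun x i => norm_pos_iff.2 fun h => h0 (h ▸ x.2 i)
  { toFun x := (⟨l2NormSeq x.1, hpos x⟩, fun i => ⟨‖x.1 i‖⁻¹ • x.1 i,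
      hZ _ (inv_pos.2 (hpos x i)) _ (x.2 i), mem_sphere_zero_iff_norm.2 <| by
        rw [norm_smul, norm_inv, norm_norm, inv_mul_cancel₀ (hpos x i).ne']⟩)
    invFun p := ⟨l2OfPolar p, fun i => hZ _ (p.1.2 i) _ (p.2 i).2.1⟩
    left_inv x := Subtype.ext <| l2_ext fun i => smul_inv_smul₀ (hpos x i).ne' _
    right_inv p := Prod.ext (Subtype.ext (l2_ext (norm_l2OfPolar_apply p))) <|
      funext fun i => Subtype.ext <| by
        change ‖l2OfPolar p i‖⁻¹ • l2OfPolar p i = _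
        rw [norm_l2OfPolar_apply]
        exact inv_smul_smul₀ (ne_of_gt (p.1.2 i)) _
    continuous_toFun := by
      refine (Continuous.subtype_mk (continuous_l2NormSeq.comp continuous_subtype_val) _).prodMk
        (continuous_pi fun i => Continuous.subtype_mk ?_ _)
      have hi : Continuous fun x : l2With ι Z => x.1 i :=
        (l2_continuous_apply i).comp continuous_subtype_val
      exact (hi.norm.inv₀ fun x => (hpos x i).ne').smul hi
    continuous_invFun := continuous_l2OfPolar.subtype_mk _ }

end Polar

lemma norm_l2ConsHomeomorph_one (b : ℓ²(ℕ, ℝ)) :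
    ‖l2ConsHomeomorph (1, b)‖ = √(1 + ‖b‖ ^ 2) := by
  rw [← Real.sqrt_sq (norm_nonneg (l2ConsHomeomorph _)), norm_sq_l2ConsHomeomorph, norm_one,
    one_pow]

lemma l2ConsHomeomorph_one_mem_positiveL2 {b : ℓ²(ℕ, ℝ)} (hb : b ∈ positiveL2 ℕ) :
    l2ConsHomeomorph (1, b) ∈ positiveL2 ℕ
  | 0 => (one_pos : (0 : ℝ) < 1)
  | n + 1 => hb n

lemma l2ConsHomeomorph_one_inv_smul_tail {x : ℓ²(ℕ, ℝ)} (hx : x 0 ≠ 0) :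
    l2ConsHomeomorph (1, (x 0)⁻¹ • (l2ConsHomeomorph.symm x).2) = (x 0)⁻¹ • x :=
  l2_ext fun
    | 0 => (inv_mul_cancel₀ hx).symm
    | _ + 1 => rfl

/-- The positive part of the unit sphere is homeomorphic to the space of positive sequences, by
central projection onto the hyperplane where the first coordinate equals `1`. -/
def gnomonicHomeomorph : ↥(positiveL2 ℕ ∩ Metric.sphere 0 1) ≃ₜ positiveL2 ℕ where
  toFun u := ⟨(u.1 0)⁻¹ • (l2ConsHomeomorph.symm u.1).2,
    smul_mem_positiveL2 (inv_pos.2 (u.2.1 0)) fun n => u.2.1 (n + 1)⟩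
  invFun b := ⟨(√(1 + ‖b.1‖ ^ 2))⁻¹ • l2ConsHomeomorph (1, b.1),
    smul_mem_positiveL2 (by positivity) (l2ConsHomeomorph_one_mem_positiveL2 b.2), by
      rw [mem_sphere_zero_iff_norm, norm_smul, norm_l2ConsHomeomorph_one, norm_inv,
        Real.norm_of_nonneg (by positivity), inv_mul_cancel₀ (by positivity)]⟩
  left_inv u := by
    have hu : 0 < u.1 0 := u.2.1 0
    refine Subtype.ext ?_
    change (√(1 + ‖(u.1 0)⁻¹ • (l2ConsHomeomorph.symm u.1).2‖ ^ 2))⁻¹ •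
      l2ConsHomeomorph (1, (u.1 0)⁻¹ • (l2ConsHomeomorph.symm u.1).2) = u.1
    rw [← norm_l2ConsHomeomorph_one, l2ConsHomeomorph_one_inv_smul_tail hu.ne', norm_smul,
      mem_sphere_zero_iff_norm.1 u.2.2, mul_one, Real.norm_of_nonneg (by positivity), inv_inv,
      smul_inv_smul₀ hu.ne']
  right_inv b := by
    have hpos : √(1 + ‖b.1‖ ^ 2) ≠ 0 := by positivity
    refine Subtype.ext (l2_ext fun n => ?_)
    simp [hpos]
  continuous_toFun := by
    refine Continuous.subtype_mk
      (Continuous.fun_smul (Continuous.fun_inv₀ ?_ fun u => ne_of_gt (u.2.1 0)) ?_) _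
    · exact (l2_continuous_apply 0).comp continuous_subtype_val
    · exact continuous_snd.comp (l2ConsHomeomorph.symm.continuous.comp continuous_subtype_val)
  continuous_invFun := by
    refine Continuous.subtype_mk (Continuous.fun_smul (Continuous.fun_inv₀ ?_ fun b => ?_) ?_) _
    · fun_prop
    · positivity
    · exact l2ConsHomeomorph.continuous.comp (continuous_const.prodMk continuous_subtype_val)

/-- `(A × B)^ω ≃ₜ A^ω × B^ω`. -/
def arrowProdHomeomorph (ι A B : Type*) [TopologicalSpace A] [TopologicalSpace B] :
    (ι → A × B) ≃ₜ (ι → A) × (ι → B) where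
  toEquiv := Equiv.arrowProdEquivProdArrow ι (fun _ => A) fun _ => B
  continuous_toFun := by
    change Continuous fun x : ι → A × B => (fun i => (x i).1, fun i => (x i).2)
    fun_prop
  continuous_invFun := by
    change Continuous fun p : (ι → A) × (ι → B) => fun i => (p.1 i, p.2 i)
    fun_prop

/-- `(A^ω)^ω ≃ₜ A^ω`. -/
def arrowArrowNatHomeomorph (A : Type*) [TopologicalSpace A] : (ℕ → ℕ → A) ≃ₜ (ℕ → A) :=
  Homeomorph.piCurry.symm.trans (Homeomorph.piCongrLeft (Y := fun _ => A) Nat.pairEquiv)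

/-- `ℓ₂(ℓ₂) ≃ₜ ℓ₂`. -/
def l2UncurryNat : ℓ²(ℕ, ℓ²(ℕ, ℝ)) ≃ₜ ℓ²(ℕ, ℝ) :=
  ((l2Uncurry ℕ ℕ).trans (l2Reindex Nat.pairEquiv)).toHomeomorph

lemma mem_l2With_positiveL2_iff (x : ℓ²(ℕ, ℓ²(ℕ, ℝ))) :
    x ∈ l2With ℕ (positiveL2 ℕ) ↔ l2UncurryNat x ∈ positiveL2 ℕ := by
  change (∀ i j, 0 < x i j) ↔ ∀ n : ℕ, 0 < x n.unpair.1 n.unpair.2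
  exact ⟨fun h n => h _ _, fun h i j => by simpa only [Nat.unpair_pair] using h (Nat.pair i j)⟩

/-- The space of positive sequences is homeomorphic to its countable power. -/
def positiveL2PowHomeomorph : positiveL2 ℕ ≃ₜ (ℕ → positiveL2 ℕ) :=
  (l2UncurryNat.subtype mem_l2With_positiveL2_iff).symm.trans <|
    (l2PolarHomeomorph zero_notMem_positiveL2 fun _ hr _ => smul_mem_positiveL2 hr).trans <|
      ((Homeomorph.refl _).prodCongr (Homeomorph.piCongrRight fun _ => gnomonicHomeomorph)).trans
        (seqConsHomeomorph _)

lemma nonempty_l2_homeomorph_positiveL2_prod :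
    Nonempty (ℓ²(ℕ, ℝ) ≃ₜ
      positiveL2 ℕ × (ℕ → ↥(({0}ᶜ : Set ℓ²(ℕ, ℝ)) ∩ Metric.sphere 0 1))) := by
  obtain ⟨f⟩ := nonempty_l2With_compl_zero_homeomorph
  exact ⟨l2UncurryNat.symm.trans <| f.symm.trans <|
    l2PolarHomeomorph (by simp) fun _ hr _ => smul_mem_compl_zero hr⟩

theorem nonempty_l2_pow_homeomorph : Nonempty ((ℕ → ℓ²(ℕ, ℝ)) ≃ₜ ℓ²(ℕ, ℝ)) := by
  obtain ⟨f⟩ := nonempty_l2_homeomorph_positiveL2_prod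
  exact ⟨(Homeomorph.piCongrRight fun _ => f).trans <| (arrowProdHomeomorph _ _ _).trans <|
    (positiveL2PowHomeomorph.symm.prodCongr (arrowArrowNatHomeomorph _)).trans f.symm⟩

end Power

/-! ### Rotations in a countable power -/

section Rotation

variable {F : Type*} [NormedAddCommGroup F] [NormedSpace ℝ F]

/-- The cosine of the `n`-th rotation angle `cutoff n t * (π / 2)` at time `t`. -/
def rotCos (n : ℕ) (t : ℝ) : ℝ := Real.cos (cutoff n t * (Real.pi / 2))

/-- The sine of the `n`-th rotation angle `cutoff n t * (π / 2)` at time `t`. -/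
def rotSin (n : ℕ) (t : ℝ) : ℝ := Real.sin (cutoff n t * (Real.pi / 2))

lemma sq_rotCos_add_sq_rotSin (n : ℕ) (t : ℝ) : rotCos n t ^ 2 + rotSin n t ^ 2 = 1 :=
  Real.cos_sq_add_sin_sq _

lemma sq_rotCos_add_sq_rotSin_smul (n : ℕ) (t : ℝ) (x : F) :
    (rotCos n t ^ 2 + rotSin n t ^ 2) • x = x := by
  rw [sq_rotCos_add_sq_rotSin, one_smul]

@[fun_prop] lemma continuous_rotCos (n : ℕ) : Continuous (rotCos n) :=
  Real.continuous_cos.comp ((continuous_cutoff n).mul continuous_const)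

@[fun_prop] lemma continuous_rotSin (n : ℕ) : Continuous (rotSin n) :=
  Real.continuous_sin.comp ((continuous_cutoff n).mul continuous_const)

lemma rotCos_eq_zero {n : ℕ} {t : ℝ} (h : 2 ^ n * t ≤ 1) : rotCos n t = 0 := by
  simp [rotCos, cutoff_eq_one h]

lemma rotSin_eq_one {n : ℕ} {t : ℝ} (h : 2 ^ n * t ≤ 1) : rotSin n t = 1 := by
  simp [rotSin, cutoff_eq_one h]

lemma rotCos_eq_one {n : ℕ} {t : ℝ} (h : 2 ≤ 2 ^ n * t) : rotCos n t = 1 := by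
  simp [rotCos, cutoff_eq_zero h]

lemma rotSin_eq_zero {n : ℕ} {t : ℝ} (h : 2 ≤ 2 ^ n * t) : rotSin n t = 0 := by
  simp [rotSin, cutoff_eq_zero h]

/-- The `n`-th term after the first `n` rotations, the `k`-th of which takes place in the plane of
the coordinates `k` and `k + 1`. -/
def rotCarry (z : ℕ → F) (t : ℝ) : ℕ → F
  | 0 => z 0
  | n + 1 => -(rotSin n t • rotCarry z t n) + rotCos n t • z (n + 1)

/-- The effect of performing all rotations at time `t`. For `t > 0` only finitely many of them are
nontrivial; as `t → 0` the result tends to the shift of `z`. -/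
def rotate (z : ℕ → F) (t : ℝ) (n : ℕ) : F := rotCos n t • rotCarry z t n + rotSin n t • z (n + 1)

/-- The backward recursion recovering `rotCarry` from `rotate`, started `k` steps ahead. -/
def rotCarryBackward (w : ℕ → F) (t : ℝ) : ℕ → ℕ → F
  | 0, n => w n
  | k + 1, n => rotCos n t • w n - rotSin n t • rotCarryBackward w t k (n + 1)

/-- The value of `rotCarry` recovered from `rotate`; meaningful for `t > 0`. -/
def unrotCarry (w : ℕ → F) (t : ℝ) (n : ℕ) : F := rotCarryBackward w t ⌈2 / t⌉₊ n

/-- The inverse of `rotate` for `t > 0`. -/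
def unrotate (w : ℕ → F) (t : ℝ) : ℕ → F
  | 0 => unrotCarry w t 0
  | n + 1 => rotSin n t • w n + rotCos n t • unrotCarry w t (n + 1)

variable {t : ℝ}

lemma two_le_two_pow_mul_of_ceil_le (ht : 0 < t) {n : ℕ} (hn : ⌈2 / t⌉₊ ≤ n) : 2 ≤ 2 ^ n * t := by
  have hceil : 2 / t ≤ n := (Nat.le_ceil _).trans (by exact_mod_cast hn)
  have hpow : (n : ℝ) ≤ 2 ^ n := by exact_mod_cast Nat.lt_two_pow_self.le
  rw [div_le_iff₀ ht] at hceil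
  exact hceil.trans (by gcongr)

lemma eq_rotCarryBackward {w c : ℕ → F} {N : ℕ} (hN : ∀ n ≥ N, 2 ≤ 2 ^ n * t)
    (hc : ∀ n, c n = rotCos n t • w n - rotSin n t • c (n + 1)) (k n : ℕ) (h : N ≤ n + k) :
    c n = rotCarryBackward w t k n := by
  induction k generalizing n with
  | zero => simp [hc n, rotCos_eq_one (hN n h), rotSin_eq_zero (hN n h), rotCarryBackward]
  | succ k ih => rw [hc, rotCarryBackward, ih (n + 1) (by lia)]

lemma rotCarryBackward_succ_eq {w : ℕ → F} {N : ℕ} (hN : ∀ n ≥ N, 2 ≤ 2 ^ n * t)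
    (k n : ℕ) (h : N ≤ n + k) : rotCarryBackward w t (k + 1) n = rotCarryBackward w t k n := by
  induction k generalizing n with
  | zero => simp [rotCarryBackward, rotCos_eq_one (hN n h), rotSin_eq_zero (hN n h)]
  | succ k ih => rw [rotCarryBackward, ih (n + 1) (by lia), ← rotCarryBackward]

lemma unrotCarry_eq (ht : 0 < t) (w : ℕ → F) (n : ℕ) :
    unrotCarry w t n = rotCos n t • w n - rotSin n t • unrotCarry w t (n + 1) := by
  rw [unrotCarry, ← rotCarryBackward_succ_eq (N := ⌈2 / t⌉₊)
    (fun n hn => two_le_two_pow_mul_of_ceil_le ht hn) _ _ (by lia), rotCarryBackward, unrotCarry]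

lemma rotCarry_unrotate (ht : 0 < t) (w : ℕ → F) (n : ℕ) :
    rotCarry (unrotate w t) t n = unrotCarry w t n := by
  induction n with
  | zero => rfl
  | succ n ih =>
    rw [rotCarry, ih, unrotate, unrotCarry_eq ht w n]
    conv_rhs => rw [← sq_rotCos_add_sq_rotSin_smul n t (unrotCarry w t (n + 1))]
    module

lemma rotate_unrotate (ht : 0 < t) (w : ℕ → F) : rotate (unrotate w t) t = w := by
  funext n
  rw [rotate, rotCarry_unrotate ht, unrotate, unrotCarry_eq ht w n]
  conv_rhs => rw [← sq_rotCos_add_sq_rotSin_smul n t (w n)]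
  module

lemma unrotCarry_rotate (ht : 0 < t) (z : ℕ → F) (n : ℕ) :
    unrotCarry (rotate z t) t n = rotCarry z t n := by
  refine (eq_rotCarryBackward (N := ⌈2 / t⌉₊)
    (fun n hn => two_le_two_pow_mul_of_ceil_le ht hn) (fun n => ?_) _ _ (by lia)).symm
  rw [rotate, rotCarry]
  conv_lhs => rw [← sq_rotCos_add_sq_rotSin_smul n t (rotCarry z t n)]
  module

lemma unrotate_rotate (ht : 0 < t) (z : ℕ → F) : unrotate (rotate z t) t = z := by
  funext n
  cases n with
  | zero => exact unrotCarry_rotate ht z 0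
  | succ n =>
    rw [unrotate, unrotCarry_rotate ht, rotate, rotCarry]
    conv_rhs => rw [← sq_rotCos_add_sq_rotSin_smul n t (z (n + 1))]
    module

lemma rotate_apply_eq (z : ℕ → F) {n : ℕ} (h : 2 ^ n * t ≤ 1) : rotate z t n = z (n + 1) := by
  simp [rotate, rotCos_eq_zero h, rotSin_eq_one h]

lemma unrotate_succ_eq (w : ℕ → F) (ht : 0 < t) {n : ℕ} (h : 2 ^ n * t ≤ 1) :
    unrotate w t (n + 1) = w n := by
  rw [← rotate_apply_eq (unrotate w t) h, rotate_unrotate ht]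

lemma continuous_rotCarry (n : ℕ) : Continuous fun p : (ℕ → F) × ℝ => rotCarry p.1 p.2 n := by
  induction n with
  | zero =>
    simp only [rotCarry]
    fun_prop
  | succ n ih =>
    simp only [rotCarry]
    fun_prop

lemma continuous_rotate : Continuous fun p : (ℕ → F) × ℝ => rotate p.1 p.2 := by
  refine continuous_pi fun n => ?_
  have hcarry := continuous_rotCarry (F := F) n
  unfold rotate
  fun_prop

lemma continuous_rotCarryBackward (k n : ℕ) :
    Continuous fun p : (ℕ → F) × ℝ => rotCarryBackward p.1 p.2 k n := by
  induction k generalizing n with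
  | zero =>
    simp only [rotCarryBackward]
    fun_prop
  | succ k ih =>
    simp only [rotCarryBackward]
    have hnext := ih (n + 1)
    fun_prop

lemma continuousAt_unrotCarry {p : (ℕ → F) × ℝ} (hp : 0 < p.2) (n : ℕ) :
    ContinuousAt (fun p : (ℕ → F) × ℝ => unrotCarry p.1 p.2 n) p := by
  obtain ⟨N, hN⟩ := exists_forall_le_two_pow_mul (half_pos hp) 2
  refine (continuous_rotCarryBackward N n).continuousAt.congr ?_
  filter_upwards [continuous_snd.continuousAt.eventually_const_lt (half_lt_self hp)] with q hq
  exact (eq_rotCarryBackward (N := N) (fun m hm => (hN m hm).trans (by gcongr))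
    (unrotCarry_eq ((half_pos hp).trans hq) _) _ _ (by lia)).symm

lemma continuousAt_unrotate {p : (ℕ → F) × ℝ} (hp : 0 < p.2) :
    ContinuousAt (fun p : (ℕ → F) × ℝ => unrotate p.1 p.2) p := by
  refine continuousAt_pi.2 fun n => ?_
  cases n with
  | zero => exact continuousAt_unrotCarry hp 0
  | succ n =>
    simp only [unrotate]
    have hcarry := continuousAt_unrotCarry hp (n + 1)
    fun_prop

/-- The rotations as a self-homeomorphism of `F^ω × (0, ∞)` over `(0, ∞)`. -/
def rotateHomeomorph (F : Type*) [NormedAddCommGroup F] [NormedSpace ℝ F] :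
    (ℕ → F) × Ioi (0 : ℝ) ≃ₜ (ℕ → F) × Ioi (0 : ℝ) where
  toFun p := (rotate p.1 p.2, p.2)
  invFun p := (unrotate p.1 p.2, p.2)
  left_inv p := Prod.ext (unrotate_rotate p.2.2 p.1) rfl
  right_inv p := Prod.ext (rotate_unrotate p.2.2 p.1) rfl
  continuous_toFun := (continuous_rotate.comp
    (continuous_fst.prodMk (continuous_subtype_val.comp continuous_snd))).prodMk continuous_snd
  continuous_invFun := by
    refine Continuous.prodMk (continuous_iff_continuousAt.2 fun p => ?_) continuous_snd
    have hval : Continuous fun p : (ℕ → F) × Ioi (0 : ℝ) => (p.1, (p.2 : ℝ)) := by fun_prop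
    exact ContinuousAt.comp (f := fun p : (ℕ → F) × Ioi (0 : ℝ) => (p.1, (p.2 : ℝ)))
      (continuousAt_unrotate p.2.2) hval.continuousAt

end Rotation

/-! ### `ℓ₂ × [0, ∞)` is homeomorphic to `ℓ₂` -/

section Cone

lemma continuous_of_continuousOn_of_forall_notMem_continuousAt {X Y : Type*} [TopologicalSpace X]
    [TopologicalSpace Y] {f : X → Y} {s : Set X} (hs : IsOpen s) (hf : ContinuousOn f s)
    (hfs : ∀ x ∉ s, ContinuousAt f x) : Continuous f :=
  continuous_iff_continuousAt.2 fun x =>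
    (em (x ∈ s)).elim (fun hx => hf.continuousAt (hs.mem_nhds hx)) (hfs x)

lemma continuousAt_pi_of_forall_eventually_apply_eq {X ι : Type*} {A : ι → Type*}
    [TopologicalSpace X] [∀ i, TopologicalSpace (A i)] {f g : X → ∀ i, A i} {x : X}
    (hg : ContinuousAt g x) (h : ∀ i, ∀ᶠ y in 𝓝 x, f y i = g y i) : ContinuousAt f x :=
  continuousAt_pi.2 fun i => (continuousAt_pi.1 hg i).congr ((h i).mono fun _ => Eq.symm)

variable {F X : Type*} [NormedAddCommGroup F] [NormedSpace ℝ F] [TopologicalSpace X]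
  {ρ : X → ℝ} {x₀ : X}

/-- The homeomorphism `F^ω × (X ∖ {x₀}) ≃ₜ F^ω × (0, ∞)` obtained from `X ∖ {x₀} ≃ₜ F × (0, ∞)` by
rotating the coordinate in `F` into the sequence. -/
def absorbConeHomeomorph (φ : {x // x ≠ x₀} ≃ₜ F × Ioi (0 : ℝ)) :
    (ℕ → F) × {x // x ≠ x₀} ≃ₜ (ℕ → F) × Ioi (0 : ℝ) :=
  ((Homeomorph.prodComm _ _).trans <| (φ.prodCongr (Homeomorph.refl _)).trans <|
    (Homeomorph.prodAssoc _ _ _).trans <|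
      ((Homeomorph.refl F).prodCongr (Homeomorph.prodComm _ _)).trans <|
        (Homeomorph.prodAssoc _ _ _).symm.trans <|
          ((seqConsHomeomorph F).prodCongr (Homeomorph.refl _))).trans (rotateHomeomorph F)

lemma absorbConeHomeomorph_apply (φ : {x // x ≠ x₀} ≃ₜ F × Ioi (0 : ℝ))
    (q : (ℕ → F) × {x // x ≠ x₀}) : absorbConeHomeomorph φ q =
      (rotate (seqCons (φ q.2).1 q.1) (φ q.2).2, (φ q.2).2) := rfl

open Classical in
/-- `absorbConeHomeomorph φ`, extended over `F^ω × {x₀}` by the identity of `F^ω`. -/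
def absorbCone (φ : {x // x ≠ x₀} ≃ₜ F × Ioi (0 : ℝ)) (q : (ℕ → F) × X) : (ℕ → F) × Ici (0 : ℝ) :=
  if h : q.2 = x₀ then (q.1, ⟨0, self_mem_Ici⟩) else
    Prod.map id (inclusion Ioi_subset_Ici_self) (absorbConeHomeomorph φ (q.1, ⟨q.2, h⟩))

/-- The inverse of `absorbCone φ`. -/
def unabsorbCone (φ : {x // x ≠ x₀} ≃ₜ F × Ioi (0 : ℝ)) (q : (ℕ → F) × Ici (0 : ℝ)) :
    (ℕ → F) × X :=
  if h : q.2.1 = 0 then (q.1, x₀) else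
    Prod.map id Subtype.val
      ((absorbConeHomeomorph φ).symm (q.1, ⟨q.2, mem_Ioi.2 (lt_of_le_of_ne q.2.2 (Ne.symm h))⟩))

variable (φ : {x // x ≠ x₀} ≃ₜ F × Ioi (0 : ℝ))

lemma absorbCone_of_eq {q : (ℕ → F) × X} (h : q.2 = x₀) :
    absorbCone φ q = (q.1, ⟨0, self_mem_Ici⟩) := dif_pos h

lemma absorbCone_of_ne {q : (ℕ → F) × X} (h : q.2 ≠ x₀) : absorbCone φ q =
    Prod.map id (inclusion Ioi_subset_Ici_self) (absorbConeHomeomorph φ (q.1, ⟨q.2, h⟩)) :=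
  dif_neg h

lemma unabsorbCone_of_eq {q : (ℕ → F) × Ici (0 : ℝ)} (h : q.2.1 = 0) :
    unabsorbCone φ q = (q.1, x₀) := dif_pos h

lemma unabsorbCone_of_pos {q : (ℕ → F) × Ici (0 : ℝ)} (h : 0 < q.2.1) : unabsorbCone φ q =
    Prod.map id Subtype.val ((absorbConeHomeomorph φ).symm (q.1, ⟨q.2, mem_Ioi.2 h⟩)) :=
  dif_neg h.ne'

lemma unabsorbCone_absorbCone (q : (ℕ → F) × X) : unabsorbCone φ (absorbCone φ q) = q := by
  by_cases h : q.2 = x₀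
  · rw [absorbCone_of_eq φ h, unabsorbCone_of_eq φ rfl, ← h]
  · rw [absorbCone_of_ne φ h, unabsorbCone_of_pos]
    swap
    · exact (absorbConeHomeomorph φ (q.1, ⟨q.2, h⟩)).2.2
    exact congrArg (Prod.map id Subtype.val)
      ((absorbConeHomeomorph φ).symm_apply_apply (q.1, ⟨q.2, h⟩))

lemma absorbCone_unabsorbCone (q : (ℕ → F) × Ici (0 : ℝ)) :
    absorbCone φ (unabsorbCone φ q) = q := by
  rcases (mem_Ici.1 q.2.2).eq_or_lt' with h | h
  · rw [unabsorbCone_of_eq φ h, absorbCone_of_eq φ rfl]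
    exact Prod.ext rfl (Subtype.ext h.symm)
  · rw [unabsorbCone_of_pos φ h,
      absorbCone_of_ne φ ((absorbConeHomeomorph φ).symm (q.1, ⟨q.2, mem_Ioi.2 h⟩)).2.2]
    exact congrArg (Prod.map id (inclusion Ioi_subset_Ici_self))
      ((absorbConeHomeomorph φ).apply_symm_apply (q.1, ⟨q.2, mem_Ioi.2 h⟩))

variable {φ}

lemma absorbCone_snd (hρ0 : ρ x₀ = 0) (hφ : ∀ x, ((φ x).2 : ℝ) = ρ x) (q : (ℕ → F) × X) :
    ((absorbCone φ q).2 : ℝ) = ρ q.2 := by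
  by_cases h : q.2 = x₀
  · rw [absorbCone_of_eq φ h, h, hρ0]
  · rw [absorbCone_of_ne φ h]
    exact hφ ⟨q.2, h⟩

lemma absorbCone_fst_apply_eq (hφ : ∀ x, ((φ x).2 : ℝ) = ρ x) {q : (ℕ → F) × X} {n : ℕ}
    (h : 2 ^ n * ρ q.2 ≤ 1) : (absorbCone φ q).1 n = q.1 n := by
  by_cases hq : q.2 = x₀
  · rw [absorbCone_of_eq φ hq]
  · rw [absorbCone_of_ne φ hq, absorbConeHomeomorph_apply]
    exact rotate_apply_eq _ (by rwa [hφ])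

lemma unabsorbCone_fst_apply_eq {q : (ℕ → F) × Ici (0 : ℝ)} {n : ℕ} (h : 2 ^ n * q.2.1 ≤ 1) :
    (unabsorbCone φ q).1 n = q.1 n := by
  rcases (mem_Ici.1 q.2.2).eq_or_lt' with hq | hq
  · rw [unabsorbCone_of_eq φ hq]
  · rw [unabsorbCone_of_pos φ hq]
    exact unrotate_succ_eq _ hq h

lemma continuous_absorbCone [T1Space X] (hρ : Continuous ρ) (hρ0 : ρ x₀ = 0)
    (hφ : ∀ x, ((φ x).2 : ℝ) = ρ x) : Continuous (absorbCone φ) := by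
  have hsnd : Continuous fun q => (absorbCone φ q).2 :=
    continuous_induced_rng.2 <| by
      simpa only [Function.comp_def, absorbCone_snd hρ0 hφ] using hρ.comp continuous_snd
  have hopen : IsOpen {q : (ℕ → F) × X | q.2 ≠ x₀} := isOpen_ne.preimage continuous_snd
  suffices hfst : Continuous fun q => (absorbCone φ q).1 from hfst.prodMk hsnd
  refine continuous_of_continuousOn_of_forall_notMem_continuousAt hopen ?_ fun q hq => ?_
  · rw [continuousOn_iff_continuous_domRestrict]
    have hval : Continuous fun q : {q : (ℕ → F) × X | q.2 ≠ x₀} =>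
        (absorbConeHomeomorph φ (q.1.1, ⟨q.1.2, q.2⟩)).1 := by fun_prop
    refine hval.congr fun q => ?_
    rw [domRestrict_apply, absorbCone_of_ne φ q.2]
    rfl
  · have hq0 : ρ q.2 = 0 := (not_not.1 hq : q.2 = x₀) ▸ hρ0
    refine continuousAt_pi_of_forall_eventually_apply_eq continuousAt_fst fun n => ?_
    have hlt : ∀ᶠ q' : (ℕ → F) × X in 𝓝 q, 2 ^ n * ρ q'.2 < 1 :=
      (continuous_const.mul (hρ.comp continuous_snd)).continuousAt.eventually_lt_const
        (by simp [hq0])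
    exact hlt.mono fun q' hq' => absorbCone_fst_apply_eq hφ hq'.le

lemma continuous_unabsorbCone (hρ0 : ρ x₀ = 0) (hx₀ : comap ρ (𝓝 0) ≤ 𝓝 x₀)
    (hφ : ∀ x, ((φ x).2 : ℝ) = ρ x) : Continuous (unabsorbCone φ) := by
  have ht : Continuous fun q : (ℕ → F) × Ici (0 : ℝ) => q.2.1 := by fun_prop
  have hopen : IsOpen {q : (ℕ → F) × Ici (0 : ℝ) | q.2.1 ≠ 0} := isOpen_ne.preimage ht
  refine continuous_of_continuousOn_of_forall_notMem_continuousAt hopen ?_ fun q hq => ?_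
  · rw [continuousOn_iff_continuous_domRestrict]
    have hval : Continuous fun q : {q : (ℕ → F) × Ici (0 : ℝ) | q.2.1 ≠ 0} =>
        Prod.map id Subtype.val ((absorbConeHomeomorph φ).symm
          (q.1.1, ⟨q.1.2, mem_Ioi.2 (lt_of_le_of_ne q.1.2.2 (Ne.symm q.2))⟩)) := by fun_prop
    refine hval.congr fun q => ?_
    rw [domRestrict_apply, unabsorbCone_of_pos φ (lt_of_le_of_ne q.1.2.2 (Ne.symm q.2))]
  · have hq0 : q.2.1 = 0 := not_not.1 hq
    suffices h : ContinuousAt (fun q => (unabsorbCone φ q).1) q ∧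
      ContinuousAt (fun q => (unabsorbCone φ q).2) q from h.1.prodMk h.2
    constructor
    · refine continuousAt_pi_of_forall_eventually_apply_eq continuousAt_fst fun n => ?_
      have hlt : ∀ᶠ q' : (ℕ → F) × Ici (0 : ℝ) in 𝓝 q, 2 ^ n * q'.2.1 < 1 :=
        (continuous_const.mul ht).continuousAt.eventually_lt_const (by simp [hq0])
      exact hlt.mono fun q' hq' => unabsorbCone_fst_apply_eq hq'.le
    · have hρq : ∀ q' : (ℕ → F) × Ici (0 : ℝ), ρ (unabsorbCone φ q').2 = q'.2.1 := fun q' => by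
        rw [← absorbCone_snd hρ0 hφ, absorbCone_unabsorbCone]
      have hlim : (unabsorbCone φ q).2 = x₀ := by rw [unabsorbCone_of_eq φ hq0]
      rw [ContinuousAt, hlim]
      refine Tendsto.mono_right (tendsto_comap_iff.2 ?_) hx₀
      simpa only [Function.comp_def, hρq, hq0] using ht.tendsto q

/- Multiplication by `F^ω` does not distinguish the metric cone over `F` from a half-line: the
coordinate in `F` is rotated into the sequence at a depth tending to infinity at the vertex. -/
lemma nonempty_pow_prod_homeomorph_Ici [T1Space X] (hρ : Continuous ρ) (hρ0 : ρ x₀ = 0)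
    (hx₀ : comap ρ (𝓝 0) ≤ 𝓝 x₀) (hφ : ∀ x, ((φ x).2 : ℝ) = ρ x) :
    Nonempty ((ℕ → F) × X ≃ₜ (ℕ → F) × Ici (0 : ℝ)) :=
  ⟨⟨⟨absorbCone φ, unabsorbCone φ, unabsorbCone_absorbCone φ, absorbCone_unabsorbCone φ⟩,
    continuous_absorbCone hρ hρ0 hφ, continuous_unabsorbCone hρ0 hx₀ hφ⟩⟩

end Cone

section HalfSpace

variable {E : Type*} [NormedAddCommGroup E] [NormedSpace ℝ E] {Z W : Set E} {C : ℝ}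

/-- The subset of `E × ℝ` which is `τ • Z` in the slice at height `τ ≠ 0` and all of `E` at height
`0`. -/
def scaledSlices (Z : Set E) : Set (E × ℝ) := {p | p.2 ≠ 0 → p.2⁻¹ • p.1 ∈ Z}

/-- The map acting as `f` rescaled by `τ` in the slice at height `τ ≠ 0`. -/
def scaledMap (f : Z → E) (p : scaledSlices Z) : E :=
  if h : p.1.2 = 0 then p.1.1 else p.1.2 • f ⟨p.1.2⁻¹ • p.1.1, p.2 h⟩

lemma norm_scaledMap_sub_le {f : Z → E} (hfC : ∀ z, ‖f z - z‖ ≤ C) (p : scaledSlices Z) :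
    ‖scaledMap f p - p.1.1‖ ≤ C * |p.1.2| := by
  by_cases hp : p.1.2 = 0
  · simp [scaledMap, hp]
  · have hsub : scaledMap f p - p.1.1 =
        p.1.2 • (f ⟨p.1.2⁻¹ • p.1.1, p.2 hp⟩ - p.1.2⁻¹ • p.1.1) := by
      rw [scaledMap, dif_neg hp, smul_sub, smul_inv_smul₀ hp]
    rw [hsub, norm_smul, Real.norm_eq_abs, mul_comm]
    gcongr
    exact hfC _

lemma continuous_scaledMap {f : Z → E} (hf : Continuous f) (hfC : ∀ z, ‖f z - z‖ ≤ C) :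
    Continuous (scaledMap f) := by
  have hτ : Continuous fun p : scaledSlices Z => p.1.2 := by fun_prop
  have hopen : IsOpen {p : scaledSlices Z | p.1.2 ≠ 0} := isOpen_ne.preimage hτ
  refine continuous_of_continuousOn_of_forall_notMem_continuousAt hopen ?_ fun p hp => ?_
  · rw [continuousOn_iff_continuous_domRestrict]
    have harg : Continuous fun p : {p : scaledSlices Z | p.1.2 ≠ 0} => p.1.1.2⁻¹ • p.1.1.1 :=
      (Continuous.fun_inv₀ (by fun_prop) fun p => p.2).fun_smul (by fun_prop)
    refine (Continuous.fun_smul (hτ.comp continuous_subtype_val)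
      (hf.comp (harg.subtype_mk fun p => p.1.2 p.2))).congr fun p => ?_
    rw [domRestrict_apply, scaledMap, dif_neg p.2]
    rfl
  · have hp0 : p.1.2 = 0 := not_not.1 hp
    have hzero : Tendsto (fun q => scaledMap f q - q.1.1) (𝓝 p) (𝓝 0) :=
      squeeze_zero_norm (norm_scaledMap_sub_le hfC) <| by
        simpa [hp0] using (hτ.abs.const_mul C).tendsto p
    have hbase : Tendsto (fun q : scaledSlices Z => q.1.1) (𝓝 p) (𝓝 p.1.1) :=
      Continuous.tendsto (by fun_prop) p
    have hval : scaledMap f p = p.1.1 := by rw [scaledMap, dif_pos hp0]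
    simpa only [ContinuousAt, hval, sub_add_cancel, zero_add] using hzero.add hbase

lemma scaledMap_mem_scaledSlices (h : Z → W) (p : scaledSlices Z) :
    (scaledMap (fun z => (h z : E)) p, p.1.2) ∈ scaledSlices W := fun hp => by
  have hp : p.1.2 ≠ 0 := hp
  rw [scaledMap, dif_neg hp, inv_smul_smul₀ hp]
  exact (h _).2

lemma scaledMap_scaledMap {h : Z → W} {h' : W → Z} (hh : Function.LeftInverse h' h)
    (p : scaledSlices Z) : scaledMap (fun w => (h' w : E))
      ⟨(scaledMap (fun z => (h z : E)) p, p.1.2), scaledMap_mem_scaledSlices h p⟩ = p.1.1 := by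
  by_cases hp : p.1.2 = 0
  · simp [scaledMap, hp]
  · simp only [scaledMap, dif_neg hp, inv_smul_smul₀ hp, Subtype.coe_eta, hh _, smul_inv_smul₀ hp]

lemma nonempty_scaledSlices_homeomorph (h : Z ≃ₜ W) (hC : ∀ z, ‖(h z - z : E)‖ ≤ C) :
    Nonempty (scaledSlices Z ≃ₜ scaledSlices W) := by
  have hC' : ∀ w, ‖(h.symm w - w : E)‖ ≤ C := fun w => by
    simpa [norm_sub_rev] using hC (h.symm w)
  have hτ : ∀ {Z : Set E}, Continuous fun p : scaledSlices Z => p.1.2 := by fun_prop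
  exact ⟨⟨⟨fun p => ⟨_, scaledMap_mem_scaledSlices h p⟩,
    fun p => ⟨_, scaledMap_mem_scaledSlices h.symm p⟩,
    fun p => Subtype.ext (Prod.ext (scaledMap_scaledMap h.left_inv p) rfl),
    fun p => Subtype.ext (Prod.ext (scaledMap_scaledMap h.right_inv p) rfl)⟩,
    ((continuous_scaledMap (by fun_prop) hC).prodMk hτ).subtype_mk _,
    ((continuous_scaledMap (by fun_prop) hC').prodMk hτ).subtype_mk _⟩⟩

lemma nonempty_l2_prod_real_homeomorph_scaledSlices :
    Nonempty (ℓ²(ℕ, ℝ) × ℝ ≃ₜ scaledSlices ({0}ᶜ : Set ℓ²(ℕ, ℝ))) := by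
  obtain ⟨d, hd⟩ := exists_homeomorph_deletion
  obtain ⟨h⟩ := nonempty_scaledSlices_homeomorph (Z := ({0}ᶜ : Set ℓ²(ℕ, ℝ))) (W := univ)
    (d.trans (Homeomorph.Set.univ _).symm) hd
  have huniv : scaledSlices (univ : Set ℓ²(ℕ, ℝ)) = univ :=
    eq_univ_of_forall fun _ _ => mem_univ _
  exact ⟨((Homeomorph.setCongr huniv).trans (Homeomorph.Set.univ _)).symm.trans h.symm⟩

lemma mem_scaledSlices_compl_zero_iff {p : E × ℝ} :
    p ∈ scaledSlices ({0}ᶜ : Set E) ↔ (p.1 = 0 → p.2 = 0) := by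
  simp only [scaledSlices, mem_ofPred_eq, mem_compl_iff, mem_singleton_iff, smul_eq_zero,
    inv_eq_zero]
  tauto

/-- The vector in the direction of `x` whose norm is the exponential of the slope `τ / ‖x‖`. -/
def slopeVector (p : E × ℝ) : E := (Real.exp (p.2 / ‖p.1‖) * ‖p.1‖⁻¹) • p.1

/-- The point `(x, τ)` with `slopeVector (x, τ) = v` and `‖x‖ + |τ| = r`. -/
def slopePoint (v : E) (r : ℝ) : E × ℝ :=
  (((r / (1 + |Real.log ‖v‖|)) * ‖v‖⁻¹) • v, Real.log ‖v‖ * (r / (1 + |Real.log ‖v‖|)))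

lemma norm_mul_inv_norm_smul {c : ℝ} (hc : 0 ≤ c) {v : E} (hv : v ≠ 0) :
    ‖(c * ‖v‖⁻¹) • v‖ = c := by
  have hv' : ‖v‖ ≠ 0 := norm_ne_zero_iff.2 hv
  rw [norm_smul, Real.norm_of_nonneg (by positivity), inv_mul_cancel_right₀ hv']

lemma norm_slopeVector {p : E × ℝ} (hp : p.1 ≠ 0) : ‖slopeVector p‖ = Real.exp (p.2 / ‖p.1‖) :=
  norm_mul_inv_norm_smul (Real.exp_nonneg _) hp

lemma norm_slopePoint_fst {v : E} (hv : v ≠ 0) {r : ℝ} (hr : 0 ≤ r) :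
    ‖(slopePoint v r).1‖ = r / (1 + |Real.log ‖v‖|) :=
  norm_mul_inv_norm_smul (by positivity) hv

lemma slopeVector_ne_zero {p : E × ℝ} (hp : p.1 ≠ 0) : slopeVector p ≠ 0 := by
  rw [← norm_pos_iff, norm_slopeVector hp]
  exact Real.exp_pos _

lemma slopePoint_fst_ne_zero {v : E} (hv : v ≠ 0) {r : ℝ} (hr : 0 < r) :
    (slopePoint v r).1 ≠ 0 := by
  rw [← norm_pos_iff, norm_slopePoint_fst hv hr.le]
  positivity

lemma slopePoint_slopeVector {p : E × ℝ} (hp : p.1 ≠ 0) :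
    slopePoint (slopeVector p) (‖p.1‖ + |p.2|) = p := by
  have : 0 < ‖p.1‖ := norm_pos_iff.2 hp
  have hnorm : (‖p.1‖ + |p.2|) / (1 + |Real.log ‖slopeVector p‖|) = ‖p.1‖ := by
    rw [norm_slopeVector hp, Real.log_exp, abs_div, abs_norm]
    field_simp
  refine Prod.ext ?_ ?_
  · rw [slopePoint, hnorm, norm_slopeVector hp, slopeVector, smul_smul]
    convert one_smul ℝ p.1 using 2
    field_simp
  · rw [slopePoint, hnorm, norm_slopeVector hp, Real.log_exp]
    field_simp

lemma slopeVector_slopePoint {v : E} (hv : v ≠ 0) {r : ℝ} (hr : 0 < r) :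
    slopeVector (slopePoint v r) = v := by
  have hv' : 0 < ‖v‖ := norm_pos_iff.2 hv
  rw [slopeVector, norm_slopePoint_fst hv hr.le, slopePoint, mul_div_cancel_right₀ _
    (by positivity), Real.exp_log hv', smul_smul]
  convert one_smul ℝ v using 2
  field_simp

lemma norm_add_abs_slopePoint {v : E} (hv : v ≠ 0) {r : ℝ} (hr : 0 < r) :
    ‖(slopePoint v r).1‖ + |(slopePoint v r).2| = r := by
  have hpos : 0 ≤ r / (1 + |Real.log ‖v‖|) := by positivity
  rw [norm_slopePoint_fst hv hr.le, slopePoint, abs_mul, abs_of_nonneg hpos]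
  field_simp

/-- `(E ∖ {0}) × ℝ ≃ₜ (E ∖ {0}) × (0, ∞)` via `(x, τ) ↦ (slopeVector (x, τ), ‖x‖ + |τ|)`. -/
def offAxisHomeomorph (E : Type*) [NormedAddCommGroup E] [NormedSpace ℝ E] :
    {p : E × ℝ // p.1 ≠ 0} ≃ₜ {v : E // v ≠ 0} × Ioi (0 : ℝ) where
  toFun p := (⟨slopeVector p.1, slopeVector_ne_zero p.2⟩, ⟨‖p.1.1‖ + |p.1.2|,
    mem_Ioi.2 (add_pos_of_pos_of_nonneg (norm_pos_iff.2 p.2) (abs_nonneg _))⟩)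
  invFun q := ⟨slopePoint q.1.1 q.2, slopePoint_fst_ne_zero q.1.2 q.2.2⟩
  left_inv p := Subtype.ext (slopePoint_slopeVector p.2)
  right_inv q := Prod.ext (Subtype.ext (slopeVector_slopePoint q.1.2 q.2.2))
    (Subtype.ext (norm_add_abs_slopePoint q.1.2 q.2.2))
  continuous_toFun := by
    have hp : ∀ p : {p : E × ℝ // p.1 ≠ 0}, ‖p.1.1‖ ≠ 0 := fun p => norm_ne_zero_iff.2 p.2
    unfold slopeVector
    fun_prop (disch := assumption)
  continuous_invFun := by
    have hv : ∀ q : {v : E // v ≠ 0} × Ioi (0 : ℝ), ‖q.1.1‖ ≠ 0 :=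
      fun q => norm_ne_zero_iff.2 q.1.2
    have hlog : ∀ q : {v : E // v ≠ 0} × Ioi (0 : ℝ), 1 + |Real.log ‖q.1.1‖| ≠ 0 :=
      fun q => by positivity
    unfold slopePoint
    fun_prop (disch := assumption)

/-- `E × ℝ` with the axis `{0} × (ℝ ∖ {0})` removed. -/
abbrev OffPuncturedAxis (E : Type*) [NormedAddCommGroup E] [NormedSpace ℝ E] : Type _ :=
  scaledSlices ({0}ᶜ : Set E)

/-- The origin of `OffPuncturedAxis E`. -/
def offPuncturedAxisOrigin (E : Type*) [NormedAddCommGroup E] [NormedSpace ℝ E] :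
    OffPuncturedAxis E := ⟨0, mem_scaledSlices_compl_zero_iff.2 fun _ => rfl⟩

lemma ne_offPuncturedAxisOrigin_iff {p : OffPuncturedAxis E} :
    p ≠ offPuncturedAxisOrigin E ↔ p.1.1 ≠ 0 := by
  refine not_congr ⟨fun h => by rw [h]; rfl, fun h => Subtype.ext (Prod.ext h ?_)⟩
  exact mem_scaledSlices_compl_zero_iff.1 p.2 h

/-- Away from the origin, `OffPuncturedAxis E` is the complement of a full line. -/
def offPuncturedAxisHomeomorph (E : Type*) [NormedAddCommGroup E] [NormedSpace ℝ E] :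
    {p // p ≠ offPuncturedAxisOrigin E} ≃ₜ {p : E × ℝ // p.1 ≠ 0} where
  toFun p := ⟨p.1.1, ne_offPuncturedAxisOrigin_iff.1 p.2⟩
  invFun p := ⟨⟨p.1, mem_scaledSlices_compl_zero_iff.2 fun h => absurd h p.2⟩,
    ne_offPuncturedAxisOrigin_iff.2 p.2⟩
  left_inv _ := rfl
  right_inv _ := rfl
  continuous_toFun := by fun_prop
  continuous_invFun := by fun_prop

lemma comap_norm_add_abs_le_nhds :
    comap (fun p : OffPuncturedAxis E => ‖p.1.1‖ + |p.1.2|) (𝓝 0) ≤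
      𝓝 (offPuncturedAxisOrigin E) := by
  rw [nhds_induced, ← tendsto_iff_comap]
  exact squeeze_zero_norm (fun p => max_le_add_of_nonneg (norm_nonneg _) (abs_nonneg _))
    tendsto_comap

theorem nonempty_l2_prod_Ici_homeomorph : Nonempty (ℓ²(ℕ, ℝ) × Ici (0 : ℝ) ≃ₜ ℓ²(ℕ, ℝ)) := by
  obtain ⟨pow⟩ := nonempty_l2_pow_homeomorph
  obtain ⟨slices⟩ := nonempty_l2_prod_real_homeomorph_scaledSlices
  obtain ⟨d, -⟩ := exists_homeomorph_deletion
  obtain ⟨cone⟩ := nonempty_pow_prod_homeomorph_Ici (F := ℓ²(ℕ, ℝ))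
    (ρ := fun p : OffPuncturedAxis ℓ²(ℕ, ℝ) => ‖p.1.1‖ + |p.1.2|)
    (φ := (offPuncturedAxisHomeomorph _).trans <|
      (offAxisHomeomorph _).trans (d.prodCongr (Homeomorph.refl _)))
    (by fun_prop) (by simp [offPuncturedAxisOrigin]) comap_norm_add_abs_le_nhds fun _ => rfl
  have e : ℓ²(ℕ, ℝ) × Ici (0 : ℝ) ≃ₜ (ℕ → ℓ²(ℕ, ℝ)) × ℓ²(ℕ, ℝ) × ℝ :=
    (pow.symm.prodCongr (Homeomorph.refl _)).trans <| cone.symm.trans <|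
      (Homeomorph.refl _).prodCongr slices.symm
  exact ⟨e.trans <| (Homeomorph.prodAssoc _ _ _).symm.trans <|
    (((Homeomorph.prodComm _ _).trans ((seqConsHomeomorph _).trans pow)).prodCongr
      (Homeomorph.refl _)).trans <| (Homeomorph.prodComm _ _).trans l2ConsHomeomorph⟩

end HalfSpace

/-! ### Absorption of the Hilbert cube by `ℓ₂(ι)` -/

section Strip

lemma max_one_pos (s : ℝ) : 0 < max 1 s := lt_max_of_lt_left one_pos

lemma abs_mul_max_one_le {t y : ℝ} (ht : |t| ≤ 1) (hy : 0 ≤ y) :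
    |t * max 1 (y + |t|)| ≤ y + |t| := by
  rw [abs_mul, abs_of_pos (max_one_pos _), mul_max_of_nonneg _ _ (abs_nonneg t), mul_one]
  exact max_le (by linarith) (mul_le_of_le_one_left (by positivity) ht)

lemma abs_div_max_one_le_one (a : ℝ) {b : ℝ} (hb : 0 ≤ b) : |a / max 1 (|a| + b)| ≤ 1 := by
  rw [abs_div, abs_of_pos (max_one_pos _), div_le_one (max_one_pos _)]
  exact le_max_of_le_right (by linarith)

lemma abs_div_max_one_le (a s : ℝ) : |a / max 1 s| ≤ |a| := by
  rw [abs_div, abs_of_pos (max_one_pos _)]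
  exact div_le_self (abs_nonneg a) (le_max_left _ _)

/-- The half-strip `[-1, 1] × [0, ∞)` is a half-plane: on each level of the `ℓ¹`-norm
`s = |t| + y`, the coordinate `t` is stretched by the factor `max 1 s`. -/
def stripHomeomorph : Icc (-1 : ℝ) 1 × Ici (0 : ℝ) ≃ₜ ℝ × Ici (0 : ℝ) where
  toFun p := (p.1 * max 1 (p.2 + |p.1.1|), ⟨p.2 + |p.1.1| - |p.1 * max 1 (p.2 + |p.1.1|)|,
    mem_Ici.2 (sub_nonneg.2 (abs_mul_max_one_le (abs_le.2 p.1.2) p.2.2))⟩)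
  invFun q := (⟨q.1 / max 1 (|q.1| + q.2), mem_Icc.2 (abs_le.1 (abs_div_max_one_le_one q.1 q.2.2))⟩,
    ⟨|q.1| + q.2 - |q.1 / max 1 (|q.1| + q.2)|, mem_Ici.2 <| sub_nonneg.2 <|
      (abs_div_max_one_le _ _).trans (le_add_of_nonneg_right q.2.2)⟩)
  left_inv p := by simp [mul_div_cancel_right₀ _ (max_one_pos _).ne']
  right_inv q := by simp [div_mul_cancel₀ _ (max_one_pos _).ne']
  continuous_toFun := by fun_prop
  continuous_invFun := by
    have hpos : ∀ q : ℝ × Ici (0 : ℝ), max 1 (|q.1| + q.2) ≠ 0 := fun q => (max_one_pos _).ne'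
    fun_prop (disch := assumption)

end Strip

lemma nonempty_unitInterval_prod_l2_homeomorph :
    Nonempty (unitInterval × ℓ²(ℕ, ℝ) ≃ₜ ℓ²(ℕ, ℝ)) := by
  obtain ⟨half⟩ := nonempty_l2_prod_Ici_homeomorph
  exact ⟨((iccHomeoI (-1 : ℝ) 1 (by norm_num)).symm.prodCongr
      (half.symm.trans (Homeomorph.prodComm _ _))).trans <|
    (Homeomorph.prodAssoc _ _ _).symm.trans <|
    (stripHomeomorph.prodCongr (Homeomorph.refl _)).trans <|
    (Homeomorph.prodAssoc _ _ _).trans <|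
    ((Homeomorph.refl ℝ).prodCongr ((Homeomorph.prodComm _ _).trans half)).trans l2ConsHomeomorph⟩

lemma nonempty_hilbertCube_prod_l2Nat_homeomorph :
    Nonempty (HilbertCube × ℓ²(ℕ, ℝ) ≃ₜ ℓ²(ℕ, ℝ)) := by
  obtain ⟨interval⟩ := nonempty_unitInterval_prod_l2_homeomorph
  obtain ⟨pow⟩ := nonempty_l2_pow_homeomorph
  exact ⟨((Homeomorph.refl _).prodCongr pow.symm).trans <| (arrowProdHomeomorph _ _ _).symm.trans <|
    (Homeomorph.piCongrRight fun _ => interval).trans pow⟩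

theorem nonempty_hilbertCube_prod_l2_homeomorph (ι : Type u) [Infinite ι] :
    Nonempty (HilbertCube × ℓ²(ι, ℝ) ≃ₜ ℓ²(ι, ℝ)) := by
  obtain ⟨cube⟩ := nonempty_hilbertCube_prod_l2Nat_homeomorph
  obtain ⟨σ⟩ : Nonempty (ι ≃ ℕ ⊕ ι) := Cardinal.eq.1 <| by
    simpa using (Cardinal.add_eq_right (Cardinal.aleph0_le_mk ι) (Cardinal.aleph0_le_mk ι)).symm
  let split : ℓ²(ι, ℝ) ≃ₜ ℓ²(ℕ, ℝ) × ℓ²(ι, ℝ) :=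
    (l2Reindex σ).toHomeomorph.trans (l2SumHomeomorph ℕ ι)
  exact ⟨((Homeomorph.refl _).prodCongr split).trans <| (Homeomorph.prodAssoc _ _ _).symm.trans <|
    (cube.prodCongr (Homeomorph.refl _)).trans split.symm⟩

/-! ### Extension of maps and shears -/

section Extension

variable {D X E : Type*} [PseudoMetricSpace X] {k : D → X}

lemma eventually_image_dist_lt_subset [TopologicalSpace D] [TopologicalSpace E] {f : D → E}
    (hf : Continuous f) (hk : IsInducing k) {d₀ : D} {U : Set E} (hU : U ∈ 𝓝 (f d₀)) :
    ∀ᶠ x in 𝓝 (k d₀), (∀ d, k d = x → f d ∈ U) ∧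
      f '' {d | dist x (k d) < 2 * Metric.infDist x (range k)} ⊆ U := by
  obtain ⟨W, hW, hWU⟩ := mem_comap.1 (hk.nhds_eq_comap d₀ ▸ hf.continuousAt.preimage_mem_nhds hU)
  obtain ⟨δ, hδ, hδW⟩ := Metric.mem_nhds_iff.1 hW
  filter_upwards [Metric.ball_mem_nhds (k d₀) (show 0 < δ / 3 by positivity)] with x hx
  rw [Metric.mem_ball] at hx
  refine ⟨fun d hd => hWU (hδW ?_), ?_⟩
  · rw [Metric.mem_ball, hd]
    linarith
  · rintro _ ⟨d, hd : dist x (k d) < _, rfl⟩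
    refine hWU (hδW (Metric.mem_ball.2 ?_))
    have hinf : Metric.infDist x (range k) ≤ dist x (k d₀) :=
      Metric.infDist_le_dist_of_mem (mem_range_self d₀)
    linarith [dist_triangle_left (k d) (k d₀) x]

variable [AddCommGroup E] [Module ℝ E]

/- The values are averages of values of `f` at almost nearest points. -/
lemma exists_continuous_forall_mem_convexHull_image [TopologicalSpace E] [ContinuousAdd E]
    [ContinuousSMul ℝ E] [Nonempty D] (hk : IsClosed (range k)) (f : D → E) :
    ∃ g : C(((range k)ᶜ : Set X), E), ∀ x, g x ∈
      convexHull ℝ (f '' {d | dist x.1 (k d) < 2 * Metric.infDist x.1 (range k)}) := by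
  refine exists_continuous_forall_mem_convex_of_local_const (fun _ => convex_convexHull ℝ _)
    fun x => ?_
  have hpos : 0 < Metric.infDist x.1 (range k) :=
    (hk.notMem_iff_infDist_pos (range_nonempty k)).1 x.2
  obtain ⟨_, ⟨d, rfl⟩, hd⟩ := (Metric.infDist_lt_iff (range_nonempty k)
    (r := 2 * Metric.infDist x.1 (range k))).1 (by linarith)
  have hopen : IsOpen {y : ((range k)ᶜ : Set X) |
      dist y.1 (k d) < 2 * Metric.infDist y.1 (range k)} := by
    refine isOpen_lt (by fun_prop) (continuous_const.mul ?_)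
    exact (Metric.continuous_infDist_pt _).comp continuous_subtype_val
  refine ⟨f d, ?_⟩
  filter_upwards [hopen.mem_nhds hd] with y hy
  exact subset_convexHull ℝ _ ⟨d, hy, rfl⟩

/-- **Dugundji's extension theorem**. -/
theorem exists_continuous_extension_of_isClosedEmbedding [TopologicalSpace D]
    [TopologicalSpace E] [IsTopologicalAddGroup E] [ContinuousSMul ℝ E]
    [LocallyConvexSpace ℝ E] (hk : IsClosedEmbedding k) {f : D → E} (hf : Continuous f) {C : Set E}
    (hC : Convex ℝ C) (hne : C.Nonempty) (hfC : ∀ d, f d ∈ C) :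
    ∃ F : X → E, Continuous F ∧ (∀ x, F x ∈ C) ∧ ∀ d, F (k d) = f d := by
  classical
  rcases isEmpty_or_nonempty D with hD | hD
  · obtain ⟨c, hc⟩ := hne
    exact ⟨fun _ => c, continuous_const, fun _ => hc, fun d => hD.elim d⟩
  obtain ⟨g, hg⟩ := exists_continuous_forall_mem_convexHull_image hk.isClosed_range f
  let F : X → E := fun x => if hx : x ∈ range k then f hx.choose else g ⟨x, hx⟩
  have hFk : ∀ d, F (k d) = f d := fun d => by
    have hd : k d ∈ range k := mem_range_self d
    simp only [F, dif_pos hd, hk.injective hd.choose_spec]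
  have hFg : ∀ x (hx : x ∉ range k), F x = g ⟨x, hx⟩ := fun x hx => dif_neg hx
  have hF_mem : ∀ (x : X) {S : Set E}, Convex ℝ S → (∀ d, k d = x → f d ∈ S) →
      f '' {d | dist x (k d) < 2 * Metric.infDist x (range k)} ⊆ S → F x ∈ S := by
    intro x S hS hon hoff
    by_cases hx : x ∈ range k
    · obtain ⟨d, rfl⟩ := hx
      rw [hFk]
      exact hon d rfl
    · rw [hFg x hx]
      exact convexHull_min hoff hS (hg ⟨x, hx⟩)
  refine ⟨F, ?_, fun x => hF_mem x hC (fun d _ => hfC d) ?_, hFk⟩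
  · refine continuous_of_continuousOn_of_forall_notMem_continuousAt hk.isClosed_range.isOpen_compl
      ?_ fun x hx => ?_
    · rw [continuousOn_iff_continuous_domRestrict]
      exact g.continuous.congr fun x => (hFg x x.2).symm
    · obtain ⟨d₀, rfl⟩ := not_not.1 hx
      rw [ContinuousAt, hFk]
      refine (LocallyConvexSpace.convex_basis (𝕜 := ℝ) (f d₀)).tendsto_right_iff.2
        fun U ⟨hU, hUC⟩ => ?_
      filter_upwards [eventually_image_dist_lt_subset hf hk.isInducing hU] with x hx
      exact hF_mem x hUC hx.1 hx.2
  · rintro _ ⟨d, -, rfl⟩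
    exact hfC d

end Extension

section Shear

variable {E F : Type*} [NormedAddCommGroup E] [NormedSpace ℝ E] [NormedAddCommGroup F]
  [NormedSpace ℝ F] {P : E →L[ℝ] F} {μ : E → ℝ} {M : ℝ}

/-- The displacement of `T` at `x` is a vector of `ker P` of norm at most `M`, damped by the
factor `μ x`. -/
def IsDampedShear (P : E →L[ℝ] F) (μ : E → ℝ) (M : ℝ) (T : E → E) : Prop :=
  ∀ x, ∃ v, ‖v‖ ≤ M ∧ P v = 0 ∧ T x = x + μ x • v

namespace IsDampedShear

variable {T : E → E}

lemma map_apply (hT : IsDampedShear P μ M T) (x : E) : P (T x) = P x := by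
  obtain ⟨v, -, hv, hx⟩ := hT x
  rw [hx, map_add, map_smul, hv, smul_zero, add_zero]

lemma apply_eq_self (hT : IsDampedShear P μ M T) {x : E} (hx : μ x = 0) : T x = x := by
  obtain ⟨v, -, -, hTx⟩ := hT x
  rw [hTx, hx, zero_smul, add_zero]

lemma norm_apply_sub_le (hT : IsDampedShear P μ M T) (hμ : ∀ x, ‖μ x‖ ≤ 1) (x : E) :
    ‖T x - x‖ ≤ M := by
  obtain ⟨v, hv, -, hx⟩ := hT x
  rw [hx, add_sub_cancel_left, norm_smul]
  exact (mul_le_of_le_one_left (norm_nonneg v) (hμ x)).trans hv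

end IsDampedShear

variable [CompleteSpace E] {L : NNReal}

/- The preimage of `y` is the fixed point of the contraction `x ↦ y - μ x • φ (P y)`. -/
lemma exists_homeomorph_shear (hμ : LipschitzWith L μ) {φ : F → E} (hφ : Continuous φ)
    (hP : ∀ x, P (φ x) = 0) (hM : ∀ x, ‖φ x‖ ≤ M) (hLM : L * M < 1) :
    ∃ T : E ≃ₜ E, ∀ x, T x = x + μ x • φ (P x) := by
  have hμc := hμ.continuous
  have hcontr : ∀ y, ContractingWith (L * M).toNNReal fun x => y - μ x • φ (P y) := fun y => by
    refine ⟨Real.toNNReal_lt_one.2 hLM, LipschitzWith.of_dist_le_mul fun x x' => ?_⟩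
    rw [dist_eq_norm, sub_sub_sub_cancel_left, ← sub_smul, norm_smul, ← dist_eq_norm, dist_comm]
    calc dist (μ x) (μ x') * ‖φ (P y)‖ ≤ (L * dist x x') * M :=
          mul_le_mul (hμ.dist_le_mul x x') (hM _) (norm_nonneg _) (by positivity)
      _ = (L * M) * dist x x' := by ring
      _ ≤ (L * M).toNNReal * dist x x' := by gcongr; exact Real.le_coe_toNNReal _
  have hs := continuous_fixedPoint_of_contractingWith hcontr fun x => by fun_prop
  have hfix : ∀ y, y - μ _ • φ (P y) = (hcontr y).fixedPoint := fun y =>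
    (hcontr y).fixedPoint_isFixedPt
  refine ⟨⟨⟨fun x => x + μ x • φ (P x), fun y => (hcontr y).fixedPoint, fun x => ?_, fun y => ?_⟩,
    by fun_prop, hs⟩, fun x => rfl⟩
  · refine ((hcontr _).fixedPoint_unique ?_).symm
    simp [Function.IsFixedPt, hP]
  · have hPs : P (hcontr y).fixedPoint = P y := by
      rw [← hfix y]
      simp [hP]
    change _ + μ _ • φ (P (hcontr y).fixedPoint) = y
    rw [hPs, ← eq_sub_iff_add_eq, hfix]

lemma exists_isDampedShear (hμ : LipschitzWith L μ) (hM : 0 ≤ M) (hLM : L * M < 1) {D : Type*}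
    [TopologicalSpace D] {k : D → F} (hk : IsClosedEmbedding k) {f : D → E} (hf : Continuous f)
    (hfP : ∀ d, P (f d) = 0) (hfM : ∀ d, ‖f d‖ ≤ M) :
    ∃ T : E ≃ₜ E, IsDampedShear P μ M T ∧ ∀ d x, P x = k d → T x = x + μ x • f d := by
  obtain ⟨φ, hφ, hφC, hφk⟩ := exists_continuous_extension_of_isClosedEmbedding hk hf
    ((convex_closedBall 0 M).inter P.ker.convex) ⟨0, by simp [hM], by simp⟩
    (fun d => ⟨by simpa using hfM d, by simpa using hfP d⟩)
  have hφM : ∀ x, ‖φ x‖ ≤ M := fun x => by simpa using (hφC x).1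
  have hφP : ∀ x, P (φ x) = 0 := fun x => by simpa using (hφC x).2
  obtain ⟨T, hT⟩ := exists_homeomorph_shear hμ hφ hφP hφM hLM
  exact ⟨T, fun x => ⟨φ (P x), hφM _, hφP _, hT x⟩, fun d x hx => by rw [hT, hx, hφk]⟩

end Shear

section Collar

variable {X : Type*} [PseudoMetricSpace X] {K : Set X} {δ a : ℝ} {x : X}

/-- The cut-off that is `1` at distance at most `(a - 1) * δ` from `K`, is `0` at distance at least
`a * δ`, and is affine in the distance in between. -/
def collarCutoff (K : Set X) (δ a : ℝ) (x : X) : ℝ :=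
  projIcc 0 1 zero_le_one (a - Metric.infDist x K / δ)

lemma norm_collarCutoff_le_one (K : Set X) (δ a : ℝ) (x : X) : ‖collarCutoff K δ a x‖ ≤ 1 := by
  obtain ⟨h₀, h₁⟩ := (projIcc (0 : ℝ) 1 zero_le_one (a - Metric.infDist x K / δ)).2
  rwa [collarCutoff, Real.norm_of_nonneg h₀]

lemma collarCutoff_eq_one (hδ : 0 < δ) (h : Metric.infDist x K ≤ (a - 1) * δ) :
    collarCutoff K δ a x = 1 := by
  rw [← div_le_iff₀ hδ] at h
  rw [collarCutoff, projIcc_of_right_le _ (by linarith)]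

lemma collarCutoff_eq_zero (hδ : 0 < δ) (h : a * δ ≤ Metric.infDist x K) :
    collarCutoff K δ a x = 0 := by
  rw [← le_div_iff₀ hδ] at h
  rw [collarCutoff, projIcc_of_le_left _ (by linarith)]

lemma lipschitzWith_collarCutoff (hδ : 0 < δ) (K : Set X) (a : ℝ) :
    LipschitzWith δ⁻¹.toNNReal (collarCutoff K δ a) := by
  refine LipschitzWith.of_dist_le_mul fun x y => ?_
  rw [Real.coe_toNNReal _ (by positivity), Real.dist_eq]
  calc |collarCutoff K δ a x - collarCutoff K δ a y|
      ≤ |(a - Metric.infDist x K / δ) - (a - Metric.infDist y K / δ)| :=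
        abs_projIcc_sub_projIcc zero_le_one
    _ = δ⁻¹ * |Metric.infDist x K - Metric.infDist y K| := by
        rw [sub_sub_sub_cancel_left, ← sub_div, abs_div, abs_of_pos hδ, abs_sub_comm,
          div_eq_inv_mul]
    _ ≤ δ⁻¹ * dist x y := by
        gcongr
        simpa [Real.dist_eq] using (Metric.lipschitz_infDist_pt K).dist_le_mul x y

end Collar

section Klee

variable {E : Type*} [NormedAddCommGroup E] [InnerProductSpace ℝ E] [CompleteSpace E]
  {V : Submodule ℝ E} [V.HasOrthogonalProjection] {D : Type*} [TopologicalSpace D] [CompactSpace D]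
  {i h k : D → E} {η δ : ℝ}

lemma inv_toNNReal_mul_lt_one {δ M : ℝ} (hδ : 0 < δ) (hM : M < δ) : δ⁻¹.toNNReal * M < 1 := by
  rwa [Real.coe_toNNReal _ (by positivity), inv_mul_lt_iff₀ hδ, mul_one]

lemma exists_isDampedShear_eq_starProjection_add (hi : Continuous i) (hk : Continuous k)
    (hη : 0 < η) (hδ : 2 * η < δ) (hkV : ∀ d, k d ∈ V) (hkn : ∀ d, ‖k d‖ ≤ η / 2)
    (hiV : ∀ d, ‖V.starProjection (i d)‖ ≤ 3 / 2 * η)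
    (hii : Function.Injective fun d => Vᗮ.starProjection (i d)) (K : Set E) :
    ∃ g : E ≃ₜ E, IsDampedShear Vᗮ.starProjection (collarCutoff K δ 4) (2 * η) g ∧
      ∀ d, Metric.infDist (i d) K ≤ 3 * δ → g (i d) = Vᗮ.starProjection (i d) + k d := by
  have hδ₀ : 0 < δ := by linarith
  obtain ⟨g, hg, hgi⟩ := exists_isDampedShear (lipschitzWith_collarCutoff hδ₀ K 4) (by positivity)
    (inv_toNNReal_mul_lt_one hδ₀ hδ)
    ((by fun_prop : Continuous fun d => Vᗮ.starProjection (i d)).isClosedEmbedding hii)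
    (f := fun d => k d - V.starProjection (i d)) (by fun_prop)
    (fun d => V.starProjection_orthogonal_apply_eq_zero
      (V.sub_mem (hkV d) (V.starProjection_apply_mem _)))
    (fun d => (norm_sub_le _ _).trans (by linarith [hkn d, hiV d]))
  refine ⟨g, hg, fun d hd => ?_⟩
  rw [hgi d _ rfl, collarCutoff_eq_one hδ₀ (by linarith), one_smul]
  nth_rewrite 1 [← V.starProjection_add_starProjection_orthogonal (i d)]
  abel

lemma norm_symm_apply_apply_sub_le {E : Type*} [SeminormedAddCommGroup E] {g : E ≃ E} {s : E → E}
    {a b : ℝ} (hg : ∀ x, ‖g x - x‖ ≤ a) (hs : ∀ x, ‖s x - x‖ ≤ b) (x : E) :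
    ‖g.symm (s (g x)) - x‖ ≤ 2 * a + b := by
  set y := g.symm (s (g x))
  have hgy : g y = s (g x) := g.apply_symm_apply _
  calc ‖y - x‖ = ‖-(g y - y) + (s (g x) - g x) + (g x - x)‖ := by rw [hgy]; congr 1; abel
    _ ≤ ‖g y - y‖ + ‖s (g x) - g x‖ + ‖g x - x‖ := by
      simpa only [norm_neg] using norm_add₃_le (a := -(g y - y))
    _ ≤ 2 * a + b := by linarith [hg y, hs (g x), hg x]

/- Shear `i` along `V` to the graph of `k` over `Vᗮ`, then along `Vᗮ` over the points `k d ∈ V`,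
and undo the first shear. -/
lemma exists_homeomorph_starProjection_orthogonal_eq (hi : Continuous i) (hh : Continuous h)
    (hk : Continuous k) (hη : 0 < η) (hδ : 12 * η ≤ δ) (hki : Function.Injective k)
    (hkV : ∀ d, k d ∈ V) (hkn : ∀ d, ‖k d‖ ≤ η / 2)
    (hiV : ∀ d, ‖V.starProjection (i d)‖ ≤ 3 / 2 * η)
    (hii : Function.Injective fun d => Vᗮ.starProjection (i d)) (hhn : ∀ d, ‖h d - i d‖ ≤ η)
    (K : Set E) :
    ∃ z : E ≃ₜ E,
      (∀ d, i d ∈ K → Vᗮ.starProjection (z (i d)) = Vᗮ.starProjection (h d)) ∧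
      (∀ d, h d = i d → z (i d) = i d) ∧
      (∀ x, 4 * δ ≤ Metric.infDist x K → z x = x) ∧ ∀ x, ‖z x - x‖ ≤ 2 * (2 * η) + η := by
  have hδ₀ : 0 < δ := by linarith
  have hV : ∀ x, V.starProjection (Vᗮ.starProjection x) = 0 := fun x =>
    V.starProjection_apply_eq_zero_iff.2 (Vᗮ.starProjection_apply_mem x)
  obtain ⟨g, hg, hg_near⟩ :=
    exists_isDampedShear_eq_starProjection_add hi hk hη (by linarith) hkV hkn hiV hii K
  obtain ⟨s, hs, hsk⟩ := exists_isDampedShear (P := V.starProjection)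
    (lipschitzWith_collarCutoff hδ₀ K 2) hη.le (inv_toNNReal_mul_lt_one hδ₀ (by linarith))
    (hk.isClosedEmbedding hki) (f := fun d => Vᗮ.starProjection (h d - i d)) (by fun_prop)
    (fun d => hV _) (fun d => (Vᗮ.norm_starProjection_apply_le _).trans (hhn d))
  have hgn := hg.norm_apply_sub_le (norm_collarCutoff_le_one K δ 4)
  have hsg : ∀ d, Metric.infDist (i d) K ≤ 3 * δ → s (g (i d)) = g (i d) +
      collarCutoff K δ 2 (g (i d)) • Vᗮ.starProjection (h d - i d) := fun d hd => by
    refine hsk d _ ?_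
    rw [hg_near d hd, map_add, hV, zero_add, V.starProjection_eq_self_iff.2 (hkV d)]
  have hg_infDist : ∀ x, |Metric.infDist (g x) K - Metric.infDist x K| ≤ 2 * η := fun x => by
    have := (Metric.lipschitz_infDist_pt K).dist_le_mul (g x) x
    rw [NNReal.coe_one, one_mul, Real.dist_eq, dist_eq_norm] at this
    exact this.trans (hgn x)
  refine ⟨(g.trans s).trans g.symm, fun d hd => ?_, fun d hd => g.symm_apply_eq.2 ?_,
    fun x hx => g.symm_apply_eq.2 ?_, norm_symm_apply_apply_sub_le (g := g.toEquiv) hgn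
      (hs.norm_apply_sub_le (norm_collarCutoff_le_one K δ 2))⟩
  · have hd₀ := Metric.infDist_zero_of_mem hd
    rw [← hg.map_apply]
    change Vᗮ.starProjection (g (g.symm (s (g (i d))))) = _
    rw [g.apply_symm_apply, hsg d (by linarith), collarCutoff_eq_one hδ₀
      (by linarith [le_of_abs_le (hg_infDist (i d))]), one_smul, map_add, hg.map_apply,
      Vᗮ.starProjection_eq_self_iff.2 (Vᗮ.starProjection_apply_mem _), ← map_add,
      add_sub_cancel]
  · change s (g (i d)) = g (i d)
    by_cases hd₃ : Metric.infDist (i d) K ≤ 3 * δ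
    · rw [hsg d hd₃, hd, sub_self, map_zero, smul_zero, add_zero]
    · exact hs.apply_eq_self (collarCutoff_eq_zero hδ₀
        (by linarith [neg_le_of_abs_le (hg_infDist (i d))]))
  · change s (g x) = g x
    rw [hg.apply_eq_self (collarCutoff_eq_zero hδ₀ hx)]
    exact hs.apply_eq_self (collarCutoff_eq_zero hδ₀ (by linarith))

/- **Klee's trick**: once the `Vᗮ`-components agree, a shear along `V` carries the rest of the
displacement. -/
theorem exists_homeomorph_extending_displacement (hi : Continuous i) (hh : Continuous h)
    (hk : Continuous k) (hη : 0 < η) (hδ : 12 * η ≤ δ) (hki : Function.Injective k)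
    (hkV : ∀ d, k d ∈ V) (hkn : ∀ d, ‖k d‖ ≤ η / 2)
    (hiV : ∀ d, ‖V.starProjection (i d)‖ ≤ 3 / 2 * η)
    (hii : Function.Injective fun d => Vᗮ.starProjection (i d))
    (hhi : Function.Injective fun d => Vᗮ.starProjection (h d)) (hhn : ∀ d, ‖h d - i d‖ ≤ η)
    (K : Set E) :
    ∃ g : E ≃ₜ E, (∀ d, i d ∈ K → g (i d) = h d) ∧ (∀ d, h d = i d → g (i d) = i d) ∧
      (∀ x, 4 * δ ≤ Metric.infDist x K → g x = x) ∧ ∀ x, ‖g x - x‖ ≤ 11 * η := by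
  have hδ₀ : 0 < δ := by linarith
  obtain ⟨z, hzK, hzh, hz_far, hzn⟩ :=
    exists_homeomorph_starProjection_orthogonal_eq hi hh hk hη hδ hki hkV hkn hiV hii hhn K
  obtain ⟨s, hs, hsh⟩ := exists_isDampedShear (lipschitzWith_collarCutoff hδ₀ K 2) (M := 6 * η)
    (by positivity) (inv_toNNReal_mul_lt_one hδ₀ (by linarith))
    ((by fun_prop : Continuous fun d => Vᗮ.starProjection (h d)).isClosedEmbedding hhi)
    (f := fun d => V.starProjection (h d - z (i d))) (by fun_prop)
    (fun d => V.starProjection_orthogonal_apply_eq_zero (V.starProjection_apply_mem _))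
    (fun d => (V.norm_starProjection_apply_le _).trans <|
      calc ‖h d - z (i d)‖ = ‖(h d - i d) - (z (i d) - i d)‖ := by congr 1; abel
        _ ≤ ‖h d - i d‖ + ‖z (i d) - i d‖ := norm_sub_le _ _
        _ ≤ 6 * η := by linarith [hhn d, hzn (i d)])
  refine ⟨z.trans s, fun d hd => ?_, fun d hd => ?_, fun x hx => ?_, fun x => ?_⟩
  · have hnear : Metric.infDist (z (i d)) K ≤ (2 - 1) * δ :=
      calc Metric.infDist (z (i d)) K ≤ dist (z (i d)) (i d) := Metric.infDist_le_dist_of_mem hd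
        _ ≤ (2 - 1) * δ := by rw [dist_eq_norm]; linarith [hzn (i d)]
    have hV : V.starProjection (h d - z (i d)) = h d - z (i d) := by
      rw [← V.starProjection_add_starProjection_orthogonal (h d - z (i d)),
        map_sub Vᗮ.starProjection, hzK d hd, sub_self, add_zero]
      exact V.starProjection_eq_self_iff.2 (V.starProjection_apply_mem _)
    rw [Homeomorph.trans_apply, hsh d _ (hzK d hd), collarCutoff_eq_one hδ₀ hnear, one_smul, hV,
      add_sub_cancel]
  · rw [Homeomorph.trans_apply, hzh d hd, hsh d _ (by rw [hd]), hzh d hd, hd, sub_self, map_zero,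
      smul_zero, add_zero]
  · rw [Homeomorph.trans_apply, hz_far x hx]
    exact hs.apply_eq_self (collarCutoff_eq_zero hδ₀ (by linarith))
  · calc ‖s (z x) - x‖ = ‖(s (z x) - z x) + (z x - x)‖ := by rw [sub_add_sub_cancel]
      _ ≤ ‖s (z x) - z x‖ + ‖z x - x‖ := norm_add_le _ _
      _ ≤ 11 * η := by
        linarith [hs.norm_apply_sub_le (norm_collarCutoff_le_one K δ 2) (z x), hzn x]

end Klee

/-! ### Unknotting of compacta in `ℓ₂(ι)` -/

section Coordinates

variable {ι G : Type*} [NormedAddCommGroup G]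

lemma eventually_cofinite_forall_norm_apply_le {Δ : Set ℓ²(ι, G)} (hΔ : TotallyBounded Δ) {ε : ℝ}
    (hε : 0 < ε) : ∀ᶠ i in cofinite, ∀ x ∈ Δ, ‖x i‖ ≤ ε := by
  obtain ⟨t, ht, hΔt⟩ := Metric.totallyBounded_iff.1 hΔ (ε / 2) (by positivity)
  have hnet : ∀ᶠ i in cofinite, ∀ y ∈ t, ‖y i‖ < ε / 2 := ht.eventually_all.2 fun y _ => by
    have hlim := (l2_summable_norm_sq y).tendsto_cofinite_zero
    filter_upwards [hlim.eventually_lt_const (show (0 : ℝ) < (ε / 2) ^ 2 by positivity)] with i hi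
    exact lt_of_pow_lt_pow_left₀ 2 (by positivity) hi
  filter_upwards [hnet] with i hi x hx
  obtain ⟨y, hy, hxy⟩ := mem_iUnion₂.1 (hΔt hx)
  rw [Metric.mem_ball, dist_eq_norm] at hxy
  calc ‖x i‖ ≤ ‖y i‖ + ‖x i - y i‖ := norm_le_norm_add_norm_sub' _ _
    _ ≤ ‖y i‖ + ‖x - y‖ := by gcongr; exact l2_norm_apply_le (x - y) i
    _ ≤ ε := by linarith [hi y hy]

lemma exists_injective_forall_norm_apply_le [Infinite ι] {Δ : Set ℓ²(ι, G)}
    (hΔ : TotallyBounded Δ) {ε : ℕ → ℝ} (hε : ∀ n, 0 < ε n) :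
    ∃ c : ℕ → ι, Function.Injective c ∧ ∀ n, ∀ x ∈ Δ, ‖x (c n)‖ ≤ ε n := by
  let e := Infinite.natEmbedding ι
  have htail : ∀ n, ∀ᶠ k in atTop, ∀ x ∈ Δ, ‖x (e k)‖ ≤ ε n := fun n =>
    Nat.cofinite_eq_atTop ▸ e.injective.tendsto_cofinite.eventually
      (eventually_cofinite_forall_norm_apply_le hΔ (hε n))
  obtain ⟨k, hk, hkΔ⟩ := extraction_forall_of_eventually htail
  exact ⟨e ∘ k, e.injective.comp hk.injective, hkΔ⟩

lemma hasSum_geometric_prod_sq (C : ℝ) {r : ℝ} (hr₀ : 0 ≤ r) (hr₁ : r < 1) :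
    HasSum (fun p : ℕ × ℕ => (C * r ^ (p.1 + p.2)) ^ 2) ((C / (1 - r ^ 2)) ^ 2) := by
  have hsq : r ^ 2 < 1 := pow_lt_one₀ hr₀ hr₁ two_ne_zero
  have hgeom := hasSum_geometric_of_lt_one (by positivity) hsq
  have hprod := (hgeom.mul hgeom (hgeom.summable.mul_of_nonneg hgeom.summable
    (fun _ => by positivity) (fun _ => by positivity))).mul_left (C ^ 2)
  have hC : (C / (1 - r ^ 2)) ^ 2 = C ^ 2 * ((1 - r ^ 2)⁻¹ * (1 - r ^ 2)⁻¹) := by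
    rw [div_eq_mul_inv]
    ring
  have hterm : (fun p : ℕ × ℕ => (C * r ^ (p.1 + p.2)) ^ 2) =
      fun p => C ^ 2 * ((r ^ 2) ^ p.1 * (r ^ 2) ^ p.2) := by
    funext p
    ring
  rw [hC, hterm]
  exact hprod

lemma l2_norm_le_of_norm_apply_le_geometric {C r : ℝ} (hC : 0 ≤ C) (hr₀ : 0 ≤ r) (hr₁ : r < 1)
    {x : ℓ²(ℕ × ℕ, G)} (hx : ∀ p, ‖x p‖ ≤ C * r ^ (p.1 + p.2)) : ‖x‖ ≤ C / (1 - r ^ 2) := by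
  have hsum := hasSum_geometric_prod_sq C hr₀ hr₁
  have hr : 0 < 1 - r ^ 2 := sub_pos.2 (pow_lt_one₀ hr₀ hr₁ two_ne_zero)
  refine (sq_le_sq₀ (norm_nonneg _) (by positivity)).1 ?_
  rw [l2_norm_sq_eq_tsum, ← hsum.tsum_eq]
  exact (l2_summable_norm_sq x).tsum_le_tsum (fun p => by gcongr; exact hx p) hsum.summable

variable {α : Type*} {c : α → ι}

open Classical in
/-- The extension of a family in `ℓ²(α, G)` by zero along an injective map `α → ι`. -/
def l2Extend (c : α → ι) (hc : c.Injective) (x : ℓ²(α, G)) : ℓ²(ι, G) :=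
  l2mk (Function.extend c x 0) <| (hc.summable_iff fun i hi => by
    rw [Function.extend_apply' _ _ _ (by simpa using hi), Pi.zero_apply, norm_zero, zero_pow
      two_ne_zero]).1 <| by
    simpa only [Function.comp_def, hc.extend_apply] using l2_summable_norm_sq x

@[simp] lemma l2Extend_apply (hc : c.Injective) (x : ℓ²(α, G)) (a : α) :
    l2Extend c hc x (c a) = x a := hc.extend_apply _ _ _

lemma l2Extend_apply_of_notMem (hc : c.Injective) (x : ℓ²(α, G)) {i : ι} (hi : i ∉ range c) :
    l2Extend c hc x i = 0 := Function.extend_apply' _ _ _ hi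

lemma norm_l2Extend (hc : c.Injective) (x : ℓ²(α, G)) : ‖l2Extend c hc x‖ = ‖x‖ := by
  rw [l2_norm_eq_sqrt_tsum, l2_norm_eq_sqrt_tsum, ← hc.tsum_eq]
  · simp only [l2Extend_apply]
  · intro i hi
    by_contra hrange
    simp [l2Extend_apply_of_notMem hc x hrange] at hi

lemma isometry_l2Extend (hc : c.Injective) :
    Isometry (l2Extend c hc : ℓ²(α, G) → ℓ²(ι, G)) := Isometry.of_dist_eq fun x y => by
  have hsub : l2Extend c hc x - l2Extend c hc y = l2Extend c hc (x - y) := l2_ext fun i => by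
    by_cases hi : i ∈ range c
    · obtain ⟨a, rfl⟩ := hi
      simp
    · simp [l2Extend_apply_of_notMem hc _ hi]
  rw [dist_eq_norm, hsub, norm_l2Extend, dist_eq_norm]

end Coordinates

section GeometricSubspace

variable {ι : Type*} {c : ℕ × ℕ → ι}

/-- The subspace of `ℓ₂(ι)` spanned by the vectors with coordinates `2⁻ʲ` at the places `c (i, j)`,
`j ∈ ℕ`, and zero elsewhere. -/
def geometricSubspace (c : ℕ × ℕ → ι) : Submodule ℝ ℓ²(ι, ℝ) where
  carrier := {x | (∀ a ∉ range c, x a = 0) ∧ ∀ i j, x (c (i, j)) = (1 / 2) ^ j * x (c (i, 0))}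
  add_mem' := by
    rintro x y ⟨hx, hx'⟩ ⟨hy, hy'⟩
    refine ⟨fun a ha => ?_, fun i j => ?_⟩
    · rw [lp.coeFn_add, Pi.add_apply, hx a ha, hy a ha, add_zero]
    · rw [lp.coeFn_add, Pi.add_apply, Pi.add_apply, hx', hy', mul_add]
  zero_mem' := ⟨fun _ _ => rfl, fun _ _ => by simp⟩
  smul_mem' := by
    rintro r x ⟨hx, hx'⟩
    refine ⟨fun a ha => ?_, fun i j => ?_⟩
    · rw [lp.coeFn_smul, Pi.smul_apply, hx a ha, smul_zero]
    · rw [lp.coeFn_smul, Pi.smul_apply, Pi.smul_apply, hx', smul_eq_mul, smul_eq_mul,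
        mul_left_comm]

lemma isClosed_geometricSubspace (c : ℕ × ℕ → ι) :
    IsClosed (geometricSubspace c : Set ℓ²(ι, ℝ)) := by
  have h : (geometricSubspace c : Set ℓ²(ι, ℝ)) = (⋂ a, ⋂ (_ : a ∉ range c), {x | x a = 0}) ∩
      ⋂ i, ⋂ j, {x | x (c (i, j)) = (1 / 2) ^ j * x (c (i, 0))} := by
    ext x
    simp [geometricSubspace]
  rw [h]
  exact (isClosed_iInter fun a => isClosed_iInter fun _ =>
      isClosed_eq (l2_continuous_apply a) continuous_const).inter <|
    isClosed_iInter fun i => isClosed_iInter fun j =>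
      isClosed_eq (l2_continuous_apply _) (continuous_const.mul (l2_continuous_apply _))

instance completeSpace_geometricSubspace (c : ℕ × ℕ → ι) : CompleteSpace (geometricSubspace c) :=
  (isClosed_geometricSubspace c).completeSpace_coe

/- The Hilbert cube sits in the subspace as the vectors `∑ᵢ xᵢ 2⁻ⁱ ∑ⱼ 2⁻ʲ e_{c (i, j)}`. -/
lemma exists_embedding_geometricSubspace (hc : c.Injective) (D : Type*) [TopologicalSpace D]
    [TopologicalSpace.MetrizableSpace D] [TopologicalSpace.SeparableSpace D] {η : ℝ} (hη : 0 < η) :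
    ∃ k : D → ℓ²(ι, ℝ), Continuous k ∧ k.Injective ∧ (∀ d, k d ∈ geometricSubspace c) ∧
      ∀ d, ‖k d‖ ≤ η := by
  let := TopologicalSpace.metrizableSpaceMetric D
  obtain ⟨f, hf⟩ := Metric.PiNatEmbed.exists_embedding_to_hilbert_cube (X := D)
  have hsum := (hasSum_geometric_prod_sq (η / 2) one_half_pos.le one_half_lt_one).summable
  have hle : ∀ d (p : ℕ × ℕ), ‖η / 2 * (1 / 2) ^ (p.1 + p.2) * (f d p.1 : ℝ)‖ ≤
      η / 2 * (1 / 2) ^ (p.1 + p.2) := fun d p => by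
    rw [Real.norm_of_nonneg (mul_nonneg (by positivity) (f d p.1).2.1)]
    exact mul_le_of_le_one_right (by positivity) (f d p.1).2.2
  let x : D → ℓ²(ℕ × ℕ, ℝ) := fun d => l2mk (fun p => η / 2 * (1 / 2) ^ (p.1 + p.2) * f d p.1)
    (hsum.of_nonneg_of_le (fun p => by positivity) fun p => by gcongr; exact hle d p)
  have hx : Continuous x := by
    refine l2_continuous_of_dominated hsum hle fun p => continuous_const.mul ?_
    exact continuous_subtype_val.comp ((continuous_apply p.1).comp hf.continuous)
  refine ⟨fun d => l2Extend c hc (x d), (isometry_l2Extend hc).continuous.comp hx,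
    fun d d' h => hf.injective (funext fun n => Subtype.ext ?_), fun d => ⟨fun a ha =>
      l2Extend_apply_of_notMem hc _ ha, fun i j => ?_⟩, fun d => ?_⟩
  · have hn : x d (n, 0) = x d' (n, 0) := congrArg (fun y : ℓ²(ℕ × ℕ, ℝ) => y (n, 0))
      ((isometry_l2Extend hc).injective h)
    exact mul_left_cancel₀ (by positivity) hn
  · simp only [l2Extend_apply, x, l2mk_apply, pow_add]
    ring
  · rw [norm_l2Extend]
    refine (l2_norm_le_of_norm_apply_le_geometric (by positivity) (by norm_num) (by norm_num)
      (hle d)).trans ?_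
    rw [div_le_iff₀ (by norm_num)]
    linarith

/- The coordinates of a nonzero vector of the subspace decay like `2⁻ʲ` in some row, no faster. -/
lemma eq_zero_of_mem_geometricSubspace {η : ℝ} {x : ℓ²(ι, ℝ)}
    (hx : x ∈ geometricSubspace c) (hxc : ∀ p, |x (c p)| ≤ η * (1 / 4) ^ (p.1 + p.2)) : x = 0 := by
  have hrow : ∀ i, x (c (i, 0)) = 0 := fun i => by
    have hle : ∀ j : ℕ, |x (c (i, 0))| ≤ η * (1 / 4) ^ i * (1 / 2) ^ j := fun j => by
      have hj := hxc (i, j)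
      rw [hx.2 i j, abs_mul, abs_of_pos (by positivity)] at hj
      refine le_of_mul_le_mul_left (hj.trans_eq ?_) (show (0 : ℝ) < (1 / 2) ^ j by positivity)
      rw [show (1 / 4 : ℝ) ^ (i + j) = (1 / 4) ^ i * ((1 / 2) ^ j * (1 / 2) ^ j) by
        rw [pow_add, ← mul_pow (1 / 2 : ℝ)]; norm_num]
      ring
    have hlim : Tendsto (fun j : ℕ => η * (1 / 4) ^ i * (1 / 2 : ℝ) ^ j) atTop (𝓝 0) := by
      simpa using (tendsto_pow_atTop_nhds_zero_of_lt_one (r := (1 / 2 : ℝ)) (by norm_num)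
        (by norm_num)).const_mul (η * (1 / 4) ^ i)
    exact abs_nonpos_iff.1 (ge_of_tendsto' hlim hle)
  refine l2_ext fun a => ?_
  by_cases ha : a ∈ range c
  · obtain ⟨⟨i, j⟩, rfl⟩ := ha
    rw [hx.2, hrow, mul_zero]
    rfl
  · exact hx.1 a ha

lemma starProjection_geometricSubspace_eq (hc : c.Injective) (x : ℓ²(ι, ℝ)) :
    (geometricSubspace c).starProjection x =
      (geometricSubspace c).starProjection (l2Extend c hc (l2Restrict c hc x)) := by
  rw [← sub_eq_zero, ← map_sub, Submodule.starProjection_apply_eq_zero_iff,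
    Submodule.mem_orthogonal]
  intro v hv
  rw [lp.inner_eq_tsum]
  refine (tsum_congr fun a => ?_).trans tsum_zero
  rw [lp.coeFn_sub, Pi.sub_apply]
  by_cases ha : a ∈ range c
  · obtain ⟨p, rfl⟩ := ha
    rw [l2Extend_apply, l2Restrict_apply, sub_self, inner_zero_right]
  · rw [hv.1 a ha, inner_zero_left]

lemma norm_starProjection_geometricSubspace_le (hc : c.Injective) {η : ℝ} (hη : 0 ≤ η)
    {x : ℓ²(ι, ℝ)} (hx : ∀ p, |x (c p)| ≤ η * (1 / 4) ^ (p.1 + p.2)) :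
    ‖(geometricSubspace c).starProjection x‖ ≤ 3 / 2 * η :=
  calc ‖(geometricSubspace c).starProjection x‖
      ≤ ‖l2Extend c hc (l2Restrict c hc x)‖ := by
        rw [starProjection_geometricSubspace_eq hc]
        exact Submodule.norm_starProjection_apply_le _ _
    _ = ‖l2Restrict c hc x‖ := norm_l2Extend hc _
    _ ≤ η / (1 - (1 / 4) ^ 2) :=
        l2_norm_le_of_norm_apply_le_geometric hη (by norm_num) (by norm_num) hx
    _ ≤ 3 / 2 * η := by
        rw [div_le_iff₀ (by norm_num)]
        linarith

end GeometricSubspace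

section Unknotting

variable {ι : Type*} [Infinite ι]

/- Chooses `c` so that the points of `Δ` decay along `c` too fast to lie in the geometric
subspace. -/
lemma exists_closed_subspace_of_isCompact {Δ : Set ℓ²(ι, ℝ)} (hΔ : IsCompact Δ) {η : ℝ}
    (hη : 0 < η) (D : Type*) [TopologicalSpace D] [TopologicalSpace.MetrizableSpace D]
    [TopologicalSpace.SeparableSpace D] :
    ∃ V : Submodule ℝ ℓ²(ι, ℝ), ∃ _ : CompleteSpace V,
      (∀ x ∈ Δ, x ∈ V → x = 0) ∧ (∀ x ∈ Δ, ‖V.starProjection x‖ ≤ 3 / 2 * η) ∧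
      ∃ k : D → ℓ²(ι, ℝ), Continuous k ∧ k.Injective ∧ (∀ d, k d ∈ V) ∧ ∀ d, ‖k d‖ ≤ η / 2 := by
  obtain ⟨c, hc, hcΔ⟩ := exists_injective_forall_norm_apply_le hΔ.totallyBounded
    (ε := fun n => η * (1 / 4) ^ n) (fun n => by positivity)
  have hcΔ' : ∀ x ∈ Δ, ∀ p : ℕ × ℕ, |x (c (Nat.pairEquiv p))| ≤ η * (1 / 4) ^ (p.1 + p.2) := by
    intro x hx p
    refine (hcΔ _ x hx).trans ?_
    gcongr η * ?_
    exact pow_le_pow_of_le_one (by norm_num) (by norm_num) (Nat.add_le_pair p.1 p.2)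
  have hc' : (c ∘ Nat.pairEquiv).Injective := hc.comp Nat.pairEquiv.injective
  exact ⟨geometricSubspace (c ∘ Nat.pairEquiv), inferInstance,
    fun x hx hxV => eq_zero_of_mem_geometricSubspace hxV (hcΔ' x hx),
    fun x hx => norm_starProjection_geometricSubspace_le hc' hη.le (hcΔ' x hx),
    exists_embedding_geometricSubspace hc' D (by positivity)⟩

lemma injective_starProjection_orthogonal_comp {E D : Type*} [NormedAddCommGroup E]
    [InnerProductSpace ℝ E] {V : Submodule ℝ E} [V.HasOrthogonalProjection] {f : D → E}
    (hf : f.Injective) (hV : ∀ d d', f d - f d' ∈ V → f d - f d' = 0) :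
    Function.Injective fun d => Vᗮ.starProjection (f d) := fun d d' h => by
  refine hf (sub_eq_zero.1 (hV d d' ?_))
  have : Vᗮ.starProjection (f d - f d') = 0 := by rw [map_sub, sub_eq_zero]; exact h
  rwa [Submodule.starProjection_apply_eq_zero_iff, Submodule.orthogonal_orthogonal] at this

theorem exists_homeomorph_eqOn_displacement {K B : Set ℓ²(ι, ℝ)} (hK : IsCompact K)
    (hB : IsCompact B) {h : ↥(K ∪ B) → ℓ²(ι, ℝ)} (hh : Continuous h) (hhi : h.Injective)
    (hhB : ∀ d : ↥(K ∪ B), d.1 ∈ B → h d = d) {η δ : ℝ} (hη : 0 < η) (hδ : 12 * η ≤ δ)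
    (hhn : ∀ d : ↥(K ∪ B), ‖h d - d‖ ≤ η) :
    ∃ g : ℓ²(ι, ℝ) ≃ₜ ℓ²(ι, ℝ), (∀ d : ↥(K ∪ B), d.1 ∈ K → g d = h d) ∧ (∀ x ∈ B, g x = x) ∧
      (∀ x, 4 * δ ≤ Metric.infDist x K → g x = x) ∧ ∀ x, ‖g x - x‖ ≤ 11 * η := by
  have : CompactSpace ↥(K ∪ B) := isCompact_iff_compactSpace.1 (hK.union hB)
  let Δ : Set ℓ²(ι, ℝ) := (K ∪ B) ∪ (range (fun p : ↥(K ∪ B) × ↥(K ∪ B) => p.1.1 - p.2.1) ∪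
    range (fun p : ↥(K ∪ B) × ↥(K ∪ B) => h p.1 - h p.2))
  have hΔ : IsCompact Δ := (hK.union hB).union
    ((isCompact_range (by fun_prop)).union (isCompact_range (by fun_prop)))
  obtain ⟨V, _, hV, hVΔ, k, hk, hki, hkV, hkn⟩ :=
    exists_closed_subspace_of_isCompact hΔ hη ↥(K ∪ B)
  obtain ⟨g, hgK, hgB, hg_far, hgn⟩ := exists_homeomorph_extending_displacement
    continuous_subtype_val hh hk hη hδ hki hkV hkn (fun d => hVΔ _ (.inl d.2))
    (injective_starProjection_orthogonal_comp Subtype.val_injective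
      fun d d' => hV _ (.inr (.inl ⟨(d, d'), rfl⟩)))
    (injective_starProjection_orthogonal_comp hhi fun d d' => hV _ (.inr (.inr ⟨(d, d'), rfl⟩)))
    hhn K
  exact ⟨g, hgK, fun x hx => hgB ⟨x, .inr hx⟩ (hhB _ hx), hg_far, hgn⟩

end Unknotting

/-! ### Discrete families of compacta -/

universe u

/-- Every point has a closed neighbourhood whose intersection with `C` is compact; for closed `C`
in a regular space this means that the subspace `C` is locally compact. -/
def IsLocallyCompactTrace {X : Type*} [TopologicalSpace X] (C : Set X) : Prop :=
  ∀ x, ∃ N ∈ 𝓝 x, IsClosed N ∧ IsCompact (C ∩ N)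

/-- A discrete family of compacta `K i` together with a discrete family of open neighbourhoods
`W i` of them. -/
structure IsDiscreteCompactFamily {ι X : Type*} [TopologicalSpace X] (K W : ι → Set X) : Prop where
  isCompact : ∀ i, IsCompact (K i)
  isOpen : ∀ i, IsOpen (W i)
  subset : ∀ i, K i ⊆ W i
  discrete : ∀ x, ∃ N ∈ 𝓝 x, ∀ i j, (W i ∩ N).Nonempty → (W j ∩ N).Nonempty → i = j

/-- `A` is the union of a discrete family of compacta. -/
def IsDiscreteUnionOfCompacta {X : Type u} [TopologicalSpace X] (A : Set X) : Prop :=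
  ∃ (ι : Type u) (K W : ι → Set X), IsDiscreteCompactFamily K W ∧ A = ⋃ i, K i

namespace IsLocallyCompactTrace

variable {X : Type*}

section TopologicalSpace

variable [TopologicalSpace X] {C C' : Set X}

protected lemma empty : IsLocallyCompactTrace (∅ : Set X) := fun _ =>
  ⟨univ, univ_mem, isClosed_univ, by simp⟩

protected lemma union (h : IsLocallyCompactTrace C) (h' : IsLocallyCompactTrace C') :
    IsLocallyCompactTrace (C ∪ C') := fun x => by
  obtain ⟨N, hN, hNc, hCN⟩ := h x
  obtain ⟨N', hN', hNc', hCN'⟩ := h' x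
  refine ⟨N ∩ N', inter_mem hN hN', hNc.inter hNc', ?_⟩
  have hsplit : (C ∪ C') ∩ (N ∩ N') = C ∩ N ∩ N' ∪ C' ∩ N' ∩ N := by
    rw [union_inter_distrib_right, ← inter_assoc, inter_comm N N', ← inter_assoc]
  rw [hsplit]
  exact (hCN.inter_right hNc').union (hCN'.inter_right hNc)

protected lemma image (h : IsLocallyCompactTrace C) (g : X ≃ₜ X) :
    IsLocallyCompactTrace (g '' C) := fun x => by
  obtain ⟨N, hN, hNc, hCN⟩ := h (g.symm x)
  refine ⟨g '' N, ?_, g.isClosed_image.2 hNc, ?_⟩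
  · simpa using g.isOpenMap.image_mem_nhds hN
  · rw [← image_inter g.injective]
    exact hCN.image g.continuous

end TopologicalSpace

lemma exists_isCompact_inter_cthickening [PseudoMetricSpace X] {C K : Set X}
    (hC : IsLocallyCompactTrace C) (hK : IsCompact K) :
    ∃ r > 0, ∀ s ≤ r, IsCompact (C ∩ Metric.cthickening s K) := by
  choose N hN _ hCN using hC
  obtain ⟨t, -, ht⟩ := hK.elim_nhds_subcover (fun x => interior (N x))
    (fun x _ => interior_mem_nhds.2 (hN x))
  obtain ⟨r, hr, hrK⟩ := hK.exists_cthickening_subset_open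
    (isOpen_biUnion fun x _ => isOpen_interior) ht
  refine ⟨r, hr, fun s hs => ?_⟩
  have hsub : Metric.cthickening s K ⊆ ⋃ x ∈ t, N x := ((Metric.cthickening_mono hs K).trans
    hrK).trans (iUnion₂_mono fun x _ => interior_subset)
  have hcover : C ∩ Metric.cthickening s K =
      (⋃ x ∈ t, C ∩ N x) ∩ Metric.cthickening s K := by
    rw [← inter_iUnion₂, inter_assoc, inter_eq_self_of_subset_right hsub]
  rw [hcover]
  exact (t.isCompact_biUnion fun x _ => hCN x).inter_right Metric.isClosed_cthickening

end IsLocallyCompactTrace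

namespace IsDiscreteCompactFamily

variable {ι X : Type*}

section TopologicalSpace

variable [TopologicalSpace X] {K W : ι → Set X}

lemma eq_of_mem (h : IsDiscreteCompactFamily K W) {x : X} {i j : ι} (hi : x ∈ W i)
    (hj : x ∈ W j) : i = j := by
  obtain ⟨N, hN, hd⟩ := h.discrete x
  exact hd i j ⟨x, hi, mem_of_mem_nhds hN⟩ ⟨x, hj, mem_of_mem_nhds hN⟩

protected lemma image (h : IsDiscreteCompactFamily K W) (g : X ≃ₜ X) :
    IsDiscreteCompactFamily (fun i => g '' K i) (fun i => g '' W i) where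
  isCompact i := (h.isCompact i).image g.continuous
  isOpen i := g.isOpen_image.2 (h.isOpen i)
  subset i := image_mono (h.subset i)
  discrete x := by
    obtain ⟨N, hN, hd⟩ := h.discrete (g.symm x)
    refine ⟨g '' N, by simpa using g.isOpenMap.image_mem_nhds hN, fun i j hi hj => ?_⟩
    rw [← image_inter g.injective] at hi hj
    exact hd i j hi.of_image hj.of_image

lemma isLocallyCompactTrace [RegularSpace X] (h : IsDiscreteCompactFamily K W) :
    IsLocallyCompactTrace (⋃ i, K i) := fun x => by
  obtain ⟨N, hN, hd⟩ := h.discrete x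
  obtain ⟨N', hN', hNc', hNN'⟩ := exists_mem_nhds_isClosed_subset hN
  refine ⟨N', hN', hNc', ?_⟩
  have hsub : {i | (K i ∩ N').Nonempty}.Subsingleton := fun i hi j hj =>
    hd i j (hi.mono (inter_subset_inter (h.subset i) hNN'))
      (hj.mono (inter_subset_inter (h.subset j) hNN'))
  have htrace : (⋃ i, K i) ∩ N' = ⋃ i ∈ {i | (K i ∩ N').Nonempty}, K i ∩ N' := by
    rw [iUnion_inter]
    exact subset_antisymm (iUnion_subset fun i y hy => mem_biUnion ⟨y, hy⟩ hy)
      (iUnion₂_subset fun i _ => subset_iUnion (fun i => K i ∩ N') i)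
  rw [htrace]
  exact hsub.finite.isCompact_biUnion fun i _ => (h.isCompact i).inter_right hNc'

end TopologicalSpace

lemma of_pairwise_le_dist [PseudoMetricSpace X] {K : ι → Set X} (hK : ∀ i, IsCompact (K i)) {r : ℝ}
    (hr : 0 < r) (hsep : ∀ i j, ∀ x ∈ K i, ∀ y ∈ K j, dist x y < r → i = j) :
    IsDiscreteCompactFamily K fun i => Metric.thickening (r / 4) (K i) where
  isCompact := hK
  isOpen _ := Metric.isOpen_thickening
  subset _ := Metric.self_subset_thickening (by positivity) _
  discrete w := by
    refine ⟨Metric.ball w (r / 8), Metric.ball_mem_nhds _ (by positivity), ?_⟩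
    rintro i j ⟨a, ha, haw⟩ ⟨b, hb, hbw⟩
    obtain ⟨x, hx, hax⟩ := Metric.mem_thickening_iff.1 ha
    obtain ⟨y, hy, hby⟩ := Metric.mem_thickening_iff.1 hb
    rw [Metric.mem_ball] at haw hbw
    refine hsep i j x hx y hy ?_
    calc dist x y ≤ dist x a + dist a b + dist b y := dist_triangle4 _ _ _ _
      _ ≤ dist a x + (dist a w + dist b w) + dist b y := by
        rw [dist_comm x]
        gcongr
        exact dist_triangle_right _ _ _
      _ < r := by linarith

end IsDiscreteCompactFamily

section StonePiece

variable {ι X : Type*} [PseudoMetricSpace X] {O : ι → Set X} {r : ℝ}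

/-- The pieces of Stone's proof of the paracompactness of metric spaces: the points at depth at
least `r` in `O i` which lie in no earlier member of the well-ordered family `O`. -/
def stonePiece (O : ι → Set X) (r : ℝ) (i : ι) : Set X :=
  {x | Metric.ball x r ⊆ O i ∧ ∀ j, WellOrderingRel j i → x ∉ O j}

lemma stonePiece_subset (hr : 0 < r) (i : ι) : stonePiece O r i ⊆ O i := fun _ hx =>
  hx.1 (Metric.mem_ball_self hr)

lemma isClosed_stonePiece (hO : ∀ i, IsOpen (O i)) (i : ι) : IsClosed (stonePiece O r i) := by
  have hdepth : {x | Metric.ball x r ⊆ O i} = (Metric.thickening r (O i)ᶜ)ᶜ := by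
    ext x
    simp only [mem_ofPred_eq, mem_compl_iff, Metric.mem_thickening_iff, not_exists, not_and',
      not_not, subset_def, Metric.mem_ball']
  have hfirst : {x | ∀ j, WellOrderingRel j i → x ∉ O j} =
      ⋂ j, ⋂ (_ : WellOrderingRel j i), (O j)ᶜ := by
    ext x
    simp
  rw [stonePiece, ofPred_and, hdepth, hfirst]
  exact Metric.isOpen_thickening.isClosed_compl.inter <|
    isClosed_iInter fun j => isClosed_iInter fun _ => (hO j).isClosed_compl

lemma eq_of_mem_stonePiece_of_dist_lt {i j : ι} {x y : X} (hx : x ∈ stonePiece O r i)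
    (hy : y ∈ stonePiece O r j) (hxy : dist x y < r) : i = j := by
  rcases trichotomous_of WellOrderingRel i j with h | h | h
  · exact absurd (hx.1 (Metric.mem_ball'.2 hxy)) (hy.2 i h)
  · exact h
  · exact absurd (hy.1 (Metric.mem_ball.2 hxy)) (hx.2 j h)

lemma iUnion_stonePiece (hO : ∀ i, IsOpen (O i)) :
    ⋃ m : ℕ, ⋃ i, stonePiece O ((1 / 2) ^ m) i = ⋃ i, O i := by
  refine subset_antisymm (iUnion_subset fun m => iUnion_mono fun i =>
    stonePiece_subset (by positivity) i) fun x hx => ?_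
  have hwf : WellFounded (WellOrderingRel : ι → ι → Prop) := IsWellFounded.wf
  obtain ⟨i, hi, hmin⟩ := hwf.has_min {i | x ∈ O i} (mem_iUnion.1 hx)
  obtain ⟨ε, hε, hεO⟩ := Metric.isOpen_iff.1 (hO i) x hi
  obtain ⟨m, hm⟩ := exists_pow_lt_of_lt_one hε one_half_lt_one
  exact mem_iUnion₂.2 ⟨m, i, (Metric.ball_subset_ball hm.le).trans hεO, fun j hj hxj =>
    hmin j hxj hj⟩

end StonePiece

lemma exists_isOpen_inter_subset_isCompact {X : Type*} [TopologicalSpace X] (F : Set X)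
    [LocallyCompactSpace F] (x : F) :
    ∃ N O : Set X, IsCompact N ∧ N ⊆ F ∧ IsOpen O ∧ ↑x ∈ O ∧ F ∩ O ⊆ N := by
  obtain ⟨N, hN, hNx⟩ := exists_compact_mem_nhds x
  rw [nhds_subtype_eq_comap, mem_comap] at hNx
  obtain ⟨U, hU, hUN⟩ := hNx
  obtain ⟨O, hOU, hO, hxO⟩ := mem_nhds_iff.1 hU
  exact ⟨(↑) '' N, O, hN.image continuous_subtype_val, Subtype.coe_image_subset F N, hO, hxO,
    fun y hy => ⟨⟨y, hy.1⟩, hUN (hOU hy.2), rfl⟩⟩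

lemma exists_isDiscreteUnionOfCompacta_of_locallyCompactSpace {X : Type u} [PseudoMetricSpace X]
    (F : Set X) [LocallyCompactSpace F] :
    ∃ A : ℕ → Set X, (∀ m, IsDiscreteUnionOfCompacta (A m)) ∧ F = ⋃ m, A m := by
  choose N O hN hNF hO hxO hFO using exists_isOpen_inter_subset_isCompact F
  let K : ℕ → F → Set X := fun m x => F ∩ stonePiece O ((1 / 2) ^ m) x
  have hK : ∀ m x, IsCompact (K m x) := fun m x => by
    have htrace : K m x = N x ∩ stonePiece O ((1 / 2) ^ m) x :=
      subset_antisymm (fun y hy => ⟨hFO x ⟨hy.1, stonePiece_subset (by positivity) x hy.2⟩, hy.2⟩)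
        (inter_subset_inter_left _ (hNF x))
    rw [htrace]
    exact (hN x).inter_right (isClosed_stonePiece hO x)
  refine ⟨fun m => ⋃ x, K m x, fun m => ⟨F, K m, _, .of_pairwise_le_dist (hK m)
    (by positivity : (0 : ℝ) < (1 / 2) ^ m) fun x x' y hy y' hy' =>
      eq_of_mem_stonePiece_of_dist_lt hy.2 hy'.2, rfl⟩, ?_⟩
  simp only [K, ← inter_iUnion, iUnion_stonePiece hO]
  exact (inter_eq_left.2 fun x hx => mem_iUnion.2 ⟨⟨x, hx⟩, hxO _⟩).symm

lemma exists_isDiscreteUnionOfCompacta_of_eq_iUnion {X : Type u} [PseudoMetricSpace X] {Y : Set X}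
    {F : ℕ → Set X} (hY : Y = ⋃ n, F n) (hF : ∀ n, LocallyCompactSpace (F n)) :
    ∃ A : ℕ → Set X, (∀ m, IsDiscreteUnionOfCompacta (A m)) ∧ Y = ⋃ m, A m := by
  choose A hA hFA using fun n => exists_isDiscreteUnionOfCompacta_of_locallyCompactSpace (F n)
  refine ⟨fun m => A m.unpair.1 m.unpair.2, fun m => hA _ _, ?_⟩
  rw [iUnion_unpair, hY]
  exact iUnion_congr hFA

/-! ### Pushing discrete families of compacta into an absorbing set -/

/-- Absorption of compacta in a metric space, with closeness measured by the metric. -/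
def AbsorbsCompacta {E : Type*} [PseudoMetricSpace E] (Y : Set E) : Prop :=
  ∀ K B : Set E, IsCompact K → IsCompact B → B ⊆ K ∩ Y → ∀ ε > 0, ∃ h : K → E,
    Continuous h ∧ Function.Injective h ∧ (∀ k, h k ∈ Y) ∧ (∀ k : K, k.1 ∈ B → h k = k) ∧
      ∀ k : K, dist (h k) k ≤ ε

lemma exists_pos_forall_dist_lt_mem_of_diagonal_subset {E : Type*} [PseudoMetricSpace E] {K : Set E}
    (hK : IsCompact K) {R : Set (E × E)} (hR : IsOpen R) (hdiag : ∀ x, (x, x) ∈ R) :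
    ∃ t > 0, ∀ k ∈ K, ∀ x y, dist x k < t → dist y k < t → (x, y) ∈ R := by
  have hdiagK : Continuous fun x : E => (x, x) := by fun_prop
  obtain ⟨t, ht, htR⟩ := (hK.image hdiagK).exists_thickening_subset_open hR
    (image_subset_iff.2 fun x _ => hdiag x)
  exact ⟨t, ht, fun k hk x y hx hy => htR <| Metric.mem_thickening_iff.2
    ⟨(k, k), mem_image_of_mem _ hk, max_lt hx hy⟩⟩

section Glue

variable {ι X : Type*}

/-- The map acting as `g i` on the member `W i` of a disjoint family and as the identity
elsewhere. -/
def glue (W : ι → Set X) (g : ι → X → X) (x : X) : X :=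
  open Classical in if h : ∃ i, x ∈ W i then g h.choose x else x

lemma glue_of_forall_notMem {W : ι → Set X} {g : ι → X → X} {x : X} (hx : ∀ i, x ∉ W i) :
    glue W g x = x := dif_neg (not_exists.2 hx)

lemma glue_eq_self_or_exists (W : ι → Set X) (g : ι → X → X) (x : X) :
    glue W g x = x ∨ ∃ i, glue W g x = g i x := by
  by_cases h : ∃ i, x ∈ W i
  · exact .inr ⟨h.choose, dif_pos h⟩
  · exact .inl (dif_neg h)

lemma mapsTo_of_forall_notMem_apply_eq {f : X → X} (hf : f.Injective) {s : Set X}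
    (hs : ∀ x ∉ s, f x = x) : MapsTo f s s := fun x hx => by
  by_contra hfx
  exact hfx ((hf (hs _ hfx)).symm ▸ hx)

namespace IsDiscreteCompactFamily

variable [TopologicalSpace X] {K W : ι → Set X} (hKW : IsDiscreteCompactFamily K W)

include hKW

lemma glue_of_mem {g : ι → X → X} {x : X} {i : ι} (hx : x ∈ W i) : glue W g x = g i x := by
  have h : ∃ i, x ∈ W i := ⟨i, hx⟩
  rw [glue, dif_pos h, hKW.eq_of_mem h.choose_spec hx]

lemma continuous_glue {g : ι → X → X} (hg : ∀ i, Continuous (g i))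
    (hid : ∀ i, ∀ x ∉ W i, g i x = x) : Continuous (glue W g) := by
  refine continuous_iff_continuousAt.2 fun x => ?_
  obtain ⟨N, hN, hd⟩ := hKW.discrete x
  by_cases hne : ∃ i, (W i ∩ N).Nonempty
  · obtain ⟨i, hi⟩ := hne
    refine (hg i).continuousAt.congr ?_
    filter_upwards [hN] with y hy
    by_cases hyi : y ∈ W i
    · exact (hKW.glue_of_mem hyi).symm
    · rw [hid i y hyi, glue_of_forall_notMem]
      exact fun j hj => hyi (hd j i ⟨y, hj, hy⟩ hi ▸ hj)
  · refine continuousAt_id.congr ?_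
    filter_upwards [hN] with y hy
    exact (glue_of_forall_notMem fun j hj => hne ⟨j, y, hj, hy⟩).symm

lemma leftInverse_glue {g g' : ι → X → X} (hg : ∀ i, MapsTo (g i) (W i) (W i))
    (hinv : ∀ i, Function.LeftInverse (g' i) (g i)) :
    Function.LeftInverse (glue W g') (glue W g) := fun x => by
  by_cases h : ∃ i, x ∈ W i
  · obtain ⟨i, hi⟩ := h
    rw [hKW.glue_of_mem hi, hKW.glue_of_mem (hg i hi), hinv]
  · rw [glue_of_forall_notMem (not_exists.1 h), glue_of_forall_notMem (not_exists.1 h)]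

/-- Homeomorphisms supported in the members of a discrete family, acting simultaneously. -/
def glueHomeomorph (g : ι → X ≃ₜ X) (hid : ∀ i, ∀ x ∉ W i, g i x = x) : X ≃ₜ X :=
  have hid' : ∀ i, ∀ x ∉ W i, (g i).symm x = x := fun i x hx => by
    rw [Homeomorph.symm_apply_eq, hid i x hx]
  { toFun := glue W fun i => g i
    invFun := glue W fun i => (g i).symm
    left_inv := hKW.leftInverse_glue
      (fun i => mapsTo_of_forall_notMem_apply_eq (g i).injective (hid i))
      fun i => (g i).symm_apply_apply
    right_inv := hKW.leftInverse_glue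
      (fun i => mapsTo_of_forall_notMem_apply_eq (g i).symm.injective (hid' i))
      fun i => (g i).apply_symm_apply
    continuous_toFun := hKW.continuous_glue (fun i => (g i).continuous) hid
    continuous_invFun := hKW.continuous_glue (fun i => (g i).symm.continuous) hid' }

lemma glueHomeomorph_apply (g : ι → X ≃ₜ X) (hid : ∀ i, ∀ x ∉ W i, g i x = x) (x : X) :
    hKW.glueHomeomorph g hid x = glue W (fun i => g i) x := rfl

end IsDiscreteCompactFamily

end Glue

namespace AbsorbsCompacta

variable {ι : Type*} [Infinite ι] {Y C : Set ℓ²(ι, ℝ)} {R : Set (ℓ²(ι, ℝ) × ℓ²(ι, ℝ))}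

/- Near `K` the set `C` is compact, so absorption relative to its part near `K` gives an embedding
that fixes this part; the embedding is then extended to a homeomorphism supported near `K`. -/
lemma exists_homeomorph_mapsTo_of_isCompact {K W : Set ℓ²(ι, ℝ)} (hY : AbsorbsCompacta Y)
    (hC : IsLocallyCompactTrace C) (hCY : C ⊆ Y) (hK : IsCompact K) (hW : IsOpen W) (hKW : K ⊆ W)
    (hR : IsOpen R) (hdiag : ∀ x, (x, x) ∈ R) :
    ∃ g : ℓ²(ι, ℝ) ≃ₜ ℓ²(ι, ℝ), (∀ x ∈ C, g x = x) ∧ MapsTo g K Y ∧ (∀ x ∉ W, g x = x) ∧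
      ∀ x, (x, g x) ∈ R := by
  rcases K.eq_empty_or_nonempty with rfl | hne
  · exact ⟨.refl _, fun _ _ => rfl, fun _ h => h.elim, fun _ _ => rfl, hdiag⟩
  obtain ⟨r, hr, hrC⟩ := hC.exists_isCompact_inter_cthickening hK
  obtain ⟨s, hs, hsW⟩ := hK.exists_cthickening_subset_open hW hKW
  obtain ⟨t, ht, htR⟩ := exists_pos_forall_dist_lt_mem_of_diagonal_subset hK hR hdiag
  obtain ⟨δ, hδ, hδr, hδs, hδt⟩ : ∃ δ > 0, 4 * δ ≤ r ∧ 4 * δ ≤ s ∧ 5 * δ ≤ t :=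
    ⟨min r (min s t) / 5, by positivity, by grind, by grind, by grind⟩
  let B : Set ℓ²(ι, ℝ) := C ∩ Metric.cthickening (4 * δ) K
  have hB : IsCompact B := hrC _ hδr
  obtain ⟨h, hc, hi, hhY, hhB, hn⟩ := hY (K ∪ B) B (hK.union hB) hB
    (fun x hx => ⟨.inr hx, hCY hx.1⟩) (δ / 12) (by positivity)
  obtain ⟨g, hgK, hgB, hgfar, hgnear⟩ := exists_homeomorph_eqOn_displacement hK hB hc hi hhB
    (show 0 < δ / 12 by positivity) (by linarith : 12 * (δ / 12) ≤ δ)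
    fun d => by simpa only [dist_eq_norm] using hn d
  have hfar : ∀ x, x ∉ Metric.cthickening (4 * δ) K → g x = x := fun x hx => hgfar x <| not_lt.1
    fun hlt => hx <| Metric.thickening_subset_cthickening _ _ <|
      (Metric.mem_thickening_iff_infDist_lt hne).2 hlt
  refine ⟨g, fun x hx => ?_, fun x hx => ?_, fun x hx => ?_, fun x => ?_⟩
  · by_cases hxK : x ∈ Metric.cthickening (4 * δ) K
    · exact hgB x ⟨hx, hxK⟩
    · exact hfar x hxK
  · rw [hgK ⟨x, .inl hx⟩ hx]
    exact hhY _
  · exact hfar x fun hxK => hx (hsW (Metric.cthickening_mono hδs K hxK))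
  · by_cases hxK : 4 * δ ≤ Metric.infDist x K
    · rw [hgfar x hxK]
      exact hdiag x
    · obtain ⟨k, hk, hxk⟩ := (Metric.infDist_lt_iff hne).1 (not_le.1 hxK)
      have hgx : dist (g x) x ≤ 11 * (δ / 12) := dist_eq_norm (g x) x ▸ hgnear x
      exact htR k hk _ _ (by linarith) (by linarith [dist_triangle (g x) x k])

lemma exists_homeomorph_mapsTo_of_isDiscreteCompactFamily {α : Type*} {K W : α → Set ℓ²(ι, ℝ)}
    (hY : AbsorbsCompacta Y) (hC : IsLocallyCompactTrace C) (hCY : C ⊆ Y)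
    (hKW : IsDiscreteCompactFamily K W) (hR : IsOpen R) (hdiag : ∀ x, (x, x) ∈ R) :
    ∃ g : ℓ²(ι, ℝ) ≃ₜ ℓ²(ι, ℝ), (∀ x ∈ C, g x = x) ∧ (∀ i, MapsTo g (K i) Y) ∧
      ∀ x, (x, g x) ∈ R := by
  choose g hgC hgK hgW hgR using fun i => hY.exists_homeomorph_mapsTo_of_isCompact hC hCY
    (hKW.isCompact i) (hKW.isOpen i) (hKW.subset i) hR hdiag
  refine ⟨hKW.glueHomeomorph g hgW, fun x hx => ?_, fun i x hx => ?_, fun x => ?_⟩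
  · rcases glue_eq_self_or_exists W (fun i => g i) x with h | ⟨i, h⟩
    · exact h
    · exact h.trans (hgC i x hx)
  · rw [hKW.glueHomeomorph_apply, hKW.glue_of_mem (hKW.subset i hx)]
    exact hgK i hx
  · rw [hKW.glueHomeomorph_apply]
    rcases glue_eq_self_or_exists W (fun i => g i) x with h | ⟨i, h⟩
    · rw [h]
      exact hdiag x
    · rw [h]
      exact hgR i x

end AbsorbsCompacta

/-! ### The back-and-forth construction -/

section Limits

variable {E : Type*} [MetricSpace E] [CompleteSpace E] {d : ℕ → ℝ}

lemma exists_continuous_tendstoUniformly_of_dist_le {X : Type*} [TopologicalSpace X] {f : ℕ → X → E}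
    (hf : ∀ n, Continuous (f n)) (hd : Summable d)
    (hfd : ∀ n x, dist (f n x) (f (n + 1) x) ≤ d n) :
    ∃ F : X → E, Continuous F ∧ TendstoUniformly f F atTop := by
  choose F hF using fun x =>
    cauchySeq_tendsto_of_complete (cauchySeq_of_dist_le_of_summable d (hfd · x) hd)
  have htail : Tendsto (fun n => ∑' m, d (n + m)) atTop (𝓝 0) := by
    simpa only [add_comm] using tendsto_sum_nat_add d
  have hu : TendstoUniformly f F atTop := Metric.tendstoUniformly_iff.2 fun ε hε => by
    filter_upwards [htail.eventually_lt_const hε] with n hn x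
    rw [dist_comm]
    exact (dist_le_tsum_of_dist_le_of_tendsto d (hfd · x) hd (hF x) n).trans_lt hn
  exact ⟨F, hu.continuous (Frequently.of_forall hf), hu⟩

lemma exists_homeomorph_tendsto_of_dist_le (H : ℕ → E ≃ₜ E) (hd : Summable d)
    (hH : ∀ n x, dist (H n x) (H (n + 1) x) ≤ d n)
    (hH' : ∀ n x, dist ((H n).symm x) ((H (n + 1)).symm x) ≤ d n) :
    ∃ F : E ≃ₜ E, ∀ x, Tendsto (fun n => H n x) atTop (𝓝 (F x)) := by
  obtain ⟨F, hFc, hF⟩ :=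
    exists_continuous_tendstoUniformly_of_dist_le (fun n => (H n).continuous) hd hH
  obtain ⟨G, hGc, hG⟩ :=
    exists_continuous_tendstoUniformly_of_dist_le (fun n => (H n).symm.continuous) hd hH'
  have hGF : Function.LeftInverse G F := fun x => by
    have hlim := hG.tendsto_comp hGc.continuousAt (hF.tendsto_at x)
    simp only [Homeomorph.symm_apply_apply] at hlim
    exact tendsto_nhds_unique hlim tendsto_const_nhds
  have hFG : Function.RightInverse G F := fun x => by
    have hlim := hF.tendsto_comp hFc.continuousAt (hG.tendsto_at x)
    simp only [Homeomorph.apply_symm_apply] at hlim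
    exact tendsto_nhds_unique hlim tendsto_const_nhds
  exact ⟨⟨⟨F, G, hGF, hFG⟩, hFc, hGc⟩, fun x => hF.tendsto_at x⟩

end Limits

/-- A stage of the back-and-forth construction: a homeomorphism of `E` and a part of `Y₁` which it
maps into `Y₂`. -/
structure PartialMatching {E : Type*} [TopologicalSpace E] (Y₁ Y₂ : Set E) where
  /-- The homeomorphism of the whole space. -/
  homeo : E ≃ₜ E
  /-- The part of `Y₁` on which later stages agree with `homeo`. -/
  domain : Set E
  isLocallyCompactTrace : IsLocallyCompactTrace domain
  domain_subset : domain ⊆ Y₁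
  mapsTo : MapsTo homeo domain Y₂

namespace PartialMatching

section TopologicalSpace

variable {E : Type*} [TopologicalSpace E] {Y₁ Y₂ : Set E}

instance : Inhabited (PartialMatching Y₁ Y₂) :=
  ⟨.refl E, ∅, .empty, empty_subset _, mapsTo_empty _ _⟩

/-- The inverse homeomorphism, defined on the image of the domain. -/
@[simps]
def symm (p : PartialMatching Y₁ Y₂) : PartialMatching Y₂ Y₁ where
  homeo := p.homeo.symm
  domain := p.homeo '' p.domain
  isLocallyCompactTrace := p.isLocallyCompactTrace.image p.homeo
  domain_subset := p.mapsTo.image_subset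
  mapsTo := by
    rintro _ ⟨x, hx, rfl⟩
    rw [Homeomorph.symm_apply_apply]
    exact p.domain_subset hx

end TopologicalSpace

variable {E : Type*} [MetricSpace E] {Y₁ Y₂ : Set E} {p q r : PartialMatching Y₁ Y₂} {δ ε : ℝ}

/-- The matching `q` extends `p`, and their homeomorphisms and inverse homeomorphisms are within
distance `ε` of each other. -/
structure Extends (q p : PartialMatching Y₁ Y₂) (ε : ℝ) : Prop where
  domain_subset : p.domain ⊆ q.domain
  eqOn : EqOn q.homeo p.homeo p.domain
  dist_le : ∀ x, dist (p.homeo x) (q.homeo x) ≤ ε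
  dist_symm_le : ∀ x, dist (p.homeo.symm x) (q.homeo.symm x) ≤ ε

lemma Extends.trans (hq : q.Extends p δ) (hr : r.Extends q ε) : r.Extends p (δ + ε) where
  domain_subset := hq.domain_subset.trans hr.domain_subset
  eqOn _ hx := (hr.eqOn (hq.domain_subset hx)).trans (hq.eqOn hx)
  dist_le x := (dist_triangle _ _ _).trans (add_le_add (hq.dist_le x) (hr.dist_le x))
  dist_symm_le x := (dist_triangle _ _ _).trans (add_le_add (hq.dist_symm_le x) (hr.dist_symm_le x))

lemma Extends.symm_of_symm {q : PartialMatching Y₂ Y₁} (hq : q.Extends p.symm ε) :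
    q.symm.Extends p ε := by
  have hinv : ∀ x ∈ p.domain, q.homeo (p.homeo x) = x := fun x hx =>
    (hq.eqOn (mem_image_of_mem _ hx)).trans (p.homeo.symm_apply_apply x)
  exact
    { domain_subset := fun x hx =>
        ⟨p.homeo x, hq.domain_subset (mem_image_of_mem _ hx), hinv x hx⟩
      eqOn := fun x hx => q.homeo.symm_apply_eq.2 (hinv x hx).symm
      dist_le := hq.dist_symm_le
      dist_symm_le := hq.dist_le }

lemma domain_mono_and_eqOn_of_extends {p : ℕ → PartialMatching Y₁ Y₂} {d : ℕ → ℝ}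
    (hp : ∀ n, (p (n + 1)).Extends (p n) (d n)) {n m : ℕ} (hnm : n ≤ m) :
    (p n).domain ⊆ (p m).domain ∧ EqOn (p m).homeo (p n).homeo (p n).domain := by
  induction m, hnm using Nat.le_induction with
  | base => exact ⟨Subset.rfl, eqOn_refl _ _⟩
  | succ m _ ih =>
    exact ⟨ih.1.trans (hp m).domain_subset, fun x hx => ((hp m).eqOn (ih.1 hx)).trans (ih.2 hx)⟩

lemma exists_homeomorph_image_eq [CompleteSpace E] {A₁ A₂ : ℕ → Set E}
    {p : ℕ → PartialMatching (⋃ n, A₁ n) (⋃ n, A₂ n)} {d : ℕ → ℝ} (hd : Summable d)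
    (hp : ∀ n, (p (n + 1)).Extends (p n) (d n)) (hA₁ : ∀ n, A₁ n ⊆ (p (n + 1)).domain)
    (hA₂ : ∀ n, A₂ n ⊆ (p (n + 1)).homeo '' (p (n + 1)).domain) :
    ∃ F : E ≃ₜ E, F '' ⋃ n, A₁ n = ⋃ n, A₂ n := by
  obtain ⟨F, hF⟩ := exists_homeomorph_tendsto_of_dist_le (fun n => (p n).homeo) hd
    (fun n => (hp n).dist_le) (fun n => (hp n).dist_symm_le)
  have hFp : ∀ n, EqOn F (p n).homeo (p n).domain := fun n x hx => by
    refine tendsto_nhds_unique (hF x) (tendsto_const_nhds.congr' ?_)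
    filter_upwards [eventually_ge_atTop n] with m hm
    exact ((domain_mono_and_eqOn_of_extends hp hm).2 hx).symm
  refine ⟨F, subset_antisymm ?_ (iUnion_subset fun n y hy => ?_)⟩
  · rw [image_iUnion]
    refine iUnion_subset fun n => ?_
    rintro _ ⟨x, hx, rfl⟩
    rw [hFp (n + 1) (hA₁ n hx)]
    exact (p (n + 1)).mapsTo (hA₁ n hx)
  · obtain ⟨x, hx, rfl⟩ := hA₂ n hy
    exact ⟨x, (p (n + 1)).domain_subset hx, hFp (n + 1) hx⟩

end PartialMatching

section BackAndForth

variable {ι : Type*} [Infinite ι] {Y₁ Y₂ A A₁ A₂ : Set ℓ²(ι, ℝ)} {ε : ℝ}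

lemma AbsorbsCompacta.exists_extends_subset_domain (hY₂ : AbsorbsCompacta Y₂)
    (p : PartialMatching Y₁ Y₂) (hA : IsDiscreteUnionOfCompacta A) (hAY : A ⊆ Y₁) (hε : 0 < ε) :
    ∃ q : PartialMatching Y₁ Y₂, q.Extends p ε ∧ A ⊆ q.domain := by
  obtain ⟨α, K, W, hKW, rfl⟩ := hA
  let R : Set (ℓ²(ι, ℝ) × ℓ²(ι, ℝ)) :=
    {z | dist z.1 z.2 < ε ∧ dist (p.homeo.symm z.1) (p.homeo.symm z.2) < ε}
  have hR : IsOpen R := (isOpen_lt (by fun_prop) (by fun_prop)).and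
    (isOpen_lt (by fun_prop) (by fun_prop))
  obtain ⟨g, hgC, hgK, hgR⟩ := hY₂.exists_homeomorph_mapsTo_of_isDiscreteCompactFamily
    (p.isLocallyCompactTrace.image p.homeo) p.mapsTo.image_subset (hKW.image p.homeo) hR
    (fun x => by simp [R, hε])
  have hg : ∀ x ∈ p.domain, g (p.homeo x) = p.homeo x := fun x hx => hgC _ (mem_image_of_mem _ hx)
  refine ⟨⟨p.homeo.trans g, p.domain ∪ ⋃ i, K i,
    p.isLocallyCompactTrace.union hKW.isLocallyCompactTrace, union_subset p.domain_subset hAY, ?_⟩,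
    ⟨subset_union_left, hg, fun x => (hgR (p.homeo x)).1.le, fun x => ?_⟩, subset_union_right⟩
  · refine MapsTo.union (fun x hx => ?_) (mapsTo_iUnion.2 fun i x hx => ?_)
    · exact (hg x hx).symm ▸ p.mapsTo hx
    · exact hgK i (mem_image_of_mem _ hx)
  · have hx := (hgR (g.symm x)).2.le
    rwa [Homeomorph.apply_symm_apply, dist_comm] at hx

/- The backward half is the forward half for the inverse matching. -/
lemma exists_extends_subset_domain_subset_image (hY₁ : AbsorbsCompacta Y₁)
    (hY₂ : AbsorbsCompacta Y₂) (p : PartialMatching Y₁ Y₂) (hA₁ : IsDiscreteUnionOfCompacta A₁)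
    (hAY₁ : A₁ ⊆ Y₁) (hA₂ : IsDiscreteUnionOfCompacta A₂) (hAY₂ : A₂ ⊆ Y₂) (hε : 0 < ε) :
    ∃ q : PartialMatching Y₁ Y₂, q.Extends p ε ∧ A₁ ⊆ q.domain ∧ A₂ ⊆ q.homeo '' q.domain := by
  obtain ⟨q, hqp, hA₁q⟩ := hY₂.exists_extends_subset_domain p hA₁ hAY₁ (half_pos hε)
  obtain ⟨r, hrq, hA₂r⟩ := hY₁.exists_extends_subset_domain q.symm hA₂ hAY₂ (half_pos hε)
  refine ⟨r.symm, add_halves ε ▸ hqp.trans hrq.symm_of_symm,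
    hA₁q.trans hrq.symm_of_symm.domain_subset, fun y hy => ?_⟩
  exact ⟨r.homeo y, mem_image_of_mem _ (hA₂r hy), r.homeo.symm_apply_apply y⟩

theorem exists_homeomorph_image_eq_of_absorbsCompacta {A₁ A₂ : ℕ → Set ℓ²(ι, ℝ)}
    (hY₁ : AbsorbsCompacta (⋃ n, A₁ n)) (hY₂ : AbsorbsCompacta (⋃ n, A₂ n))
    (hA₁ : ∀ n, IsDiscreteUnionOfCompacta (A₁ n)) (hA₂ : ∀ n, IsDiscreteUnionOfCompacta (A₂ n)) :
    ∃ F : ℓ²(ι, ℝ) ≃ₜ ℓ²(ι, ℝ), F '' ⋃ n, A₁ n = ⋃ n, A₂ n := by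
  choose next hext hdom him using fun (n : ℕ) (p : PartialMatching (⋃ n, A₁ n) (⋃ n, A₂ n)) =>
    exists_extends_subset_domain_subset_image hY₁ hY₂ p (hA₁ n) (subset_iUnion A₁ n) (hA₂ n)
      (subset_iUnion A₂ n) (show (0 : ℝ) < (1 / 2) ^ n by positivity)
  let p : ℕ → PartialMatching (⋃ n, A₁ n) (⋃ n, A₂ n) := fun n => n.rec default next
  exact PartialMatching.exists_homeomorph_image_eq (p := p) summable_geometric_two
    (fun n => hext n (p n)) (fun n => hdom n (p n)) (fun n => him n (p n))

end BackAndForth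

/-! ### The model pair -/

section SigmaLocallyCompact

lemma locallyCompactSpace_of_isCompact_inter_closedBall {X : Type*} [PseudoMetricSpace X]
    {s : Set X} (h : ∀ x ∈ s, ∃ r > 0, IsCompact (s ∩ Metric.closedBall x r)) :
    LocallyCompactSpace s :=
  suffices WeaklyLocallyCompactSpace s from inferInstance
  ⟨fun x => by
    obtain ⟨r, hr, hc⟩ := h x x.2
    refine ⟨Subtype.val ⁻¹' Metric.closedBall x.1 r, ?_, Metric.closedBall_mem_nhds x hr⟩
    rwa [Subtype.isCompact_iff, Subtype.image_preimage_coe]⟩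

variable {X Z : Type*} [TopologicalSpace X] [TopologicalSpace Z]

/-- The set `Y` is a countable union of locally compact subspaces of `X`. -/
def IsSigmaLocallyCompact (Y : Set X) : Prop :=
  ∃ F : ℕ → Set X, Y = ⋃ n, F n ∧ ∀ n, LocallyCompactSpace (F n)

lemma IsSigmaLocallyCompact.image {Y : Set X} (h : IsSigmaLocallyCompact Y) (φ : X ≃ₜ Z) :
    IsSigmaLocallyCompact (φ '' Y) := by
  obtain ⟨F, rfl, hF⟩ := h
  refine ⟨fun n => φ '' F n, image_iUnion, fun n => ?_⟩
  have := hF n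
  exact (φ.image (F n)).symm.isClosedEmbedding.locallyCompactSpace

lemma IsSigmaLocallyCompact.univ_prod [LocallyCompactSpace X] {Y : Set Z}
    (h : IsSigmaLocallyCompact Y) : IsSigmaLocallyCompact ((univ : Set X) ×ˢ Y) := by
  obtain ⟨F, rfl, hF⟩ := h
  refine ⟨fun n => univ ×ˢ F n, prod_iUnion, fun n => ?_⟩
  have := hF n
  have := isOpen_univ.isOpenEmbedding_subtypeVal.locallyCompactSpace (X := (univ : Set X))
  exact (Homeomorph.Set.prod (univ : Set X) (F n)).isClosedEmbedding.locallyCompactSpace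

end SigmaLocallyCompact

section FiniteSupport

variable {ι : Type*}

lemma isCompact_support_subset_inter_closedBall {T : Set ι} (hT : T.Finite)
    (x : ℓ²(ι, ℝ)) (r : ℝ) :
    IsCompact ({y : ℓ²(ι, ℝ) | {i | y i ≠ 0} ⊆ T} ∩ Metric.closedBall x r) := by
  have := hT.fintype
  let f : EuclideanSpace ℝ T → ℓ²(ι, ℝ) :=
    fun t => l2Extend (↑) Subtype.val_injective ((lpPiLpₗᵢ (p := 2) (fun _ : T => ℝ) ℝ).symm t)
  have hf : Isometry f := (isometry_l2Extend _).comp (LinearIsometryEquiv.isometry _)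
  have hrange : {y : ℓ²(ι, ℝ) | {i | y i ≠ 0} ⊆ T} ⊆ range f := fun y hy =>
    ⟨WithLp.toLp 2 fun i => y i, l2_ext fun i => by
      by_cases hi : i ∈ T
      · exact l2Extend_apply Subtype.val_injective _ (⟨i, hi⟩ : T)
      · rw [l2Extend_apply_of_notMem _ _ (by simpa using hi)]
        exact (not_not.1 fun h => hi (hy h)).symm⟩
  have hclosed : IsClosed {y : ℓ²(ι, ℝ) | {i | y i ≠ 0} ⊆ T} := by
    have h : {y : ℓ²(ι, ℝ) | {i | y i ≠ 0} ⊆ T} = ⋂ i, ⋂ (_ : i ∉ T), {y | y i = 0} := by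
      ext y
      simp [subset_def, not_imp_comm]
    rw [h]
    exact isClosed_iInter fun i => isClosed_iInter fun _ =>
      isClosed_eq (l2_continuous_apply i) continuous_const
  have hball : IsCompact (f ⁻¹' Metric.closedBall x r) := Metric.isCompact_of_isClosed_isBounded
    (Metric.isClosed_closedBall.preimage hf.continuous)
    (hf.antilipschitz.isBounded_preimage Metric.isBounded_closedBall)
  have himage : {y : ℓ²(ι, ℝ) | {i | y i ≠ 0} ⊆ T} ∩ Metric.closedBall x r =
      f '' (f ⁻¹' Metric.closedBall x r) ∩ {y | {i | y i ≠ 0} ⊆ T} := by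
    rw [image_preimage_eq_range_inter, inter_right_comm, inter_eq_right.2 hrange]
  rw [himage]
  exact (hball.image hf.continuous).inter_right hclosed

/-- The vectors in `ℓ₂(ι)` with exactly `n` nonzero coordinates. -/
def l2Layer (ι : Type*) (n : ℕ) : Set ℓ²(ι, ℝ) := {x | {i | x i ≠ 0}.encard = n}

lemma l2fin_eq_iUnion_l2Layer : l2fin ι = ⋃ n, l2Layer ι n := by
  ext x
  simp only [l2fin, l2Layer, mem_ofPred_eq, mem_iUnion]
  exact ⟨fun h => ⟨_, h.cast_ncard_eq.symm⟩, fun ⟨_, h⟩ => finite_of_encard_eq_coe h⟩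

/- Vectors close to `x` are nonzero on the support of `x`, so such a vector with no more nonzero
coordinates than `x` has the same support. -/
lemma locallyCompactSpace_l2Layer (n : ℕ) : LocallyCompactSpace (l2Layer ι n) := by
  refine locallyCompactSpace_of_isCompact_inter_closedBall fun x hx => ?_
  have hfin : {i | x i ≠ 0}.Finite := finite_of_encard_eq_coe hx
  obtain ⟨r, hrx, hr⟩ : ∃ r, (∀ i, x i ≠ 0 → r < |x i|) ∧ 0 < r :=
    (((hfin.eventually_all.2 fun i hi => eventually_lt_nhds (abs_pos.2 hi)).filter_mono
      nhdsWithin_le_nhds).and (self_mem_nhdsWithin (a := (0 : ℝ)) (s := Ioi 0))).exists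
  have hsupp : ∀ y ∈ Metric.closedBall x r, {i | x i ≠ 0} ⊆ {i | y i ≠ 0} := fun y hy i hi hyi => by
    have hle : |x i| ≤ dist y x := by
      simpa [hyi, dist_eq_norm] using l2_norm_apply_le (y - x) i
    exact absurd (hle.trans hy) (hrx i hi).not_ge
  have hlayer : l2Layer ι n ∩ Metric.closedBall x r =
      {y | {i | y i ≠ 0} ⊆ {i | x i ≠ 0}} ∩ Metric.closedBall x r := by
    refine Set.ext fun y => and_congr_left fun hy => ⟨fun hyn => ?_, fun hyx => ?_⟩
    · exact (hfin.eq_of_subset_of_encard_le (hsupp y hy) (hyn.trans hx.symm).le).ge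
    · exact (congrArg encard (hyx.antisymm (hsupp y hy))).trans hx
  exact ⟨r, hr, hlayer ▸ isCompact_support_subset_inter_closedBall hfin x r⟩

lemma isSigmaLocallyCompact_l2fin : IsSigmaLocallyCompact (l2fin ι) :=
  ⟨l2Layer ι, l2fin_eq_iUnion_l2Layer, locallyCompactSpace_l2Layer⟩

lemma add_mem_l2fin {x y : ℓ²(ι, ℝ)} (hx : x ∈ l2fin ι) (hy : y ∈ l2fin ι) : x + y ∈ l2fin ι :=
  (hx.union hy).subset fun i hi => by
    by_contra h
    simp only [mem_union, mem_ofPred_eq, not_or, not_not] at h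
    exact hi (by rw [lp.coeFn_add, Pi.add_apply, h.1, h.2, add_zero])

lemma l2Extend_mem_l2fin {α : Type*} {c : α → ι} (hc : c.Injective) {x : ℓ²(α, ℝ)}
    (hx : x ∈ l2fin α) : l2Extend c hc x ∈ l2fin ι :=
  (hx.image c).subset fun i hi => by
    by_cases hic : i ∈ range c
    · obtain ⟨a, rfl⟩ := hic
      exact mem_image_of_mem c (by simpa using hi)
    · exact absurd (l2Extend_apply_of_notMem hc x hic) hi

end FiniteSupport

/-! ### Absorption of compacta by the model pair -/

section CutoffMark

lemma norm_cutoff_mul_le (s : ℝ) (j : ℕ) :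
    ‖cutoff j s * (1 - cutoff (j + 2) s) * (1 / 2) ^ j‖ ≤ 1 * (1 / 2) ^ j := by
  rw [norm_mul, norm_mul, norm_pow, Real.norm_of_nonneg one_half_pos.le]
  have hle : ‖1 - cutoff (j + 2) s‖ ≤ 1 := by
    rw [Real.norm_of_nonneg (sub_nonneg.2 (cutoff_le_one _ s))]
    linarith [cutoff_nonneg (j + 2) s]
  gcongr
  exact mul_le_one₀ (abs_cutoff_le_one j s) (norm_nonneg _) hle

/-- A path in `ℓ₂` that starts at the origin and leaves it through finitely supported vectors, one
of whose coordinates `j` attains the value `2⁻ʲ`. -/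
def cutoffMark (s : ℝ) : ℓ²(ℕ, ℝ) :=
  l2mk (fun j => cutoff j s * (1 - cutoff (j + 2) s) * (1 / 2) ^ j) <|
    summable_norm_sq_of_norm_le_half_pow (norm_cutoff_mul_le s)

lemma continuous_cutoffMark : Continuous cutoffMark :=
  l2_continuous_of_dominated (summable_const_mul_half_pow_sq 1) norm_cutoff_mul_le fun j =>
    ((continuous_cutoff j).mul (continuous_const.sub (continuous_cutoff (j + 2)))).mul
      continuous_const

lemma cutoffMark_zero : cutoffMark 0 = 0 := l2_ext fun j => by
  simp [cutoffMark, cutoff_eq_one (k := j + 2) (s := 0) (by norm_num)]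

lemma cutoffMark_mem_l2fin {s : ℝ} (hs : 0 < s) : cutoffMark s ∈ l2fin ℕ := by
  obtain ⟨N, hN⟩ := exists_forall_le_two_pow_mul hs 2
  refine (finite_lt_nat N).subset fun j hj => mem_ofPred_eq ▸ not_le.1 fun hNj => hj ?_
  simp [cutoffMark, cutoff_eq_zero (hN j hNj)]

lemma exists_cutoffMark_apply_eq {s : ℝ} (hs : 0 < s) (hs₁ : s ≤ 1) :
    ∃ j, cutoffMark s j = (1 / 2) ^ j := by
  obtain ⟨j, hj, hj'⟩ := exists_nat_pow_near_of_lt_one hs hs₁ one_half_pos one_half_lt_one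
  have hpow : (2 : ℝ) ^ j * (1 / 2) ^ j = 1 := by rw [← mul_pow]; norm_num
  have hone : (2 : ℝ) ^ j * s ≤ 1 := hpow ▸ mul_le_mul_of_nonneg_left hj' (by positivity)
  have htwo : 2 ≤ (2 : ℝ) ^ (j + 2) * s := calc
    (2 : ℝ) = 2 ^ (j + 2) * (1 / 2) ^ (j + 1) := by linear_combination -2 * hpow
    _ ≤ 2 ^ (j + 2) * s := by gcongr
  exact ⟨j, by simp [cutoffMark, cutoff_eq_one hone, cutoff_eq_zero htwo]⟩

end CutoffMark

section Truncate

variable {ι : Type*}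

lemma norm_cutoff_mul_apply_le (e : ι → ℕ) (x : ℓ²(ι, ℝ)) (s : ℝ) (i : ι) :
    ‖cutoff (e i) s * x i‖ ≤ ‖x i‖ := by
  rw [norm_mul]
  exact mul_le_of_le_one_left (norm_nonneg _) (abs_cutoff_le_one _ s)

/-- The deformation of `ℓ₂(ι)` that multiplies the coordinate `i` by the cut-off `θ_{e i}(s)`. -/
def l2Truncate (e : ι → ℕ) (x : ℓ²(ι, ℝ)) (s : ℝ) : ℓ²(ι, ℝ) :=
  l2mk (fun i => cutoff (e i) s * x i) <| (l2_summable_norm_sq x).of_nonneg_of_le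
    (fun _ => by positivity) fun i => by gcongr; exact norm_cutoff_mul_apply_le e x s i

@[simp] lemma l2Truncate_apply (e : ι → ℕ) (x : ℓ²(ι, ℝ)) (s : ℝ) (i : ι) :
    l2Truncate e x s i = cutoff (e i) s * x i := rfl

lemma l2Truncate_zero_right (e : ι → ℕ) (x : ℓ²(ι, ℝ)) : l2Truncate e x 0 = x := l2_ext fun i => by
  rw [l2Truncate_apply, cutoff_eq_one (by norm_num), one_mul]

lemma norm_l2Truncate_le (e : ι → ℕ) (x : ℓ²(ι, ℝ)) (s : ℝ) : ‖l2Truncate e x s‖ ≤ ‖x‖ := by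
  refine (sq_le_sq₀ (norm_nonneg _) (norm_nonneg _)).1 ?_
  rw [l2_norm_sq_eq_tsum, l2_norm_sq_eq_tsum]
  refine (l2_summable_norm_sq _).tsum_le_tsum (fun i => ?_) (l2_summable_norm_sq x)
  gcongr
  exact norm_cutoff_mul_apply_le e x s i

lemma continuous_l2Truncate (e : ι → ℕ) :
    Continuous fun p : ℓ²(ι, ℝ) × ℝ => l2Truncate e p.1 p.2 := by
  refine continuous_prod_of_continuous_lipschitzWith _ 1 (fun x => ?_) fun s => ?_
  · exact l2_continuous_of_dominated (l2_summable_norm_sq x)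
      (fun s i => norm_cutoff_mul_apply_le e x s i)
      fun i => (continuous_cutoff (e i)).mul (continuous_const (y := x i))
  · refine LipschitzWith.of_dist_le_mul fun x y => ?_
    have hsub : l2Truncate e x s - l2Truncate e y s = l2Truncate e (x - y) s := l2_ext fun i => by
      simp only [lp.coeFn_sub, Pi.sub_apply, l2Truncate_apply, mul_sub]
    rw [NNReal.coe_one, one_mul, dist_eq_norm, dist_eq_norm, hsub]
    exact norm_l2Truncate_le e (x - y) s

lemma l2Truncate_mem_l2fin {e : ι → ℕ} {x : ℓ²(ι, ℝ)} (h : ∀ N, {i | x i ≠ 0 ∧ e i < N}.Finite)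
    {s : ℝ} (hs : 0 < s) : l2Truncate e x s ∈ l2fin ι := by
  obtain ⟨N, hN⟩ := exists_forall_le_two_pow_mul hs 2
  refine (h N).subset fun i hi => ⟨fun hxi => hi ?_, not_le.1 fun hNi => hi ?_⟩
  · rw [l2Truncate_apply, hxi, mul_zero]
  · rw [l2Truncate_apply, cutoff_eq_zero (hN _ hNi), zero_mul]

lemma exists_forall_finite_support_lt {Δ : Set ℓ²(ι, ℝ)} (hΔ : TopologicalSpace.IsSeparable Δ) :
    ∃ e : ι → ℕ, ∀ x ∈ Δ, ∀ N, {i | x i ≠ 0 ∧ e i < N}.Finite := by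
  obtain ⟨s, hs, hsΔ⟩ := hΔ
  have hcount : (⋃ x ∈ s, {i | x i ≠ 0}).Countable := hs.biUnion fun x _ =>
    (l2_summable_norm_sq x).countable_support.mono fun i hi => by simpa using hi
  obtain ⟨e, he⟩ := countable_iff_exists_injOn.1 hcount
  refine ⟨e, fun x hx N => ?_⟩
  have hsupp : {i | x i ≠ 0} ⊆ ⋃ x ∈ s, {i | x i ≠ 0} := fun i hi => by
    obtain ⟨y, hy, hys⟩ := mem_closure_iff.1 (hsΔ hx) {y | y i ≠ 0}
      (isOpen_ne_fun (l2_continuous_apply i) continuous_const) hi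
    exact mem_iUnion₂.2 ⟨y, hys, hy⟩
  refine Finite.of_finite_image (f := e) ((finite_lt_nat N).subset ?_)
    (he.mono fun i hi => hsupp hi.1)
  rintro _ ⟨i, hi, rfl⟩
  exact hi.2

end Truncate

section CubeRecord

/-- The deformation of the point `q` of the Hilbert cube which replaces its late coordinates by
those of `a`, each coordinate of `a` being used infinitely often. -/
def cubeRecord (a q : HilbertCube) (s : ℝ) : HilbertCube := fun m =>
  ⟨(1 - cutoff m s) • (a m.unpair.1 : ℝ) + cutoff m s • (q m : ℝ),
    convex_Icc 0 1 (a _).2 (q m).2 (sub_nonneg.2 (cutoff_le_one m s)) (cutoff_nonneg m s)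
      (sub_add_cancel _ _)⟩

lemma continuous_cubeRecord :
    Continuous fun t : HilbertCube × HilbertCube × ℝ => cubeRecord t.1 t.2.1 t.2.2 := by
  refine continuous_pi fun m => Continuous.subtype_mk ?_ _
  have hcut : Continuous fun t : HilbertCube × HilbertCube × ℝ => cutoff m t.2.2 :=
    (continuous_cutoff m).comp (by fun_prop)
  fun_prop

lemma cubeRecord_zero (a q : HilbertCube) : cubeRecord a q 0 = q := by
  ext m
  simp [cubeRecord, cutoff_eq_one (k := m) (s := 0) (by norm_num)]

lemma eq_of_cubeRecord_eq {a a' q q' : HilbertCube} {s s' : ℝ} (hs : 0 < s) (hs' : 0 < s')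
    (h : cubeRecord a q s = cubeRecord a' q' s') : a = a' := funext fun n => Subtype.ext <| by
  obtain ⟨N, hN⟩ := exists_forall_le_two_pow_mul hs 2
  obtain ⟨N', hN'⟩ := exists_forall_le_two_pow_mul hs' 2
  have hm : max N N' ≤ Nat.pair n (max N N') := Nat.right_le_pair _ _
  simpa [cubeRecord, cutoff_eq_zero (hN _ ((le_max_left _ _).trans hm)),
    cutoff_eq_zero (hN' _ ((le_max_right _ _).trans hm))] using
    congrArg Subtype.val (congrFun h (Nat.pair n (max N N')))

end CubeRecord

section ModelPush

variable {ι : Type*} {e : ι → ℕ} {c : ℕ → ι} {hc : c.Injective}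

/-- The deformation of `𝕀^ω × ℓ₂(ι)` into `𝕀^ω × ℓ₂ᶠ(ι)` which truncates the second coordinate,
marks it along the coordinates `c j`, and records the point `a` in the first coordinate. -/
def modelPush (e : ι → ℕ) (hc : c.Injective) (a : HilbertCube) (p : HilbertCube × ℓ²(ι, ℝ))
    (s : ℝ) : HilbertCube × ℓ²(ι, ℝ) :=
  (cubeRecord a p.1 s, l2Truncate e p.2 s + l2Extend c hc (cutoffMark s))

lemma continuous_modelPush : Continuous fun t : HilbertCube × (HilbertCube × ℓ²(ι, ℝ)) × ℝ =>
    modelPush e hc t.1 t.2.1 t.2.2 :=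
  (continuous_cubeRecord.comp (f := fun t : HilbertCube × (HilbertCube × ℓ²(ι, ℝ)) × ℝ =>
      (t.1, t.2.1.1, t.2.2)) (by fun_prop)).prodMk <|
    ((continuous_l2Truncate e).comp (f := fun t : HilbertCube × (HilbertCube × ℓ²(ι, ℝ)) × ℝ =>
      (t.2.1.2, t.2.2)) (by fun_prop)).add <|
    ((isometry_l2Extend hc).continuous.comp continuous_cutoffMark).comp
      (continuous_snd.comp continuous_snd)

lemma modelPush_zero (a : HilbertCube) (p : HilbertCube × ℓ²(ι, ℝ)) :
    modelPush e hc a p 0 = p := by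
  have hmark : l2Extend c hc (cutoffMark 0) = 0 := by
    rw [← norm_eq_zero, norm_l2Extend, cutoffMark_zero, norm_zero]
  rw [modelPush, cubeRecord_zero, l2Truncate_zero_right, hmark, add_zero]

lemma modelPush_mem {p : HilbertCube × ℓ²(ι, ℝ)} (h : ∀ N, {i | p.2 i ≠ 0 ∧ e i < N}.Finite)
    (a : HilbertCube) {s : ℝ} (hs : 0 < s) : modelPush e hc a p s ∈ univ ×ˢ l2fin ι :=
  ⟨mem_univ _, add_mem_l2fin (l2Truncate_mem_l2fin h hs)
    (l2Extend_mem_l2fin hc (cutoffMark_mem_l2fin hs))⟩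

lemma modelPush_ne {p p' : HilbertCube × ℓ²(ι, ℝ)} (h : ∀ j, ‖p.2 (c j)‖ ≤ 1 / 4 * (1 / 2) ^ j)
    (h' : ∀ j, ‖p'.2 (c j)‖ ≤ 1 / 4 * (1 / 2) ^ j) (a : HilbertCube) {s : ℝ} (hs : 0 < s)
    (hs₁ : s ≤ 1) : modelPush e hc a p s ≠ p' := fun heq => by
  obtain ⟨j, hj⟩ := exists_cutoffMark_apply_eq hs hs₁
  have hcoord : cutoff (e (c j)) s * p.2 (c j) + (1 / 2) ^ j = p'.2 (c j) := by
    rw [← heq, ← hj]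
    simp [modelPush]
  have htrunc := abs_le.1 ((norm_cutoff_mul_apply_le e p.2 s (c j)).trans (h j))
  have hmark := (abs_le.1 (h' j)).2
  have : (0 : ℝ) < (1 / 2) ^ j := by positivity
  linarith [htrunc.1]

lemma injective_modelPush {D : Type*} {f : D → HilbertCube} (hf : f.Injective)
    {p : D → HilbertCube × ℓ²(ι, ℝ)} (hp : p.Injective)
    (hpc : ∀ d j, ‖(p d).2 (c j)‖ ≤ 1 / 4 * (1 / 2) ^ j) {σ : D → ℝ} (hσ : ∀ d, σ d ∈ Icc 0 1) :
    Function.Injective fun d => modelPush e hc (f d) (p d) (σ d) := by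
  intro d d' (h : modelPush e hc (f d) (p d) (σ d) = modelPush e hc (f d') (p d') (σ d'))
  rcases (hσ d).1.eq_or_lt with hd | hd <;> rcases (hσ d').1.eq_or_lt with hd' | hd'
  · rw [← hd, ← hd', modelPush_zero, modelPush_zero] at h
    exact hp h
  · rw [← hd, modelPush_zero] at h
    exact absurd h.symm (modelPush_ne (hpc d') (hpc d) (f d') hd' (hσ d').2)
  · rw [← hd', modelPush_zero] at h
    exact absurd h (modelPush_ne (hpc d) (hpc d') (f d) hd (hσ d).2)
  · exact hf (eq_of_cubeRecord_eq hd hd' (congrArg Prod.fst h))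

end ModelPush

section CoverAbsorbsCompacta

/-- The set `Y` absorbs compact subsets of `X`, with closeness measured by open covers. -/
def CoverAbsorbsCompacta {X : Type*} [TopologicalSpace X] (Y : Set X) : Prop :=
  ∀ K : Set X, IsCompact K → ∀ B : Set X, IsCompact B → B ⊆ K ∩ Y →
    ∀ 𝒰 : Set (Set X), IsOpenCover 𝒰 →
      ∃ h : K → X, IsEmbedding h ∧ range h ⊆ Y ∧
        (∀ k : K, (k : X) ∈ B → h k = k) ∧ ∀ k : K, ∃ U ∈ 𝒰, h k ∈ U ∧ (k : X) ∈ U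

lemma exists_forall_near_of_isOpenCover {D X : Type*} [TopologicalSpace D] [CompactSpace D]
    [TopologicalSpace X] {𝒰 : Set (Set X)} (h𝒰 : IsOpenCover 𝒰) {P : D × ℝ → X}
    (hP : Continuous P) :
    ∃ τ > 0, τ ≤ 1 ∧ ∀ s ∈ Icc 0 τ, ∀ d, ∃ U ∈ 𝒰, P (d, s) ∈ U ∧ P (d, 0) ∈ U := by
  have hnear : ∀ᶠ s in 𝓝 (0 : ℝ), ∀ d ∈ univ, ∃ U ∈ 𝒰, P (d, s) ∈ U ∧ P (d, 0) ∈ U := by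
    refine isCompact_univ.eventually_forall_of_forall_eventually fun d _ => ?_
    obtain ⟨U, hU, hdU⟩ := mem_sUnion.1 (h𝒰.2.ge (mem_univ (P (d, 0))))
    have hmem : ∀ {f : ℝ × D → D × ℝ}, Continuous f → f (0, d) = (d, 0) →
        ∀ᶠ q in 𝓝 ((0 : ℝ), d), P (f q) ∈ U := fun hf hfd =>
      (hP.comp hf).continuousAt.eventually_mem ((h𝒰.1 U hU).mem_nhds (by simpa [hfd] using hdU))
    filter_upwards [hmem continuous_swap rfl,
      hmem (f := fun q => (q.2, 0)) (by fun_prop) rfl] with q hq hq₀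
    exact ⟨U, hU, hq, hq₀⟩
  obtain ⟨r, hr, hrP⟩ := Metric.eventually_nhds_iff.1 hnear
  refine ⟨min 1 (r / 2), by positivity, min_le_left _ _, fun s hs d => hrP ?_ d (mem_univ d)⟩
  rw [Real.dist_0_eq_abs, abs_of_nonneg hs.1]
  linarith [hs.2.trans (min_le_right _ _)]

lemma exists_continuous_eq_zero_iff {D : Type*} [TopologicalSpace D] [CompactSpace D]
    [PerfectlyNormalSpace D] {B : Set D} (hB : IsClosed B) {τ : ℝ} (hτ : 0 < τ) :
    ∃ σ : D → ℝ, Continuous σ ∧ (∀ d, σ d ∈ Icc 0 τ) ∧ ∀ d, σ d = 0 ↔ d ∈ B := by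
  obtain ⟨f, hfB, -, -, hf⟩ := exists_continuous_one_zero_of_isCompact_of_isGδ hB.isCompact
    hB.isGδ isClosed_empty (disjoint_empty B)
  refine ⟨fun d => τ * (1 - f d), by fun_prop, fun d => ⟨?_, ?_⟩, fun d => ?_⟩
  · exact mul_nonneg hτ.le (sub_nonneg.2 (hf d).2)
  · exact mul_le_of_le_one_right hτ.le (by linarith [(hf d).1])
  · rw [hfB, mul_eq_zero_iff_left hτ.ne', sub_eq_zero, eq_comm]
    rfl

/- The compactum `K` is pushed into the model along the deformation `modelPush`, for times that
vanish exactly on `B`. -/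
theorem coverAbsorbsCompacta_univ_prod_l2fin {ι : Type*} [Infinite ι] :
    CoverAbsorbsCompacta ((univ : Set HilbertCube) ×ˢ l2fin ι) := by
  intro K hK B hB hBK 𝒰 h𝒰
  have : CompactSpace K := isCompact_iff_compactSpace.1 hK
  let := TopologicalSpace.metrizableSpaceMetric K
  obtain ⟨f, hf⟩ := Metric.PiNatEmbed.exists_embedding_to_hilbert_cube (X := K)
  have hΔ : IsCompact (Prod.snd '' K) := hK.image continuous_snd
  obtain ⟨e, he⟩ := exists_forall_finite_support_lt hΔ.isSeparable
  obtain ⟨c, hc, hcΔ⟩ := exists_injective_forall_norm_apply_le hΔ.totallyBounded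
    (ε := fun j => 1 / 4 * (1 / 2) ^ j) fun j => by positivity
  let P : K × ℝ → HilbertCube × ℓ²(ι, ℝ) := fun t => modelPush e hc (f t.1) t.1 t.2
  have hP : Continuous P :=
    continuous_modelPush.comp (f := fun t : K × ℝ => (f t.1, t.1.1, t.2)) <|
      (hf.continuous.comp continuous_fst).prodMk <|
        (continuous_subtype_val.comp continuous_fst).prodMk continuous_snd
  have hP₀ : ∀ k, P (k, 0) = k := fun k => modelPush_zero _ _
  obtain ⟨τ, hτ, hτ₁, hnear⟩ := exists_forall_near_of_isOpenCover h𝒰 hP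
  obtain ⟨σ, hσ, hστ, hσB⟩ := exists_continuous_eq_zero_iff
    (hB.isClosed.preimage (continuous_subtype_val (p := (· ∈ K)))) hτ
  have hfix : ∀ k : K, k.1 ∈ B → P (k, σ k) = k := fun k hk => by rw [(hσB k).2 hk, hP₀]
  have hinj : Function.Injective fun k => P (k, σ k) :=
    injective_modelPush hf.injective Subtype.val_injective
      (fun k j => hcΔ j _ (mem_image_of_mem _ k.2)) fun k => ⟨(hστ k).1, (hστ k).2.trans hτ₁⟩
  refine ⟨fun k => P (k, σ k), ((hP.comp (continuous_id.prodMk hσ)).isClosedEmbedding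
    hinj).isEmbedding, ?_, hfix, fun k => ?_⟩
  · rintro _ ⟨k, rfl⟩
    rcases (hστ k).1.eq_or_lt with hk | hk
    · have hkB := (hσB k).1 hk.symm
      exact mem_of_eq_of_mem (hfix k hkB) (hBK hkB).2
    · exact modelPush_mem (he _ (mem_image_of_mem _ k.2)) (f k) hk
  · obtain ⟨U, hU, hkU, hkU₀⟩ := hnear (σ k) (hστ k) k
    exact ⟨U, hU, hkU, hP₀ k ▸ hkU₀⟩

end CoverAbsorbsCompacta

/-! ### Transfer along homeomorphisms -/

section Transfer

lemma CoverAbsorbsCompacta.image {X Z : Type*} [TopologicalSpace X] [TopologicalSpace Z] {Y : Set X}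
    (h : CoverAbsorbsCompacta Y) (φ : X ≃ₜ Z) : CoverAbsorbsCompacta (φ '' Y) := by
  intro K hK B hB hBK 𝒰 h𝒰
  have h𝒰' : IsOpenCover (preimage φ '' 𝒰) := by
    refine ⟨forall_mem_image.2 fun U hU => (h𝒰.1 U hU).preimage φ.continuous, ?_⟩
    rw [sUnion_image, ← preimage_iUnion₂, ← sUnion_eq_biUnion, h𝒰.2, preimage_univ]
  have hBK' : φ ⁻¹' B ⊆ φ ⁻¹' K ∩ Y := by
    simpa only [preimage_inter, φ.preimage_image] using preimage_mono (f := φ) hBK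
  obtain ⟨f, hf, hfY, hfB, hf𝒰⟩ := h (φ ⁻¹' K) (φ.isCompact_preimage.2 hK) (φ ⁻¹' B)
    (φ.isCompact_preimage.2 hB) hBK' _ h𝒰'
  let ψ : K ≃ₜ φ ⁻¹' K := (φ.subtype fun _ => Iff.rfl).symm
  have hψ : ∀ k, φ (ψ k) = k := fun k => φ.apply_symm_apply k
  refine ⟨fun k => φ (f (ψ k)), φ.isEmbedding.comp (hf.comp ψ.isEmbedding), ?_, fun k hk => ?_,
    fun k => ?_⟩
  · rintro _ ⟨k, rfl⟩
    exact mem_image_of_mem φ (hfY (mem_range_self _))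
  · change φ (f (ψ k)) = k
    rw [hfB (ψ k) (by rwa [mem_preimage, hψ]), hψ]
  · obtain ⟨_, ⟨U, hU, rfl⟩, hfU, hkU⟩ := hf𝒰 (ψ k)
    exact ⟨U, hU, hfU, by rwa [mem_preimage, hψ] at hkU⟩

lemma CoverAbsorbsCompacta.absorbsCompacta {E : Type*} [MetricSpace E] {Y : Set E}
    (h : CoverAbsorbsCompacta Y) : AbsorbsCompacta Y := by
  intro K B hK hB hBK ε hε
  have hcover : IsOpenCover (range fun x : E => Metric.ball x (ε / 2)) :=
    ⟨forall_mem_range.2 fun _ => Metric.isOpen_ball, eq_univ_of_forall fun x =>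
      ⟨_, mem_range_self x, Metric.mem_ball_self (half_pos hε)⟩⟩
  obtain ⟨f, hf, hfY, hfB, hfε⟩ := h K hK B hB hBK _ hcover
  refine ⟨f, hf.continuous, hf.injective, fun k => hfY (mem_range_self k), hfB, fun k => ?_⟩
  obtain ⟨_, ⟨x, rfl⟩, hfx, hkx⟩ := hfε k
  linarith [dist_triangle_right (f k) k x, Metric.mem_ball.1 hfx, Metric.mem_ball.1 hkx]

theorem exists_homeomorph_image_eq_of_coverAbsorbsCompacta {X₁ X₂ ι : Type*} [TopologicalSpace X₁]
    [TopologicalSpace X₂] [Infinite ι] {Y₁ : Set X₁} {Y₂ : Set X₂} (φ₁ : X₁ ≃ₜ ℓ²(ι, ℝ))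
    (φ₂ : X₂ ≃ₜ ℓ²(ι, ℝ)) (hσ₁ : IsSigmaLocallyCompact Y₁) (hσ₂ : IsSigmaLocallyCompact Y₂)
    (hY₁ : CoverAbsorbsCompacta Y₁) (hY₂ : CoverAbsorbsCompacta Y₂) :
    ∃ h : X₁ ≃ₜ X₂, h '' Y₁ = Y₂ := by
  obtain ⟨F₁, hYF₁, hF₁⟩ := hσ₁.image φ₁
  obtain ⟨F₂, hYF₂, hF₂⟩ := hσ₂.image φ₂
  obtain ⟨A₁, hA₁, hYA₁⟩ := exists_isDiscreteUnionOfCompacta_of_eq_iUnion hYF₁ hF₁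
  obtain ⟨A₂, hA₂, hYA₂⟩ := exists_isDiscreteUnionOfCompacta_of_eq_iUnion hYF₂ hF₂
  obtain ⟨G, hG⟩ := exists_homeomorph_image_eq_of_absorbsCompacta
    (hYA₁ ▸ (hY₁.image φ₁).absorbsCompacta) (hYA₂ ▸ (hY₂.image φ₂).absorbsCompacta) hA₁ hA₂
  rw [← hYA₁, ← hYA₂] at hG
  refine ⟨(φ₁.trans G).trans φ₂.symm, ?_⟩
  change φ₂.symm ∘ G ∘ φ₁ '' Y₁ = Y₂
  rw [image_comp, image_comp, hG, ← image_comp, φ₂.symm_comp_self, image_id]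

end Transfer

end West

open West

/-- (West) A pair `(X, Y)` with `Y ⊆ X` is homeomorphic to the pair
`(𝕀^ω × ℓ₂(κ), 𝕀^ω × ℓ₂ᶠ(κ))` for an infinite cardinal `κ` if and only if
(1) `X` is homeomorphic to `ℓ₂(κ)`, (2) `Y` is a countable union of locally
compact spaces, and (3) `Y` absorbs compact subsets of `X`. -/
theorem pair_homeomorph_hilbertCube_prod_l2_l2fin_iff_west
    {X : Type u} [TopologicalSpace X] (Y : Set X)
    (κ : Cardinal.{u}) (hκ : Cardinal.aleph0 ≤ κ) :
    (∃ h : X ≃ₜ HilbertCube × l2Space κ.out,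
        (fun x => h x) '' Y = (Set.univ : Set HilbertCube) ×ˢ l2fin κ.out) ↔
      (Nonempty (X ≃ₜ l2Space κ.out) ∧
        (∃ F : ℕ → Set X, Y = ⋃ n, F n ∧ ∀ n, LocallyCompactSpace ↥(F n)) ∧
        (∀ K : Set X, IsCompact K → ∀ B : Set X, IsCompact B → B ⊆ K ∩ Y →
          ∀ 𝒰 : Set (Set X), IsOpenCover 𝒰 →
            ∃ h : ↥K → X, Topology.IsEmbedding h ∧ Set.range h ⊆ Y ∧
              (∀ k : ↥K, (k : X) ∈ B → h k = (k : X)) ∧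
              (∀ k : ↥K, ∃ U ∈ 𝒰, h k ∈ U ∧ (k : X) ∈ U))) := by
  have : Infinite κ.out := Cardinal.infinite_iff.2 (by rwa [Cardinal.mk_out])
  obtain ⟨φ⟩ := nonempty_hilbertCube_prod_l2_homeomorph κ.out
  have hσ : IsSigmaLocallyCompact ((univ : Set HilbertCube) ×ˢ l2fin κ.out) :=
    isSigmaLocallyCompact_l2fin.univ_prod
  have hA : CoverAbsorbsCompacta ((univ : Set HilbertCube) ×ˢ l2fin κ.out) :=
    coverAbsorbsCompacta_univ_prod_l2fin
  constructor
  · rintro ⟨h, hY⟩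
    have hYmodel : h.symm '' (univ ×ˢ l2fin κ.out) = Y := by rw [← hY]; exact h.symm_image_image Y
    exact ⟨⟨h.trans φ⟩, hYmodel ▸ hσ.image h.symm, hYmodel ▸ hA.image h.symm⟩
  · rintro ⟨⟨ψ⟩, hσY, hAY⟩
    exact exists_homeomorph_image_eq_of_coverAbsorbsCompacta ψ φ hσY hσ hAY hA
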